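/- Assume ε ∉ (1/2)ℤ. Define the N×N matrix W^{ε,∘} by W^{ε,∘}_{ij} = V₁(s_{i+1+ε}, s_{j+1}) − V₁(s_{i+ε}, s_{j+1}) − V₁(s_{i+1+ε}, s_j) + V₁(s_{i+ε}, s_j) + ∫_{s_{i+ε}}^{s_{i+1+ε}} ∫_{s_j}^{s_{j+1}} V₂(s,t) dt ds for i,j = 0,…,N−1 (the non-conforming Petrov–Galerkin matrix, in which the weakly singular part is integrated exactly). Then there exist h₀ > 0 and β > 0, depending only on V₁, V₂ and ε, such that for every positive integer N with h = 1/N ≤ h₀ and every φ ∈ ℂ^N, |W^{ε,∘} φ|₂ ≥ β h |φ|₂ in the Euclidean norm. -/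

import Mathlib

/-!
The proof is a compactness argument on the Fourier side.

Writing `log (sin²) = log (4 sin²) - log 4` and absorbing constants, the kernels take the form `gker`,
`A(s,t) Lf(s-t) + K(s,t)`, where `Lf x = log (4 sin² (π x))` has Fourier coefficients
`ell n = -1/|n|` for `n ≠ 0` (`integral_Lf_ee`). Expanding `A` and `K` in double Fourier series and
transforming the Petrov–Galerkin system on the grid gives (`discrete_hasSum`)
`b k = α D_N(k) a k + ∑_{p,q} wN k (p,q) a (k-p-q)`, where `a`, `b` are the grid coefficients of the
vector and of its image, and `D_N(k) = dN(k) dN(-k) gL(k)` involves the grid coefficients `gL` of `Lf`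
on the shifted grid. The constancy of `A₁` on the diagonal is what allows `α D_N(k)` to be split off,
leaving only differences of `gL` in `wN`.

The Abel-type formula `Lf_integral` and geometric sums give closed integral expressions for `gL`
(`gL_pos`). They yield `|D_N(k)| ≥ c |k|` for `2|k| ≤ N` as long as `cos (π ε) ≠ 0` (`D_lower`), and
`|gL(m+q) - gL(m)| ≲ (1+|q|)^5 / (1 + dist(m, Nℤ))²` as long as `sin (2 π ε) ≠ 0` (`gL_diff`). Both
conditions follow from `ε ∉ ½ℤ`. The second estimate makes `wN` bounded by a rapidly decaying
majorant, uniformly in `N` and `k` (`exists_majorant`).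

If stability failed, there would be normalized vectors with residuals tending to zero. Their grid
coefficients satisfy `|a k| ≤ C/(1+|k|)` in the window `2|k| ≤ N`, so by dominated convergence a
subsequence converges to a nonzero `a` solving the limiting equation (`exists_limit`). That equation
states `W (∑ a k e_k) = 0` and is elliptic of order one, so `a` decays rapidly (`bootstrap`) and
`∑ a k e_k` is a nonzero smooth periodic function killed by `W` (`Wop_gker_eq_zero`), contradicting
injectivity.
-/

noncomputable section

/-- Smooth kernel data, 1-periodic in each variable. -/
def SPK (A : ℝ → ℝ → ℂ) : Prop :=
  ContDiff ℝ (⊤ : ℕ∞) (fun p : ℝ × ℝ => A p.1 p.2) ∧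
    (∀ s t, A (s + 1) t = A s t) ∧ (∀ s t, A s (t + 1) = A s t)

/-- Logarithmic kernel `V(s,t) = (i/(2π)) A(s,t) log(sin²(π(s−t))) + K(s,t)`. -/
def logKer (A K : ℝ → ℝ → ℂ) (s t : ℝ) : ℂ :=
  Complex.I / (2 * Real.pi) * A s t * (Real.log (Real.sin (Real.pi * (s - t)) ^ 2) : ℂ) + K s t

/-- Grid point `s_{j+ε} = (j − 1/2 + ε)h`. -/
def sg (h ε : ℝ) (j : ℤ) : ℝ := ((j : ℝ) - 1 / 2 + ε) * h

/-- Grid point `t_{j+ε} = (j + ε)h`. -/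
def tg (h ε : ℝ) (j : ℤ) : ℝ := ((j : ℝ) + ε) * h

/-- Integral operator with kernel `V`. -/
def Vop (V : ℝ → ℝ → ℂ) (φ : ℝ → ℂ) (s : ℝ) : ℂ := ∫ t in (0:ℝ)..1, V s t * φ t

/-- Hypersingular operator `W = −D V₁ D + V₂`. -/
def Wop (V1 V2 : ℝ → ℝ → ℂ) (φ : ℝ → ℂ) (s : ℝ) : ℂ :=
  -deriv (Vop V1 (deriv φ)) s + Vop V2 φ s

/-- Nyström matrix entries `W^ε_{ij}`. -/
def Wmat (V1 V2 : ℝ → ℝ → ℂ) (h ε : ℝ) (i j : ℤ) : ℂ :=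
  V1 (sg h ε (i + 1)) (sg h 0 (j + 1)) - V1 (sg h ε i) (sg h 0 (j + 1))
    - V1 (sg h ε (i + 1)) (sg h 0 j) + V1 (sg h ε i) (sg h 0 j)
    + (h : ℂ) ^ 2 * V2 (tg h ε i) (tg h 0 j)

/-- Fourier coefficient of a 1-periodic function. -/
def fc (u : ℝ → ℂ) (m : ℤ) : ℂ :=
  ∫ t in (0:ℝ)..1, u t * Complex.exp (-(2 * Real.pi * Complex.I * (m : ℂ) * (t : ℂ)))

/-- Periodic Sobolev norm of order `r`. -/
def sobNorm (r : ℝ) (u : ℝ → ℂ) : ℝ :=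
  Real.sqrt (‖fc u 0‖ ^ 2 +
    ∑' m : ℤ, if m = 0 then 0 else |(m : ℝ)| ^ (2 * r) * ‖fc u m‖ ^ 2)

/-- 1-periodic step function on the ε-shifted grid with coefficients `v`. -/
def stepf (N : ℕ) (ε : ℝ) (v : ZMod N → ℂ) (s : ℝ) : ℂ :=
  v ((⌊s * N + 1 / 2 - ε⌋ : ℤ) : ZMod N)

/-- Midpoint quadrature error matrix entries `E^ε_{ij}`. -/
def Emat (V2 : ℝ → ℝ → ℂ) (h ε : ℝ) (i j : ℤ) : ℂ :=
  (∫ s in (sg h ε i)..(sg h ε (i + 1)), ∫ t in (sg h 0 j)..(sg h 0 (j + 1)), V2 s t)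
    - (h : ℂ) ^ 2 * V2 (tg h ε i) (tg h 0 j)

/-- Spectral (ℓ²-operator) norm of a complex `N×N` matrix. -/
def specNorm {N : ℕ} (M : Matrix (Fin N) (Fin N) ℂ) : ℝ :=
  ‖LinearMap.toContinuousLinearMap (Matrix.toEuclideanLin M)‖

/-- The function `C̄₁(t) = −(1/(2πi)) log(4 sin²(πt))`. -/
def Cbar1 (t : ℝ) : ℂ :=
  -(1 / (2 * Real.pi * Complex.I)) * (Real.log (4 * Real.sin (Real.pi * t) ^ 2) : ℂ)

end

/-- The Petrov–Galerkin matrix `W^{ε,∘}`, with the weakly singular part integrated exactly. -/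
noncomputable def WmatPG (V1 V2 : ℝ → ℝ → ℂ) (h ε : ℝ) (i j : ℤ) : ℂ :=
  V1 (sg h ε (i + 1)) (sg h 0 (j + 1)) - V1 (sg h ε i) (sg h 0 (j + 1))
    - V1 (sg h ε (i + 1)) (sg h 0 j) + V1 (sg h ε i) (sg h 0 j)
    + ∫ s in (sg h ε i)..(sg h ε (i + 1)), ∫ t in (sg h 0 j)..(sg h 0 (j + 1)), V2 s t

set_option linter.all false

section Proof
open Complex MeasureTheory Filter Topology

/-! ### Characters -/

/-- The character `x ↦ exp (2π i n x)`. -/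
noncomputable def ee (n : ℤ) (x : ℝ) : ℂ := Complex.exp (2 * Real.pi * Complex.I * n * x)

lemma ee_zero_left (x : ℝ) : ee 0 x = 1 := by simp [ee]

lemma ee_zero_right (n : ℤ) : ee n 0 = 1 := by simp [ee]

lemma ee_add_left (m n : ℤ) (x : ℝ) : ee (m + n) x = ee m x * ee n x := by
  simp only [ee, ← Complex.exp_add]; congr 1; push_cast; ring

lemma ee_add_right (n : ℤ) (x y : ℝ) : ee n (x + y) = ee n x * ee n y := by
  simp only [ee, ← Complex.exp_add]; congr 1; push_cast; ring

lemma ee_neg_right (n : ℤ) (x : ℝ) : ee n (-x) = ee (-n) x := by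
  simp only [ee]; congr 1; push_cast; ring

lemma norm_ee (n : ℤ) (x : ℝ) : ‖ee n x‖ = 1 := by
  have : (2 * Real.pi * Complex.I * n * x : ℂ) = ((2 * Real.pi * n * x : ℝ) : ℂ) * Complex.I := by
    push_cast; ring
  rw [ee, this, Complex.norm_exp_ofReal_mul_I]

lemma ee_ne_zero (n : ℤ) (x : ℝ) : ee n x ≠ 0 := Complex.exp_ne_zero _

lemma ee_neg_left (n : ℤ) (x : ℝ) : ee (-n) x = (ee n x)⁻¹ := by
  simp only [ee, ← Complex.exp_neg]; congr 1; push_cast; ring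

lemma ee_sub_left (m n : ℤ) (x : ℝ) : ee (m - n) x = ee m x / ee n x := by
  rw [sub_eq_add_neg, ee_add_left, ee_neg_left, div_eq_mul_inv]

lemma ee_mul_neg (n : ℤ) (x : ℝ) : ee n x * ee (-n) x = 1 := by
  rw [ee_neg_left, mul_inv_cancel₀ (ee_ne_zero _ _)]

lemma ee_conj (n : ℤ) (x : ℝ) : (starRingEnd ℂ) (ee n x) = ee (-n) x := by
  rw [ee_neg_left, Complex.inv_eq_conj (norm_ee n x)]

lemma ee_int (n k : ℤ) : ee n (k : ℝ) = 1 := by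
  rw [ee, Complex.exp_eq_one_iff]
  exact ⟨n * k, by push_cast; ring⟩

lemma ee_add_one (n : ℤ) (x : ℝ) : ee n (x + 1) = ee n x := by
  rw [ee_add_right]
  have := ee_int n 1
  simp at this
  rw [this, mul_one]

lemma ee_periodic (n : ℤ) : Function.Periodic (ee n) 1 := ee_add_one n

/-- The index and the argument of a character can trade integer factors. -/
lemma ee_mul_comm (n : ℤ) (k : ℤ) (x : ℝ) : ee n (k * x) = ee (n * k) x := by
  simp only [ee]; congr 1; push_cast; ring

lemma ee_eq_pow (k : ℕ) (x : ℝ) : ee k x = ee 1 x ^ k := by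
  simp only [ee, ← Complex.exp_nat_mul]; congr 1; push_cast; ring

lemma ee_eq_zpow (k : ℤ) (x : ℝ) : ee k x = ee 1 x ^ k := by
  simp only [ee, ← Complex.exp_int_mul]; congr 1; push_cast; ring

@[fun_prop]
lemma continuous_ee (n : ℤ) : Continuous (ee n) := by
  unfold ee; fun_prop

lemma hasDerivAt_ee (n : ℤ) (x : ℝ) :
    HasDerivAt (ee n) (2 * Real.pi * Complex.I * n * ee n x) x := by
  have h1 : HasDerivAt (fun x : ℝ => (2 * Real.pi * Complex.I * n * (x : ℂ)))
      (2 * Real.pi * Complex.I * n * 1) x := (Complex.ofRealCLM.hasDerivAt (x := x)).const_mul _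
  have := h1.cexp
  rw [mul_one, mul_comm (Complex.exp _)] at this
  exact this

lemma norm_ee_sub_one_le (n : ℤ) (x : ℝ) : ‖ee n x - 1‖ ≤ 2 * Real.pi * |(n : ℝ)| * |x| := by
  have h := Real.norm_exp_I_mul_ofReal_sub_one_le (x := 2 * Real.pi * n * x)
  have e : (Complex.I * ((2 * Real.pi * n * x : ℝ) : ℂ)) = 2 * Real.pi * Complex.I * n * x := by
    push_cast; ring
  rw [e] at h
  refine h.trans (le_of_eq ?_)
  rw [Real.norm_eq_abs, abs_mul, abs_mul, abs_of_pos (by positivity : 0 < 2 * Real.pi)]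

lemma integral_ee (n : ℤ) : ∫ x in (0:ℝ)..1, ee n x = if n = 0 then 1 else 0 := by
  split_ifs with h
  · subst h; simp [ee_zero_left]
  · have hc : (2 * Real.pi * Complex.I * n : ℂ) ≠ 0 := by
      simp [Real.pi_ne_zero, h]
    have h1 : ∀ x ∈ Set.uIcc (0:ℝ) 1, HasDerivAt (fun x => ee n x / (2 * Real.pi * Complex.I * n))
        (ee n x) x := by
      intro x _
      have := (hasDerivAt_ee n x).div_const (2 * Real.pi * Complex.I * n)
      rwa [mul_div_cancel_left₀ _ hc] at this
    rw [intervalIntegral.integral_eq_sub_of_hasDerivAt h1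
      ((continuous_ee n).intervalIntegrable _ _)]
    have := ee_int n 1
    simp at this
    rw [this, ee_zero_right, sub_self]

lemma fc_eq (u : ℝ → ℂ) (m : ℤ) : fc u m = ∫ t in (0:ℝ)..1, u t * ee (-m) t := by
  unfold fc ee
  congr 1; ext t; congr 2; push_cast; ring

/-! ### Double Fourier series of smooth kernels -/

/-- A continuous periodic function with summable Fourier coefficients is the sum of its Fourier series. -/
lemma hasSum_fc {f : ℝ → ℂ} (hf : Continuous f) (hp : Function.Periodic f 1)
    (hs : Summable (fc f)) (x : ℝ) : HasSum (fun m : ℤ => fc f m * ee m x) (f x) := by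
  have : Fact (0 < (1:ℝ)) := ⟨one_pos⟩
  let F : C(AddCircle (1:ℝ), ℂ) := ⟨hp.lift, continuous_coinduced_dom.mpr hf⟩
  have hF : ∀ y : ℝ, F (y : AddCircle (1:ℝ)) = f y := fun y => hp.lift_coe y
  have hcoef : ∀ m, fourierCoeff F m = fc f m := by
    intro m
    rw [fourierCoeff_eq_intervalIntegral _ _ 0, fc_eq]
    simp only [zero_add, div_one, one_smul]
    refine intervalIntegral.integral_congr (fun t _ => ?_)
    simp only [hF, fourier_coe_apply, smul_eq_mul, ee]
    rw [mul_comm]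
    congr 2
    simp
  have h := has_pointwise_sum_fourier_series_of_summable (f := F)
    (by simpa only [funext hcoef] using hs) (x : AddCircle (1:ℝ))
  rw [hF] at h
  refine h.congr_fun ?_ |> id
  intro m
  simp only [hcoef, fourier_coe_apply, smul_eq_mul, ee]
  congr 2
  simp

/-- Integration by parts against a character. -/
lemma integral_deriv_mul_ee {f f' : ℝ → ℂ} (hf : ∀ x, HasDerivAt f (f' x) x)
    (hf' : Continuous f') (hp : Function.Periodic f 1) (q : ℤ) :
    ∫ t in (0:ℝ)..1, f' t * ee (-q) t
      = 2 * Real.pi * Complex.I * q * ∫ t in (0:ℝ)..1, f t * ee (-q) t := by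
  have hfc : Continuous f := continuous_iff_continuousAt.mpr fun x => (hf x).continuousAt
  have h1 : ∀ x ∈ Set.uIcc (0:ℝ) 1, HasDerivAt (fun x => f x * ee (-q) x)
      (f' x * ee (-q) x - 2 * Real.pi * Complex.I * q * (f x * ee (-q) x)) x := by
    intro x _
    refine ((hf x).mul (hasDerivAt_ee (-q) x)).congr_deriv ?_
    push_cast; ring
  have h2 := intervalIntegral.integral_eq_sub_of_hasDerivAt h1
    (Continuous.intervalIntegrable (by fun_prop) _ _)
  have e1 : f 1 * ee (-q) 1 - f 0 * ee (-q) 0 = 0 := by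
    have a := hp 0
    have b := ee_add_one (-q) 0
    rw [zero_add] at a b
    rw [a, b, sub_self]
  rw [e1, intervalIntegral.integral_sub (Continuous.intervalIntegrable (by fun_prop) _ _)
    (Continuous.intervalIntegrable (by fun_prop) _ _), intervalIntegral.integral_const_mul,
    sub_eq_zero] at h2
  exact h2

/-- Partial derivative in the first variable. -/
noncomputable def D1 (A : ℝ → ℝ → ℂ) (s t : ℝ) : ℂ :=
  fderiv ℝ (fun p : ℝ × ℝ => A p.1 p.2) (s, t) (1, 0)

/-- Partial derivative in the second variable. -/
noncomputable def D2 (A : ℝ → ℝ → ℂ) (s t : ℝ) : ℂ :=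
  fderiv ℝ (fun p : ℝ × ℝ => A p.1 p.2) (s, t) (0, 1)

lemma SPK.hasD1 {A : ℝ → ℝ → ℂ} (hA : SPK A) (s t : ℝ) :
    HasDerivAt (fun s => A s t) (D1 A s t) s := by
  have h := (hA.1.differentiable (by simp) (s, t)).hasFDerivAt
  have h2 : HasDerivAt (fun s : ℝ => (s, t)) ((1 : ℝ), (0 : ℝ)) s :=
    (hasDerivAt_id s).prodMk (hasDerivAt_const s t)
  exact h.comp_hasDerivAt s h2

lemma SPK.hasD2 {A : ℝ → ℝ → ℂ} (hA : SPK A) (s t : ℝ) :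
    HasDerivAt (fun t => A s t) (D2 A s t) t := by
  have h := (hA.1.differentiable (by simp) (s, t)).hasFDerivAt
  have h2 : HasDerivAt (fun t : ℝ => (s, t)) ((0 : ℝ), (1 : ℝ)) t :=
    (hasDerivAt_const t s).prodMk (hasDerivAt_id t)
  exact h.comp_hasDerivAt t h2

lemma SPK.D1 {A : ℝ → ℝ → ℂ} (hA : SPK A) : SPK (D1 A) := by
  refine ⟨?_, fun s t => ?_, fun s t => ?_⟩
  · have := hA.1.fderiv_right (m := (⊤ : ℕ∞)) (by simp)
    exact this.clm_apply contDiff_const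
  · have h1 := (hA.hasD1 (s + 1) t).comp_add_const s 1
    simp only [hA.2.1] at h1
    exact h1.unique (hA.hasD1 s t)
  · have h1 := hA.hasD1 s (t + 1)
    simp only [hA.2.2] at h1
    exact h1.unique (hA.hasD1 s t)

lemma SPK.D2 {A : ℝ → ℝ → ℂ} (hA : SPK A) : SPK (D2 A) := by
  refine ⟨?_, fun s t => ?_, fun s t => ?_⟩
  · have := hA.1.fderiv_right (m := (⊤ : ℕ∞)) (by simp)
    exact this.clm_apply contDiff_const
  · have h1 := hA.hasD2 (s + 1) t
    simp only [hA.2.1] at h1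
    exact h1.unique (hA.hasD2 s t)
  · have h1 := (hA.hasD2 s (t + 1)).comp_add_const t 1
    simp only [hA.2.2] at h1
    exact h1.unique (hA.hasD2 s t)

lemma SPK.cont {A : ℝ → ℝ → ℂ} (hA : SPK A) : Continuous (fun p : ℝ × ℝ => A p.1 p.2) :=
  hA.1.continuous

/-- Double Fourier coefficient of a doubly periodic function. -/
noncomputable def fc2 (A : ℝ → ℝ → ℂ) (p q : ℤ) : ℂ :=
  ∫ s in (0:ℝ)..1, (∫ t in (0:ℝ)..1, A s t * ee (-q) t) * ee (-p) s

lemma fc2_swap {A : ℝ → ℝ → ℂ} (hA : SPK A) (p q : ℤ) :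
    fc2 A p q = ∫ t in (0:ℝ)..1, (∫ s in (0:ℝ)..1, A s t * ee (-p) s) * ee (-q) t := by
  have hc := hA.cont
  unfold fc2
  simp only [← intervalIntegral.integral_mul_const]
  rw [intervalIntegral_intervalIntegral_swap]
  · congr 1; ext t; congr 1; ext s; ring
  · have : Continuous (fun p' : ℝ × ℝ => A p'.1 p'.2 * ee (-q) p'.2 * ee (-p) p'.1) := by fun_prop
    exact (this.continuousOn.integrableOn_compact
      (isCompact_uIcc.prod isCompact_uIcc)).mono_set
      (Set.prod_mono Set.uIoc_subset_uIcc Set.uIoc_subset_uIcc)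

lemma fc2_D2 {A : ℝ → ℝ → ℂ} (hA : SPK A) (p q : ℤ) :
    fc2 (D2 A) p q = 2 * Real.pi * Complex.I * q * fc2 A p q := by
  unfold fc2
  rw [← intervalIntegral.integral_const_mul]
  congr 1; ext s
  have hc := hA.D2.cont
  rw [integral_deriv_mul_ee (hA.hasD2 s) (by fun_prop) (fun t => hA.2.2 s t)]
  ring

lemma fc2_D1 {A : ℝ → ℝ → ℂ} (hA : SPK A) (p q : ℤ) :
    fc2 (D1 A) p q = 2 * Real.pi * Complex.I * p * fc2 A p q := by
  rw [fc2_swap hA, fc2_swap hA.D1, ← intervalIntegral.integral_const_mul]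
  congr 1; ext t
  have hc := hA.D1.cont
  rw [integral_deriv_mul_ee (fun s => hA.hasD1 s t) (by fun_prop) (fun s => hA.2.1 s t)]
  ring

lemma SPK.bounded {A : ℝ → ℝ → ℂ} (hA : SPK A) : ∃ C, 0 ≤ C ∧ ∀ s t, ‖A s t‖ ≤ C := by
  have hc := hA.cont
  obtain ⟨C, hC⟩ := (isCompact_Icc (a := ((0:ℝ), (0:ℝ))) (b := (1, 1))).exists_bound_of_continuousOn
    hc.continuousOn
  have h0 : 0 ≤ C := (norm_nonneg _).trans (hC (0, 0) (by simp))
  refine ⟨C, h0, fun s t => ?_⟩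
  have e1 : A s t = A (Int.fract s) (Int.fract t) := by
    have a : Function.Periodic (fun s => A s t) 1 := fun s => hA.2.1 s t
    have b : Function.Periodic (fun t => A (Int.fract s) t) 1 := fun t => hA.2.2 _ t
    have a' := a.sub_zsmul_eq (x := s) ⌊s⌋
    have b' := b.sub_zsmul_eq (x := t) ⌊t⌋
    simp only [zsmul_eq_mul, mul_one, Int.self_sub_floor] at a' b'
    rw [← a', ← b']
  rw [e1]
  refine hC (Int.fract s, Int.fract t) ⟨⟨Int.fract_nonneg _, Int.fract_nonneg _⟩,
    ⟨(Int.fract_lt_one _).le, (Int.fract_lt_one _).le⟩⟩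

lemma norm_integral_unit_le {g : ℝ → ℂ} {C : ℝ} (h : ∀ x, ‖g x‖ ≤ C) :
    ‖∫ x in (0:ℝ)..1, g x‖ ≤ C := by
  have := intervalIntegral.norm_integral_le_of_norm_le_const (a := (0:ℝ)) (b := 1) (f := g) (C := C)
    (fun x _ => h x)
  simpa using this

lemma norm_fc2_le {A : ℝ → ℝ → ℂ} {C : ℝ} (h : ∀ s t, ‖A s t‖ ≤ C) (p q : ℤ) :
    ‖fc2 A p q‖ ≤ C := by
  refine norm_integral_unit_le fun s => ?_
  rw [norm_mul, norm_ee, mul_one]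
  refine norm_integral_unit_le fun t => ?_
  rw [norm_mul, norm_ee, mul_one]
  exact h s t

/-- Rapidly decaying double sequences. -/
def RD (c : ℤ × ℤ → ℝ) : Prop :=
  ∀ r : ℕ, ∃ C, ∀ x : ℤ × ℤ, |c x| * ((1 + |(x.1 : ℝ)|) ^ r * (1 + |(x.2 : ℝ)|) ^ r) ≤ C

lemma fc2_bound1 {A : ℝ → ℝ → ℂ} (hA : SPK A) (a : ℕ) :
    ∃ B, SPK B ∧ ∀ p q, ‖fc2 A p q‖ * |(p : ℝ)| ^ a ≤ ‖fc2 B p q‖ := by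
  induction a with
  | zero => exact ⟨A, hA, fun p q => by simp⟩
  | succ a ih =>
    obtain ⟨B, hB, h⟩ := ih
    refine ⟨_, hB.D1, fun p q => ?_⟩
    rw [fc2_D1 hB, norm_mul, pow_succ, ← mul_assoc]
    have hp : |(p : ℝ)| ≤ ‖(2 * Real.pi * Complex.I * p : ℂ)‖ := by
      simp only [norm_mul, Complex.norm_I, Complex.norm_real, Complex.norm_intCast, mul_one,
        Complex.norm_ofNat, Real.norm_eq_abs, abs_of_pos Real.pi_pos]
      nlinarith [Real.pi_gt_three, abs_nonneg (p : ℝ)]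
    calc _ ≤ ‖fc2 B p q‖ * ‖(2 * Real.pi * Complex.I * p : ℂ)‖ := by gcongr; exact h p q
      _ = _ := mul_comm _ _

lemma fc2_bound2 {A : ℝ → ℝ → ℂ} (hA : SPK A) (a : ℕ) :
    ∃ B, SPK B ∧ ∀ p q, ‖fc2 A p q‖ * |(q : ℝ)| ^ a ≤ ‖fc2 B p q‖ := by
  induction a with
  | zero => exact ⟨A, hA, fun p q => by simp⟩
  | succ a ih =>
    obtain ⟨B, hB, h⟩ := ih
    refine ⟨_, hB.D2, fun p q => ?_⟩
    rw [fc2_D2 hB, norm_mul, pow_succ, ← mul_assoc]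
    have hp : |(q : ℝ)| ≤ ‖(2 * Real.pi * Complex.I * q : ℂ)‖ := by
      simp only [norm_mul, Complex.norm_I, Complex.norm_real, Complex.norm_intCast, mul_one,
        Complex.norm_ofNat, Real.norm_eq_abs, abs_of_pos Real.pi_pos]
      nlinarith [Real.pi_gt_three, abs_nonneg (q : ℝ)]
    calc _ ≤ ‖fc2 B p q‖ * ‖(2 * Real.pi * Complex.I * q : ℂ)‖ := by gcongr; exact h p q
      _ = _ := mul_comm _ _

lemma fc2_bound {A : ℝ → ℝ → ℂ} (hA : SPK A) (a b : ℕ) :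
    ∃ C, ∀ p q, ‖fc2 A p q‖ * |(p : ℝ)| ^ a * |(q : ℝ)| ^ b ≤ C := by
  obtain ⟨B, hB, h⟩ := fc2_bound1 hA a
  obtain ⟨B', hB', h'⟩ := fc2_bound2 hB b
  obtain ⟨C, -, hC⟩ := hB'.bounded
  refine ⟨C, fun p q => ?_⟩
  calc _ ≤ ‖fc2 B p q‖ * |(q : ℝ)| ^ b := by gcongr; exact h p q
    _ ≤ _ := (h' p q).trans (norm_fc2_le hC p q)

lemma one_add_pow_le {x : ℝ} (hx : 0 ≤ x) (r : ℕ) : (1 + x) ^ r ≤ 2 ^ r * (1 + x ^ r) := by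
  rw [mul_add, mul_one]
  rcases le_total x 1 with h | h
  · calc (1 + x) ^ r ≤ 2 ^ r := by gcongr; linarith
      _ ≤ _ := by linarith [show 0 ≤ 2 ^ r * x ^ r by positivity]
  · calc (1 + x) ^ r ≤ (2 * x) ^ r := by gcongr; linarith
      _ ≤ _ := by rw [mul_pow]; linarith [show (0:ℝ) ≤ 2 ^ r by positivity]

lemma fc2_RD {A : ℝ → ℝ → ℂ} (hA : SPK A) : RD (fun x => ‖fc2 A x.1 x.2‖) := by
  intro r
  obtain ⟨C0, h0⟩ := fc2_bound hA 0 0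
  obtain ⟨C1, h1⟩ := fc2_bound hA r 0
  obtain ⟨C2, h2⟩ := fc2_bound hA 0 r
  obtain ⟨C3, h3⟩ := fc2_bound hA r r
  refine ⟨2 ^ r * 2 ^ r * (C0 + C1 + C2 + C3), fun x => ?_⟩
  rw [abs_of_nonneg (norm_nonneg _)]
  calc _ ≤ ‖fc2 A x.1 x.2‖ * ((2 ^ r * (1 + |(x.1 : ℝ)| ^ r)) * (2 ^ r * (1 + |(x.2 : ℝ)| ^ r))) := by
        gcongr <;> exact one_add_pow_le (abs_nonneg _) r
    _ = 2 ^ r * 2 ^ r * (‖fc2 A x.1 x.2‖ * |(x.1 : ℝ)| ^ 0 * |(x.2 : ℝ)| ^ 0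
        + ‖fc2 A x.1 x.2‖ * |(x.1 : ℝ)| ^ r * |(x.2 : ℝ)| ^ 0
        + ‖fc2 A x.1 x.2‖ * |(x.1 : ℝ)| ^ 0 * |(x.2 : ℝ)| ^ r
        + ‖fc2 A x.1 x.2‖ * |(x.1 : ℝ)| ^ r * |(x.2 : ℝ)| ^ r) := by ring
    _ ≤ _ := by
        gcongr
        exacts [h0 _ _, h1 _ _, h2 _ _, h3 _ _]

lemma summable_inv_sq : Summable (fun n : ℤ => ((1 + |(n : ℝ)|) ^ 2)⁻¹) := by
  have h : Summable (fun n : ℕ => ((1 + (n : ℝ)) ^ 2)⁻¹) := by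
    have := (summable_nat_add_iff 1).mpr (Real.summable_nat_pow_inv.mpr (by norm_num : 1 < 2))
    refine this.congr fun n => ?_
    push_cast; rw [add_comm]
  refine Summable.of_nat_of_neg ?_ ?_
  · simpa using h
  · simpa using h

lemma RD.summable {c : ℤ × ℤ → ℝ} (hc : RD c) (r : ℕ) :
    Summable (fun x : ℤ × ℤ => |c x| * ((1 + |(x.1 : ℝ)|) ^ r * (1 + |(x.2 : ℝ)|) ^ r)) := by
  obtain ⟨C, hC⟩ := hc (r + 2)
  have hs := (summable_inv_sq.mul_of_nonneg summable_inv_sq (fun _ => by positivity)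
    (fun _ => by positivity)).mul_left C
  refine Summable.of_nonneg_of_le (fun x => by positivity) (fun x => ?_) hs
  have h := hC x
  have p1 : 0 < (1 + |(x.1 : ℝ)|) ^ 2 := by positivity
  have p2 : 0 < (1 + |(x.2 : ℝ)|) ^ 2 := by positivity
  rw [← mul_inv, ← div_eq_mul_inv, le_div_iff₀ (by positivity)]
  calc _ = |c x| * ((1 + |(x.1 : ℝ)|) ^ (r + 2) * (1 + |(x.2 : ℝ)|) ^ (r + 2)) := by ring
    _ ≤ _ := h

lemma RD.summable0 {c : ℤ × ℤ → ℝ} (hc : RD c) : Summable (fun x : ℤ × ℤ => |c x|) := by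
  simpa using hc.summable 0

/-- A smooth doubly periodic function is the sum of its double Fourier series. -/
lemma hasSum_fc2 {A : ℝ → ℝ → ℂ} (hA : SPK A) (s t : ℝ) :
    HasSum (fun x : ℤ × ℤ => fc2 A x.1 x.2 * (ee x.1 s * ee x.2 t)) (A s t) := by
  have hc := hA.cont
  have hsum : Summable (fun x : ℤ × ℤ => ‖fc2 A x.1 x.2‖) := by
    simpa using (fc2_RD hA).summable0
  -- the partial Fourier coefficients in `t`, as functions of `s`
  have h1 : ∀ q, HasSum (fun p => fc2 A p q * ee p s) (fc (fun t => A s t) q) := by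
    intro q
    have hcont : Continuous (fun s => ∫ t in (0:ℝ)..1, A s t * ee (-q) t) := by
      apply intervalIntegral.continuous_parametric_intervalIntegral_of_continuous'
      fun_prop
    have := hasSum_fc (f := fun s => ∫ t in (0:ℝ)..1, A s t * ee (-q) t) hcont
      (fun s => by simp only [hA.2.1]) (by
        have : fc (fun s => ∫ t in (0:ℝ)..1, A s t * ee (-q) t) = fun p => fc2 A p q := by
          ext p; rw [fc_eq]; rfl
        rw [this]
        exact (hsum.comp_injective (i := fun p : ℤ => (p, q))
          (fun a b h => by simpa using h)).of_norm) s
    simp only [fc_eq] at this ⊢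
    exact this
  have hS : Summable (fun x : ℤ × ℤ => fc2 A x.1 x.2 * (ee x.1 s * ee x.2 t)) := by
    apply Summable.of_norm
    simpa only [norm_mul, norm_ee, mul_one] using hsum
  have h2 : ∀ q, HasSum (fun p => fc2 A p q * (ee p s * ee q t)) (fc (fun t => A s t) q * ee q t) := by
    intro q
    simpa only [mul_assoc] using (h1 q).mul_right (ee q t)
  have hfcs : Summable (fc (fun t => A s t)) := by
    have hh : Summable (fun x : ℤ × ℤ => fc2 A x.2 x.1 * ee x.2 s) := by
      apply Summable.of_norm
      simp only [norm_mul, norm_ee, mul_one]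
      exact hsum.prod_symm
    exact hh.prod.congr fun q => (h1 q).tsum_eq
  have h3 := hasSum_fc (f := fun t => A s t) (by fun_prop) (fun t => hA.2.2 s t) hfcs t
  have h4 : HasSum (fun x : ℤ × ℤ => fc2 A x.2 x.1 * (ee x.2 s * ee x.1 t))
      (∑' x : ℤ × ℤ, fc2 A x.1 x.2 * (ee x.1 s * ee x.2 t)) :=
    (Equiv.prodComm ℤ ℤ).hasSum_iff.mpr hS.hasSum
  rw [← (h4.prod_fiberwise h2).unique h3]
  exact hS.hasSum

/-! ### The logarithmic kernel and its Fourier coefficients -/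

/-- The kernel `log (4 sin² (π x))`; at integers, where `log 0 = 0`, its value is `log 4`. -/
noncomputable def Lf (x : ℝ) : ℝ := Real.log (Real.sin (Real.pi * x) ^ 2) + Real.log 4

lemma Lf_add_one (x : ℝ) : Lf (x + 1) = Lf x := by
  unfold Lf
  rw [mul_add, mul_one, Real.sin_add_pi, neg_sq]

lemma Lf_eq (x : ℝ) : Lf x = 2 * Real.log (Real.sin (Real.pi * x)) + Real.log 4 := by
  unfold Lf; rw [Real.log_pow]; norm_num

lemma measurable_Lf : Measurable Lf := by
  unfold Lf; fun_prop

lemma intervalIntegrable_Lf (a b : ℝ) : IntervalIntegrable Lf volume a b := by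
  have h : IntervalIntegrable (fun x => Real.log (Real.sin (Real.pi * x))) volume a b := by
    have := (intervalIntegrable_log_sin (a := Real.pi * a) (b := Real.pi * b)).comp_mul_left
      (c := Real.pi)
    simpa [Real.pi_ne_zero] using this
  have := (h.const_mul 2).add (_root_.intervalIntegrable_const (c := Real.log 4) (μ := volume))
  exact this.congr (fun x _ => by simp [Lf_eq])

lemma intervalIntegrable_Lf_ofReal (a b : ℝ) :
    IntervalIntegrable (fun x => (Lf x : ℂ)) volume a b :=
  ⟨(intervalIntegrable_Lf a b).1.ofReal, (intervalIntegrable_Lf a b).2.ofReal⟩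

lemma integral_Lf : ∫ x in (0:ℝ)..1, Lf x = 0 := by
  have h : IntervalIntegrable (fun x => Real.log (Real.sin (Real.pi * x))) volume 0 1 := by
    have := (intervalIntegrable_log_sin (a := 0) (b := Real.pi)).comp_mul_left
      (c := Real.pi)
    simpa [Real.pi_ne_zero] using this
  simp only [Lf_eq]
  rw [intervalIntegral.integral_add (h.const_mul 2) _root_.intervalIntegrable_const,
    intervalIntegral.integral_const_mul,
    intervalIntegral.integral_comp_mul_left (fun x => Real.log (Real.sin x)) Real.pi_ne_zero]
  simp only [mul_zero, mul_one, integral_log_sin_zero_pi, smul_eq_mul,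
    intervalIntegral.integral_const]
  have : Real.log 4 = 2 * Real.log 2 := by
    rw [show (4:ℝ) = 2 ^ 2 by norm_num, Real.log_pow]; norm_num
  rw [this]
  field_simp
  ring

/-- The Fourier coefficients of `Lf`. -/
noncomputable def ell (n : ℤ) : ℂ := -((|(n : ℝ)|⁻¹ : ℝ) : ℂ)

lemma ee_neg_one_sub_one (x : ℝ) :
    ee (-1) x - 1 = (Real.sin (Real.pi * x) : ℂ) * (-2 * I * Complex.exp (-(Real.pi * x * I))) := by
  have h : ee (-1) x = Complex.exp (-(Real.pi * x * I)) * Complex.exp (-(Real.pi * x * I)) := by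
    rw [ee, ← Complex.exp_add]; congr 1; push_cast; ring
  have h2 : Complex.exp (-(Real.pi * x * I)) * Complex.exp (Real.pi * x * I) = 1 := by
    rw [← Complex.exp_add]; simp
  rw [h, Complex.ofReal_sin, Complex.sin]
  push_cast
  rw [neg_mul]
  have e1 : Complex.exp (-(Real.pi * x * I)) * Complex.exp (Real.pi * x * I) = 1 := h2
  generalize Complex.exp (-(Real.pi * x * I)) = a at *
  generalize Complex.exp (Real.pi * x * I) = b at *
  linear_combination h2 + (a ^ 2 - a * b) * I_sq

lemma continuous_sin_mul_Lf : Continuous (fun x => Real.sin (Real.pi * x) * Lf x) := by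
  have h := Real.continuous_mul_log
  have : (fun x => Real.sin (Real.pi * x) * Lf x) = fun x =>
      2 * ((fun y => y * Real.log y) (Real.sin (Real.pi * x))) +
        Real.sin (Real.pi * x) * Real.log 4 := by
    ext x; rw [Lf_eq]; ring
  rw [this]
  have h2 : Continuous (fun x => (fun y => y * Real.log y) (Real.sin (Real.pi * x))) :=
    h.comp (by fun_prop)
  fun_prop

lemma ee_neg_nat (n : ℕ) (x : ℝ) : ee (-n) x = ee (-1) x ^ n := by
  simp only [ee, ← Complex.exp_nat_mul]; congr 1; push_cast; ring

lemma one_add_ee_neg_one (x : ℝ) :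
    1 + ee (-1) x = (Real.cos (Real.pi * x) : ℂ) * (2 * Complex.exp (-(Real.pi * x * I))) := by
  have h : ee (-1) x = Complex.exp (-(Real.pi * x * I)) * Complex.exp (-(Real.pi * x * I)) := by
    rw [ee, ← Complex.exp_add]; congr 1; push_cast; ring
  have h2 : Complex.exp (-(Real.pi * x * I)) * Complex.exp (Real.pi * x * I) = 1 := by
    rw [← Complex.exp_add]; simp
  rw [h, Complex.ofReal_cos, Complex.cos]
  push_cast
  rw [neg_mul]
  generalize Complex.exp (-(Real.pi * x * I)) = a at *
  generalize Complex.exp (Real.pi * x * I) = b at *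
  linear_combination -h2

lemma hasDerivAt_Lf {x : ℝ} (hx : Real.sin (Real.pi * x) ≠ 0) :
    HasDerivAt Lf (2 * Real.pi * Real.cos (Real.pi * x) / Real.sin (Real.pi * x)) x := by
  have h0 : HasDerivAt (fun x : ℝ => Real.pi * x) Real.pi x := by
    simpa using (hasDerivAt_id x).const_mul Real.pi
  have h1 := ((h0.sin.log hx).const_mul 2).add_const (Real.log 4)
  have h2 : Lf = fun x => 2 * Real.log (Real.sin (Real.pi * x)) + Real.log 4 := funext Lf_eq
  rw [h2]
  exact h1.congr_deriv (by ring)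

lemma integral_Lf_ee_pos (n : ℕ) (hn : 1 ≤ n) :
    ∫ x in (0:ℝ)..1, (Lf x : ℂ) * ee (-n) x = ell n := by
  have hn0 : (n : ℂ) ≠ 0 := by exact_mod_cast (by omega : n ≠ 0)
  have hpi : (Real.pi : ℂ) ≠ 0 := by exact_mod_cast Real.pi_ne_zero
  have hgeom : ∀ x, ee (-n) x - 1 = (ee (-1) x - 1) * ∑ l ∈ Finset.range n, ee (-1) x ^ l := by
    intro x
    rw [mul_comm, geom_sum_mul, ee_neg_nat]
  -- `e_{-n} - 1` vanishes at the singularities of `Lf`, so this primitive is continuous.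
  let F : ℝ → ℂ := fun x => (Lf x : ℂ) * ((ee (-n) x - 1) / (-(2 * Real.pi * I * n)))
  have hFc : Continuous F := by
    have : F = fun x => ((Real.sin (Real.pi * x) * Lf x : ℝ) : ℂ) *
        ((-2 * I * Complex.exp (-(Real.pi * x * I))) * (∑ l ∈ Finset.range n, ee (-1) x ^ l)
          / (-(2 * Real.pi * I * n))) := by
      ext x
      simp only [F]
      rw [hgeom, ee_neg_one_sub_one]; push_cast; ring
    rw [this]
    have := Complex.continuous_ofReal.comp continuous_sin_mul_Lf
    refine this.mul ?_
    fun_prop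
  have hFd : ∀ x ∈ Set.Ioo (0:ℝ) 1, HasDerivAt F ((Lf x : ℂ) * ee (-n) x +
      (1 / n) * ((1 + ee (-1) x) * ∑ l ∈ Finset.range n, ee (-1) x ^ l)) x := by
    intro x hx
    have hs : Real.sin (Real.pi * x) ≠ 0 := by
      refine (Real.sin_pos_of_pos_of_lt_pi (mul_pos Real.pi_pos hx.1) ?_).ne'
      nlinarith [hx.2, Real.pi_pos]
    have hs' : (Real.sin (Real.pi * x) : ℂ) ≠ 0 := by exact_mod_cast hs
    have h1 := ((hasDerivAt_Lf hs).ofReal_comp).mul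
      (((hasDerivAt_ee (-n) x).sub_const 1).div_const (-(2 * Real.pi * I * n)))
    refine h1.congr_deriv ?_
    rw [hgeom, ee_neg_one_sub_one, one_add_ee_neg_one]
    push_cast [-Complex.ofReal_sin, -Complex.ofReal_cos]
    generalize (∑ l ∈ Finset.range n, ee (-1) x ^ l) = G
    have hI := I_ne_zero
    field_simp
    ring
  have hi1 : IntervalIntegrable (fun x => (Lf x : ℂ) * ee (-n) x) volume 0 1 :=
    (intervalIntegrable_Lf_ofReal 0 1).mul_continuousOn (by fun_prop)
  have hi2 : IntervalIntegrable (fun x : ℝ => (1 / n : ℂ) *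
      ((1 + ee (-1) x) * ∑ l ∈ Finset.range n, ee (-1) x ^ l)) volume 0 1 :=
    Continuous.intervalIntegrable (by fun_prop) _ _
  have key := intervalIntegral.integral_eq_sub_of_hasDerivAt_of_le zero_le_one hFc.continuousOn
    hFd (hi1.add hi2)
  have hF0 : F 0 = 0 := by simp [F, ee_zero_right]
  have hF1 : F 1 = 0 := by
    have := ee_int (-n) 1
    simp only [Int.cast_one] at this
    simp [F, this]
  rw [hF0, hF1, intervalIntegral.integral_add hi1 hi2] at key
  have h2 : ∫ x in (0:ℝ)..1, (1 / n : ℂ) *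
      ((1 + ee (-1) x) * ∑ l ∈ Finset.range n, ee (-1) x ^ l) = 1 / n := by
    rw [intervalIntegral.integral_const_mul]
    have : ∀ x, (1 + ee (-1) x) * ∑ l ∈ Finset.range n, ee (-1) x ^ l =
        ∑ l ∈ Finset.range n, (ee (-l) x + ee (-(l + 1 : ℕ)) x) := by
      intro x
      rw [Finset.mul_sum]
      refine Finset.sum_congr rfl fun l _ => ?_
      rw [ee_neg_nat, ee_neg_nat]; ring
    simp only [this]
    rw [intervalIntegral.integral_finsetSum (fun l _ =>
      Continuous.intervalIntegrable (by fun_prop) _ _)]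
    have h3 : ∀ l : ℕ, ∫ x in (0:ℝ)..1, (ee (-l) x + ee (-(l + 1 : ℕ)) x) =
        if l = 0 then 1 else 0 := by
      intro l
      rw [intervalIntegral.integral_add (Continuous.intervalIntegrable (by fun_prop) _ _)
        (Continuous.intervalIntegrable (by fun_prop) _ _), integral_ee, integral_ee]
      have : ¬ (-((l + 1 : ℕ) : ℤ)) = 0 := by omega
      rw [if_neg this]
      simp
    simp only [h3]
    rw [Finset.sum_ite_eq' ]
    simp [show 0 < n by omega]
  rw [h2] at key
  have : (ell n) = -(1 / n : ℂ) := by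
    simp [ell]
  rw [this]
  linear_combination key

/-- The `n`-th Fourier coefficient of `log (4 sin² (π x))` is `-1/|n|` (and `0` for `n = 0`). -/
lemma integral_Lf_ee (n : ℤ) : ∫ x in (0:ℝ)..1, (Lf x : ℂ) * ee (-n) x = ell n := by
  rcases lt_trichotomy n 0 with h | h | h
  · obtain ⟨k, rfl⟩ : ∃ k : ℕ, n = -(k : ℤ) := ⟨n.natAbs, by omega⟩
    have hk := integral_Lf_ee_pos k (by omega)
    have := congrArg (starRingEnd ℂ) hk
    rw [intervalIntegral.integral_of_le zero_le_one, ← integral_conj] at this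
    rw [intervalIntegral.integral_of_le zero_le_one]
    simp only [map_mul, Complex.conj_ofReal, ee_conj] at this
    rw [this]
    simp [ell]
  · subst h
    simp only [neg_zero, ee_zero_left, mul_one]
    rw [intervalIntegral.integral_ofReal, integral_Lf]
    simp [ell]
  · obtain ⟨k, rfl⟩ : ∃ k : ℕ, n = (k : ℤ) := ⟨n.natAbs, by omega⟩
    exact integral_Lf_ee_pos k (by omega)

/-! ### Sums over the shifted grid -/

/-- Discrete Fourier coefficient of `f` on the shifted grid `(j + ε)/N`. -/
noncomputable def gam (f : ℝ → ℂ) (N : ℕ) (ε : ℝ) (n : ℤ) : ℂ :=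
  (1 / (N : ℂ)) * ∑ j ∈ Finset.range N, f (((j : ℝ) + ε) / N) * ee (-n) (((j : ℝ) + ε) / N)

lemma ee_one_div_eq_one_iff {N : ℕ} (hN : 0 < N) (n : ℤ) :
    ee n (1 / (N : ℝ)) = 1 ↔ (N : ℤ) ∣ n := by
  have hN0 : (N : ℂ) ≠ 0 := by exact_mod_cast hN.ne'
  have h2 : (2 * Real.pi * Complex.I : ℂ) ≠ 0 := by simp [Real.pi_ne_zero]
  rw [ee, Complex.exp_eq_one_iff]
  constructor
  · rintro ⟨k, hk⟩
    refine ⟨k, ?_⟩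
    push_cast at hk
    have h3 : (2 * Real.pi * Complex.I : ℂ) * n = (2 * Real.pi * Complex.I : ℂ) * (N * k) := by
      have := congrArg (· * (N : ℂ)) hk
      field_simp at this
      linear_combination 2 * (Real.pi : ℂ) * Complex.I * this
    have h4 := mul_left_cancel₀ h2 h3
    exact_mod_cast h4
  · rintro ⟨k, rfl⟩
    refine ⟨k, ?_⟩
    push_cast
    field_simp

lemma ee_grid (n : ℤ) (N : ℕ) (ε : ℝ) (j : ℕ) :
    ee n (((j : ℝ) + ε) / N) = ee n (ε / N) * ee n (1 / (N : ℝ)) ^ j := by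
  simp only [ee, ← Complex.exp_nat_mul, ← Complex.exp_add]; congr 1; push_cast; ring

/-- Orthogonality of the characters on the shifted grid. -/
lemma sum_ee_grid {N : ℕ} (hN : 0 < N) (ε : ℝ) (n : ℤ) :
    ∑ j ∈ Finset.range N, ee n (((j : ℝ) + ε) / N) =
      if (N : ℤ) ∣ n then N * ee n (ε / N) else 0 := by
  simp only [ee_grid]
  rw [← Finset.mul_sum]
  split_ifs with h
  · rw [(ee_one_div_eq_one_iff hN n).mpr h]
    simp [mul_comm]
  · have h1 : ee n (1 / (N : ℝ)) - 1 ≠ 0 := by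
      rw [sub_ne_zero]; exact fun h2 => h ((ee_one_div_eq_one_iff hN n).mp h2)
    have h2 := geom_sum_mul (ee n (1 / (N : ℝ))) N
    have h3 : ee n (1 / (N : ℝ)) ^ N = 1 := by
      have h4 := ee_int n 1
      have hN0 : (N : ℂ) ≠ 0 := by exact_mod_cast hN.ne'
      rw [← h4]
      simp only [ee, ← Complex.exp_nat_mul]; congr 1; push_cast; field_simp
    rw [h3, sub_self] at h2
    rw [(mul_eq_zero.mp h2).resolve_right h1, mul_zero]

lemma ee_one_re (x : ℝ) : (ee 1 x).re = Real.cos (2 * Real.pi * x) := by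
  have : (2 * Real.pi * Complex.I * (1 : ℤ) * x : ℂ) = ((2 * Real.pi * x : ℝ) : ℂ) * Complex.I := by
    push_cast; ring
  rw [ee, this, Complex.exp_ofReal_mul_I_re]

lemma ee_one_im (x : ℝ) : (ee 1 x).im = Real.sin (2 * Real.pi * x) := by
  have : (2 * Real.pi * Complex.I * (1 : ℤ) * x : ℂ) = ((2 * Real.pi * x : ℝ) : ℂ) * Complex.I := by
    push_cast; ring
  rw [ee, this, Complex.exp_ofReal_mul_I_im]

/-- The distance from `e^{-2π i ε}` to the real line bounds `1 - x e^{2π i ε}` below. -/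
lemma kappa_le (ε x : ℝ) : |Real.sin (2 * Real.pi * ε)| ≤ ‖1 - (x : ℂ) * ee 1 ε‖ := by
  have h : 1 - (x : ℂ) * ee 1 ε = ee 1 ε * (ee (-1) ε - x) := by
    have := ee_mul_neg 1 ε
    linear_combination -this
  rw [h, norm_mul, norm_ee, one_mul]
  have h2 := Complex.abs_im_le_norm (ee (-1) ε - x)
  rw [← ee_conj, Complex.sub_im, Complex.conj_im, ee_one_im] at h2
  rw [← ee_conj]
  simpa using h2

lemma kappa_le' (ε x : ℝ) : |Real.sin (2 * Real.pi * ε)| ≤ ‖1 - (x : ℂ) * ee (-1) ε‖ := by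
  have := kappa_le (-ε) x
  rw [ee_neg_right] at this
  simpa using this

section gamma
variable {N : ℕ} {ε : ℝ}

lemma ee_one_grid_pow (hN : 0 < N) (j : ℕ) : ee 1 (((j : ℝ) + ε) / N) ^ N = ee 1 ε := by
  have hN0 : (N : ℝ) ≠ 0 := by exact_mod_cast hN.ne'
  rw [← ee_eq_pow]
  have h := ee_mul_comm 1 N (((j : ℝ) + ε) / N)
  rw [one_mul] at h
  rw [← h]
  have : ((N : ℤ) : ℝ) * (((j : ℝ) + ε) / N) = ε + ((j : ℤ) : ℝ) := by
    push_cast; field_simp; ring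
  rw [this, ee_add_right, ee_int, mul_one]

lemma one_sub_ne (hs : Real.sin (2 * Real.pi * ε) ≠ 0) (x : ℝ) : 1 - (x : ℂ) * ee 1 ε ≠ 0 := by
  intro h
  have := kappa_le ε x
  rw [h, norm_zero] at this
  exact hs (abs_eq_zero.mp (le_antisymm this (abs_nonneg _)))

lemma one_sub_grid_ne (hN : 0 < N) (hs : Real.sin (2 * Real.pi * ε) ≠ 0) (j : ℕ) (r : ℝ) :
    1 - (r : ℂ) * ee 1 (((j : ℝ) + ε) / N) ≠ 0 := by
  intro h
  have h1 : (r : ℂ) * ee 1 (((j : ℝ) + ε) / N) = 1 := by linear_combination -h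
  have h2 := congrArg (· ^ N) h1
  simp only [mul_pow, one_pow, ee_one_grid_pow hN] at h2
  have := one_sub_ne hs (r ^ N)
  apply this
  push_cast
  rw [h2, sub_self]

/-- Grid average of a geometric series against a character. -/
lemma geom_grid (hN : 0 < N) (hs : Real.sin (2 * Real.pi * ε) ≠ 0) (r : ℝ) (k : ℕ)
    (hk : 1 ≤ k) (hkN : k ≤ N) :
    (1 / (N : ℂ)) * ∑ j ∈ Finset.range N, ee (-k) (((j : ℝ) + ε) / N) *
      (ee 1 (((j : ℝ) + ε) / N) / (1 - r * ee 1 (((j : ℝ) + ε) / N))) =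
      r ^ (k - 1) / (1 - (r : ℂ) ^ N * ee 1 ε) := by
  have hN0 : (N : ℂ) ≠ 0 := by exact_mod_cast hN.ne'
  have hz := one_sub_ne hs (r ^ N)
  push_cast at hz
  have h1 : ∀ j : ℕ, ee (-k) (((j : ℝ) + ε) / N) *
      (ee 1 (((j : ℝ) + ε) / N) / (1 - r * ee 1 (((j : ℝ) + ε) / N))) =
      ∑ l ∈ Finset.range N, (r : ℂ) ^ l / (1 - (r : ℂ) ^ N * ee 1 ε) *
        ee ((l : ℤ) + 1 - k) (((j : ℝ) + ε) / N) := by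
    intro j
    have hj := one_sub_grid_ne hN hs j r
    have hg := geom_sum_mul_neg ((r : ℂ) * ee 1 (((j : ℝ) + ε) / N)) N
    rw [mul_pow, ee_one_grid_pow hN] at hg
    have : ∀ l ∈ Finset.range N, (r : ℂ) ^ l / (1 - (r : ℂ) ^ N * ee 1 ε) *
        ee ((l : ℤ) + 1 - k) (((j : ℝ) + ε) / N) =
        (ee (-k) (((j : ℝ) + ε) / N) * ee 1 (((j : ℝ) + ε) / N) / (1 - (r : ℂ) ^ N * ee 1 ε)) *
         ((r : ℂ) * ee 1 (((j : ℝ) + ε) / N)) ^ l := by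
      intro l _
      rw [show (l : ℤ) + 1 - k = l + (1 + -k) by ring, ee_add_left, ee_add_left, ee_eq_pow l,
        mul_pow]
      ring
    rw [Finset.sum_congr rfl this, ← Finset.mul_sum]
    rw [← mul_div_assoc, div_mul_eq_mul_div, div_eq_div_iff hj hz, ← hg]
    ring
  simp only [h1]
  rw [Finset.sum_comm]
  simp only [← Finset.mul_sum, sum_ee_grid hN]
  rw [Finset.sum_eq_single (k - 1)]
  · have : ((k - 1 : ℕ) : ℤ) + 1 - k = 0 := by omega
    rw [this]
    simp only [dvd_zero, if_true, ee_zero_left]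
    field_simp
  · intro l hl hne
    have hl := Finset.mem_range.mp hl
    rw [if_neg, mul_zero]
    rintro ⟨c, hc⟩
    have : c = 0 := by
      by_contra hc0
      rcases lt_or_gt_of_ne hc0 with h | h
      · nlinarith
      · nlinarith
    subst this
    omega
  · intro h
    exact absurd (Finset.mem_range.mpr (by omega)) h

lemma geom_grid' (hN : 0 < N) (hs : Real.sin (2 * Real.pi * ε) ≠ 0) (r : ℝ) (k : ℕ)
    (hkN : k < N) :
    (1 / (N : ℂ)) * ∑ j ∈ Finset.range N, ee (-k) (((j : ℝ) + ε) / N) *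
      (ee (-1) (((j : ℝ) + ε) / N) / (1 - r * ee (-1) (((j : ℝ) + ε) / N))) =
      r ^ (N - 1 - k) * ee (-1) ε / (1 - (r : ℂ) ^ N * ee (-1) ε) := by
  have h := congrArg (starRingEnd ℂ) (geom_grid hN hs r (N - k) (by omega) (by omega))
  simp only [map_mul, map_div₀, map_one, map_natCast, map_sum, map_sub, map_pow, ee_conj,
    Complex.conj_ofReal] at h
  have e1 : N - k - 1 = N - 1 - k := by omega
  rw [e1] at h
  rw [mul_comm ((r : ℂ) ^ _), mul_div_assoc, ← h, mul_left_comm (ee (-1) ε)]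
  congr 1
  rw [Finset.mul_sum]
  refine Finset.sum_congr rfl fun j _ => ?_
  rw [← mul_assoc]
  congr 1
  have : (- -((N - k : ℕ) : ℤ)) = N + -k := by omega
  rw [this, ee_add_left, ee_eq_pow, ee_one_grid_pow hN, ← mul_assoc, mul_comm (ee (-1) ε),
    ee_mul_neg, one_mul]

end gamma

/-! ### Integral representation of the grid coefficients -/

lemma ee_add_conj (x : ℝ) : ee 1 x + ee (-1) x = 2 * (Real.cos (2 * Real.pi * x) : ℂ) := by
  rw [← ee_conj, Complex.add_conj, ee_one_re]; push_cast; ring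

lemma prod_one_sub (x r : ℝ) : (1 - (r : ℂ) * ee 1 x) * (1 - (r : ℂ) * ee (-1) x) =
    ((1 - 2 * r * Real.cos (2 * Real.pi * x) + r ^ 2 : ℝ) : ℂ) := by
  have h1 := ee_add_conj x
  have h2 := ee_mul_neg 1 x
  push_cast
  push_cast at h1
  linear_combination -(r : ℂ) * h1 + r ^ 2 * h2

lemma one_sub_conj_ne {x r : ℝ} (h : 1 - (r : ℂ) * ee 1 x ≠ 0) : 1 - (r : ℂ) * ee (-1) x ≠ 0 := by
  intro h2
  apply h
  have := congrArg (starRingEnd ℂ) h2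
  simpa [ee_conj] using this

/-- Abel-type integral representation of the logarithmic kernel away from its singularities. -/
lemma Lf_integral {x : ℝ} (h : ∀ r : ℝ, 1 - (r : ℂ) * ee 1 x ≠ 0) :
    (Lf x : ℂ) = -∫ r in (0:ℝ)..1, (ee 1 x / (1 - r * ee 1 x) + ee (-1) x / (1 - r * ee (-1) x)) := by
  set c := Real.cos (2 * Real.pi * x) with hc
  have hq : ∀ r : ℝ, 1 - 2 * r * c + r ^ 2 ≠ 0 := by
    intro r h0
    have h1 := prod_one_sub x r
    rw [← hc, h0, ofReal_zero] at h1
    exact mul_ne_zero (h r) (one_sub_conj_ne (h r)) h1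
  have hi : ∀ r : ℝ, ee 1 x / (1 - r * ee 1 x) + ee (-1) x / (1 - r * ee (-1) x) =
      (((-((2 * r - 2 * c) / (1 - 2 * r * c + r ^ 2))) : ℝ) : ℂ) := by
    intro r
    have h1 := prod_one_sub x r
    have h2 := ee_add_conj x
    have h3 := ee_mul_neg 1 x
    have hq' : ((1 - 2 * r * c + r ^ 2 : ℝ) : ℂ) ≠ 0 := by exact_mod_cast hq r
    rw [div_add_div _ _ (h r) (one_sub_conj_ne (h r)), h1, ofReal_neg, ofReal_div, ← neg_div]
    congr 1
    rw [← hc] at h2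
    push_cast
    linear_combination h2 - 2 * (r : ℂ) * h3
  simp only [hi]
  rw [intervalIntegral.integral_ofReal, ← ofReal_neg, intervalIntegral.integral_neg, neg_neg]
  congr 1
  have hd : ∀ r ∈ Set.uIcc (0:ℝ) 1, HasDerivAt (fun r => Real.log (1 - 2 * r * c + r ^ 2))
      ((2 * r - 2 * c) / (1 - 2 * r * c + r ^ 2)) r := by
    intro r _
    have h1 : HasDerivAt (fun r : ℝ => 1 - 2 * r * c + r ^ 2) (2 * r - 2 * c) r := by
      have a1 := (((hasDerivAt_id r).const_mul 2).mul_const c).const_sub 1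
      have a2 := hasDerivAt_pow 2 r
      refine (a1.add a2).congr_deriv ?_
      simp; ring
    exact h1.log (hq r)
  rw [intervalIntegral.integral_eq_sub_of_hasDerivAt hd]
  · have hs : 1 - 2 * 1 * c + 1 ^ 2 = Real.sin (Real.pi * x) ^ 2 * 4 := by
      have := Real.cos_two_mul' (Real.pi * x)
      have h5 := Real.sin_sq_add_cos_sq (Real.pi * x)
      rw [hc, show 2 * Real.pi * x = 2 * (Real.pi * x) by ring, this]
      linarith
    have hs0 : Real.sin (Real.pi * x) ^ 2 ≠ 0 := by
      intro h0
      rw [h0] at hs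
      exact hq 1 (by linarith)
    rw [hs, Real.log_mul hs0 (by norm_num)]
    simp [Lf]
  · apply Continuous.intervalIntegrable
    exact Continuous.div (by fun_prop) (by fun_prop) hq

/-- The grid coefficients of the logarithmic kernel. -/
noncomputable def gL (N : ℕ) (ε : ℝ) (n : ℤ) : ℂ := gam (fun x => (Lf x : ℂ)) N ε n

section gamma
variable {N : ℕ} {ε : ℝ}

lemma gam_sub_N (f : ℝ → ℂ) (hN : 0 < N) (n : ℤ) : gam f N ε (n - N) = ee 1 ε * gam f N ε n := by
  unfold gam
  rw [mul_left_comm]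
  congr 1
  rw [Finset.mul_sum]
  refine Finset.sum_congr rfl fun j _ => ?_
  rw [show -(n - (N : ℤ)) = N + -n by ring, ee_add_left, ee_eq_pow, ee_one_grid_pow hN]; ring

lemma gL_eq (hN : 0 < N) (hs : Real.sin (2 * Real.pi * ε) ≠ 0) (n : ℤ) :
    gL N ε n = -∫ r in (0:ℝ)..1, ((1 / (N : ℂ)) * ∑ j ∈ Finset.range N,
      ee (-n) (((j : ℝ) + ε) / N) *
        (ee 1 (((j : ℝ) + ε) / N) / (1 - r * ee 1 (((j : ℝ) + ε) / N))) +
      (1 / (N : ℂ)) * ∑ j ∈ Finset.range N, ee (-n) (((j : ℝ) + ε) / N) *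
        (ee (-1) (((j : ℝ) + ε) / N) / (1 - r * ee (-1) (((j : ℝ) + ε) / N)))) := by
  have hc : ∀ j : ℕ, Continuous (fun r : ℝ => ee (-n) (((j : ℝ) + ε) / N) *
      (ee 1 (((j : ℝ) + ε) / N) / (1 - r * ee 1 (((j : ℝ) + ε) / N)) +
        ee (-1) (((j : ℝ) + ε) / N) / (1 - r * ee (-1) (((j : ℝ) + ε) / N)))) := by
    intro j
    refine continuous_const.mul (Continuous.add ?_ ?_)
    · exact Continuous.div (by fun_prop) (by fun_prop) (fun r => one_sub_grid_ne hN hs j r)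
    · exact Continuous.div (by fun_prop) (by fun_prop)
        (fun r => one_sub_conj_ne (one_sub_grid_ne hN hs j r))
  simp only [← mul_add, ← Finset.sum_add_distrib]
  rw [intervalIntegral.integral_const_mul,
    intervalIntegral.integral_finsetSum (fun j _ => (hc j).intervalIntegrable _ _), gL, gam,
    ← mul_neg, ← Finset.sum_neg_distrib]
  congr 1
  refine Finset.sum_congr rfl fun j _ => ?_
  rw [intervalIntegral.integral_const_mul, Lf_integral (fun r => one_sub_grid_ne hN hs j r)]
  ring

/-- The resolvent factor `1 / (1 - r^N e^{2π i ε})` in the integral representation of `gL`. -/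
noncomputable def ra (N : ℕ) (ε r : ℝ) : ℂ := (1 - (r : ℂ) ^ N * ee 1 ε)⁻¹

lemma continuous_ra (hs : Real.sin (2 * Real.pi * ε) ≠ 0) : Continuous (ra N ε) := by
  unfold ra
  refine Continuous.inv₀ (by fun_prop) fun r => ?_
  have := one_sub_ne hs (r ^ N)
  push_cast at this; exact this

lemma norm_ra_le (hs : Real.sin (2 * Real.pi * ε) ≠ 0) (r : ℝ) :
    ‖ra N ε r‖ ≤ |Real.sin (2 * Real.pi * ε)|⁻¹ := by
  unfold ra
  rw [norm_inv]
  have := kappa_le ε (r ^ N)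
  push_cast at this
  exact inv_anti₀ (abs_pos.mpr hs) this

lemma sin_neg_ne (hs : Real.sin (2 * Real.pi * ε) ≠ 0) : Real.sin (2 * Real.pi * -ε) ≠ 0 := by
  simpa using hs

/-- The grid average of the Abel representation of `Lf`, summed in closed form. -/
lemma gL_pos (hs : Real.sin (2 * Real.pi * ε) ≠ 0) (k : ℕ) (hk : 1 ≤ k) (hkN : k < N) :
    gL N ε k = -∫ r in (0:ℝ)..1,
      ((r : ℂ) ^ (k - 1) * ra N ε r + (r : ℂ) ^ (N - 1 - k) * (ee (-1) ε * ra N (-ε) r)) := by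
  rw [gL_eq (by omega) hs]
  congr 2; ext r
  rw [geom_grid (by omega) hs r k hk hkN.le, geom_grid' (by omega) hs r k hkN, ra, ra,
    ee_neg_right]
  ring

lemma gL_zero (hs : Real.sin (2 * Real.pi * ε) ≠ 0) (hN : 0 < N) :
    gL N ε 0 = -∫ r in (0:ℝ)..1,
      ((r : ℂ) ^ (N - 1) * (ee 1 ε * ra N ε r) + (r : ℂ) ^ (N - 1) * (ee (-1) ε * ra N (-ε) r)) := by
  rw [gL_eq (by omega) hs]
  congr 2; ext r
  have h1 := geom_grid' (by omega) hs r 0 hN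
  simp only [Nat.cast_zero] at h1
  rw [h1]
  have h2 := geom_grid (by omega) hs r N hN le_rfl
  have h3 : ∀ j : ℕ, ee (-0) (((j : ℝ) + ε) / N) = ee 1 ε * ee (-N) (((j : ℝ) + ε) / N) := by
    intro j
    rw [← ee_one_grid_pow hN j, ← ee_eq_pow, ee_mul_neg, neg_zero, ee_zero_left]
  simp only [h3, mul_assoc]
  rw [← Finset.mul_sum, mul_left_comm, h2, ra, ra, ee_neg_right]
  simp only [Nat.sub_zero]
  ring

end gamma

/-! ### Upper bounds for the grid coefficients -/

/-- Distance from `m` to the nearest multiple of `N`. -/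
noncomputable def nd (N : ℕ) (m : ℤ) : ℝ := |((m.bmod N : ℤ) : ℝ)|

lemma nd_nonneg (N : ℕ) (m : ℤ) : 0 ≤ nd N m := abs_nonneg _

lemma nd_exists (N : ℕ) (m : ℤ) : ∃ t : ℤ, nd N m = |((m - N * t : ℤ) : ℝ)| := by
  refine ⟨m.bdiv N, ?_⟩
  have := Int.bmod_add_bdiv m N
  rw [nd]; congr 2; linarith

lemma nd_le {N : ℕ} (hN : 0 < N) (m t : ℤ) : nd N m ≤ |((m - N * t : ℤ) : ℝ)| := by
  rw [nd]
  have h1 := Int.bmod_add_bdiv m N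
  have h2 := Int.le_bmod (x := m) hN
  have h3 := Int.bmod_lt (x := m) hN
  rw [← Int.cast_abs, ← Int.cast_abs]
  have : |m.bmod N| ≤ |m - N * t| := by
    set b := m.bmod N
    set c := m.bdiv N
    have e : m - N * t = b + N * (c - t) := by rw [← h1]; ring
    rw [e]
    have hN' : (0 : ℤ) < N := by exact_mod_cast hN
    rcases lt_trichotomy (c - t) 0 with h | h | h
    · have : (N : ℤ) * (c - t) ≤ -N := by nlinarith
      generalize (N : ℤ) * (c - t) = y at *
      rcases abs_cases b with h4 | h4 <;> rcases abs_cases (b + y) with h5 | h5 <;> omega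
    · rw [h]; simp
    · have : (N : ℤ) ≤ N * (c - t) := by nlinarith
      generalize (N : ℤ) * (c - t) = y at *
      rcases abs_cases b with h4 | h4 <;> rcases abs_cases (b + y) with h5 | h5 <;> omega
  exact_mod_cast this

lemma nd_le_abs {N : ℕ} (hN : 0 < N) (m : ℤ) : nd N m ≤ |(m : ℝ)| := by
  simpa using nd_le hN m 0

lemma nd_add_le {N : ℕ} (hN : 0 < N) (m l : ℤ) : nd N (m + l) ≤ nd N m + |(l : ℝ)| := by
  obtain ⟨t, ht⟩ := nd_exists N m
  rw [ht]
  refine (nd_le hN (m + l) t).trans ?_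
  have : ((m + l - N * t : ℤ) : ℝ) = ((m - N * t : ℤ) : ℝ) + l := by push_cast; ring
  rw [this]
  exact abs_add_le _ _

lemma one_add_nd_le {N : ℕ} (hN : 0 < N) (m l : ℤ) :
    1 + nd N m ≤ (1 + |(l : ℝ)|) * (1 + nd N (m + l)) := by
  have h := nd_add_le hN (m + l) (-l)
  simp only [add_neg_cancel_right, Int.cast_neg, abs_neg] at h
  have := nd_nonneg N (m + l)
  nlinarith [abs_nonneg (l : ℝ), mul_nonneg (abs_nonneg (l : ℝ)) this]

lemma nd_add_mul {N : ℕ} (m t : ℤ) : nd N (m + N * t) = nd N m := by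
  rw [nd, nd, Int.add_mul_bmod_self_left]

lemma integral_pow_unit (n : ℕ) : ∫ r in (0:ℝ)..1, r ^ n = 1 / ((n : ℝ) + 1) := by
  rw [integral_pow]; simp

lemma norm_integral_le_of_le {g : ℝ → ℂ} {G : ℝ → ℝ} (hG : Continuous G)
    (h : ∀ r ∈ Set.Icc (0:ℝ) 1, ‖g r‖ ≤ G r) :
    ‖∫ r in (0:ℝ)..1, g r‖ ≤ ∫ r in (0:ℝ)..1, G r := by
  refine intervalIntegral.norm_integral_le_of_norm_le zero_le_one ?_ (hG.intervalIntegrable _ _)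
  exact Filter.Eventually.of_forall fun r hr => h r ⟨hr.1.le, hr.2⟩

section gamma
variable {N : ℕ} {ε : ℝ}

lemma norm_ra_le' (hs : Real.sin (2 * Real.pi * ε) ≠ 0) (r : ℝ) :
    ‖ra N (-ε) r‖ ≤ |Real.sin (2 * Real.pi * ε)|⁻¹ := by
  have := norm_ra_le (N := N) (sin_neg_ne hs) r
  simpa using this

lemma norm_gL_zero_le (hs : Real.sin (2 * Real.pi * ε) ≠ 0) (hN : 0 < N) :
    ‖gL N ε 0‖ ≤ 2 * |Real.sin (2 * Real.pi * ε)|⁻¹ / N := by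
  rw [gL_zero hs hN, norm_neg]
  set κ := |Real.sin (2 * Real.pi * ε)|⁻¹
  have hb := norm_integral_le_of_le (g := fun r : ℝ => (r : ℂ) ^ (N - 1) * (ee 1 ε * ra N ε r) +
    (r : ℂ) ^ (N - 1) * (ee (-1) ε * ra N (-ε) r)) (G := fun r => (2 * κ) * r ^ (N - 1))
    (by fun_prop) (by
      intro r hr
      refine (norm_add_le _ _).trans ?_
      simp only [norm_mul, norm_ee, norm_pow, Complex.norm_real, Real.norm_eq_abs,
        abs_of_nonneg hr.1, one_mul]
      have h1 := norm_ra_le (N := N) hs r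
      have h2 := norm_ra_le' (N := N) hs r
      have h3 : 0 ≤ r ^ (N - 1) := pow_nonneg hr.1 _
      nlinarith)
  refine hb.trans (le_of_eq ?_)
  rw [intervalIntegral.integral_const_mul, integral_pow_unit]
  have : ((N - 1 : ℕ) : ℝ) + 1 = N := by
    rw [← Nat.cast_add_one]; congr 1; omega
  rw [this]; ring

lemma norm_gL_pos_le (hs : Real.sin (2 * Real.pi * ε) ≠ 0) (k : ℕ) (hk : 1 ≤ k) (hkN : k < N) :
    ‖gL N ε k‖ ≤ |Real.sin (2 * Real.pi * ε)|⁻¹ * (1 / k + 1 / (N - k)) := by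
  rw [gL_pos hs k hk hkN, norm_neg]
  set κ := |Real.sin (2 * Real.pi * ε)|⁻¹
  have hb := norm_integral_le_of_le (g := fun r : ℝ => (r : ℂ) ^ (k - 1) * ra N ε r +
    (r : ℂ) ^ (N - 1 - k) * (ee (-1) ε * ra N (-ε) r))
    (G := fun r => κ * r ^ (k - 1) + κ * r ^ (N - 1 - k))
    (by fun_prop) (by
      intro r hr
      refine (norm_add_le _ _).trans ?_
      simp only [norm_mul, norm_ee, norm_pow, Complex.norm_real, Real.norm_eq_abs,
        abs_of_nonneg hr.1, one_mul]
      have h1 := norm_ra_le (N := N) hs r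
      have h2 := norm_ra_le' (N := N) hs r
      have h3 : 0 ≤ r ^ (k - 1) := pow_nonneg hr.1 _
      have h4 : 0 ≤ r ^ (N - 1 - k) := pow_nonneg hr.1 _
      nlinarith)
  refine hb.trans (le_of_eq ?_)
  rw [intervalIntegral.integral_add (Continuous.intervalIntegrable (by fun_prop) _ _)
    (Continuous.intervalIntegrable (by fun_prop) _ _), intervalIntegral.integral_const_mul,
    intervalIntegral.integral_const_mul, integral_pow_unit, integral_pow_unit]
  have h1 : ((k - 1 : ℕ) : ℝ) + 1 = k := by
    rw [← Nat.cast_add_one]; congr 1; omega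
  have h2 : ((N - 1 - k : ℕ) : ℝ) + 1 = N - k := by
    rw [← Nat.cast_add_one, ← Nat.cast_sub hkN.le]; congr 1; omega
  rw [h1, h2]; ring

lemma norm_gL_pos_sub_le (hs : Real.sin (2 * Real.pi * ε) ≠ 0) (k : ℕ) (hk : 1 ≤ k)
    (hkN : k + 1 < N) :
    ‖gL N ε (k + 1 : ℕ) - gL N ε k‖ ≤ |Real.sin (2 * Real.pi * ε)|⁻¹ *
      ((1 / k - 1 / (k + 1)) + (1 / (N - k - 1) - 1 / (N - k))) := by
  rw [gL_pos hs k hk (by omega), gL_pos hs (k + 1) (by omega) hkN]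
  set κ := |Real.sin (2 * Real.pi * ε)|⁻¹
  have c1 := continuous_ra (N := N) hs
  have c2 := continuous_ra (N := N) (sin_neg_ne hs)
  rw [← neg_add', norm_neg, ← sub_eq_add_neg, ← intervalIntegral.integral_sub
    (Continuous.intervalIntegrable (by fun_prop) _ _)
    (Continuous.intervalIntegrable (by fun_prop) _ _)]
  obtain ⟨a, rfl⟩ : ∃ a, k = a + 1 := ⟨k - 1, by omega⟩
  obtain ⟨b, rfl⟩ : ∃ b, N = a + b + 3 := ⟨N - a - 3, by omega⟩
  have e1 : a + 1 + 1 - 1 = a + 1 := by omega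
  have e2 : a + 1 - 1 = a := by omega
  have e3 : a + b + 3 - 1 - (a + 1 + 1) = b := by omega
  have e4 : a + b + 3 - 1 - (a + 1) = b + 1 := by omega
  rw [e1, e2, e3, e4]
  set M := a + b + 3
  have hb := norm_integral_le_of_le (g := fun r : ℝ => ((r : ℂ) ^ (a + 1) * ra M ε r +
    (r : ℂ) ^ b * (ee (-1) ε * ra M (-ε) r)) - ((r : ℂ) ^ a * ra M ε r +
    (r : ℂ) ^ (b + 1) * (ee (-1) ε * ra M (-ε) r)))
    (G := fun r => κ * (r ^ a - r ^ (a + 1)) + κ * (r ^ b - r ^ (b + 1)))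
    (by fun_prop) (by
      intro r hr
      have e : ((r : ℂ) ^ (a + 1) * ra M ε r +
        (r : ℂ) ^ b * (ee (-1) ε * ra M (-ε) r)) - ((r : ℂ) ^ a * ra M ε r +
        (r : ℂ) ^ (b + 1) * (ee (-1) ε * ra M (-ε) r)) =
        -(((r ^ a * (1 - r) : ℝ) : ℂ) * ra M ε r) +
          ((r ^ b * (1 - r) : ℝ) : ℂ) * (ee (-1) ε * ra M (-ε) r) := by
        push_cast; ring
      rw [e]
      refine (norm_add_le _ _).trans ?_
      rw [norm_neg]
      have h5 : 0 ≤ 1 - r := by linarith [hr.2]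
      have h3 : 0 ≤ r ^ a * (1 - r) := mul_nonneg (pow_nonneg hr.1 _) h5
      have h4 : 0 ≤ r ^ b * (1 - r) := mul_nonneg (pow_nonneg hr.1 _) h5
      simp only [norm_mul (((_ : ℝ) : ℂ)), norm_mul (ee _ _), norm_ee, Complex.norm_real,
        Real.norm_eq_abs, abs_of_nonneg h3, abs_of_nonneg h4, one_mul]
      have h1 := norm_ra_le (N := M) hs r
      have h2 := norm_ra_le' (N := M) hs r
      rw [pow_succ, pow_succ]
      nlinarith)
  refine hb.trans (le_of_eq ?_)
  have ci : ∀ n : ℕ, IntervalIntegrable (fun r : ℝ => r ^ n) volume 0 1 := fun n =>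
    Continuous.intervalIntegrable (by fun_prop) _ _
  rw [intervalIntegral.integral_add (Continuous.intervalIntegrable (by fun_prop) _ _)
    (Continuous.intervalIntegrable (by fun_prop) _ _), intervalIntegral.integral_const_mul,
    intervalIntegral.integral_const_mul, intervalIntegral.integral_sub (ci _) (ci _),
    intervalIntegral.integral_sub (ci _) (ci _)]
  simp only [integral_pow_unit]
  simp only [M]
  push_cast
  rw [show (a : ℝ) + b + 3 - (a + 1) - 1 = b + 1 by ring,
    show (a : ℝ) + b + 3 - (a + 1) = b + 1 + 1 by ring]
  ring

end gamma

/-! ### Differences of grid coefficients -/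

section gamma
variable {N : ℕ} {ε : ℝ}

lemma gam_add_mul (f : ℝ → ℂ) (hN : 0 < N) (n t : ℤ) :
    gam f N ε (n + N * t) = ee (-t) ε * gam f N ε n := by
  have key : ∀ (t : ℕ) (n : ℤ), gam f N ε (n + N * t) = ee (-t) ε * gam f N ε n := by
    intro t
    induction t with
    | zero => intro n; simp [ee_zero_left]
    | succ t ih =>
      intro n
      have h := gam_sub_N (ε := ε) f hN (n + N * (t + 1 : ℕ))
      rw [show n + (N : ℤ) * (t + 1 : ℕ) - N = n + N * t by push_cast; ring, ih] at h
      have h2 := ee_mul_neg 1 ε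
      rw [show (-((t + 1 : ℕ) : ℤ)) = -t + -1 by push_cast; ring, ee_add_left]
      linear_combination (-gam f N ε (n + N * (t + 1 : ℕ))) * h2 - ee (-1) ε * h
  rcases le_total 0 t with h | h
  · lift t to ℕ using h
    exact key t n
  · obtain ⟨s, rfl⟩ : ∃ s : ℕ, t = -(s : ℤ) := ⟨t.natAbs, by omega⟩
    have h1 := key s (n + N * (-(s : ℤ)))
    rw [show n + (N : ℤ) * (-(s : ℤ)) + N * s = n by ring] at h1
    rw [h1, ← mul_assoc, ← ee_add_left]
    simp [ee_zero_left]

lemma sin_le_one_inv (hs : Real.sin (2 * Real.pi * ε) ≠ 0) :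
    1 ≤ |Real.sin (2 * Real.pi * ε)|⁻¹ :=
  (one_le_inv₀ (abs_pos.mpr hs)).mpr (Real.abs_sin_le_one _)

lemma norm_gL_le_two (hs : Real.sin (2 * Real.pi * ε) ≠ 0) (k : ℕ) (hkN : k < N) :
    ‖gL N ε k‖ ≤ 2 * |Real.sin (2 * Real.pi * ε)|⁻¹ := by
  have hκ : 0 ≤ |Real.sin (2 * Real.pi * ε)|⁻¹ := by positivity
  rcases Nat.eq_zero_or_pos k with rfl | hk
  · refine (norm_gL_zero_le hs hkN).trans ?_
    exact div_le_self (by positivity) (by exact_mod_cast hkN)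
  · refine (norm_gL_pos_le hs k hk hkN).trans ?_
    rw [mul_comm (2:ℝ) (|Real.sin (2 * Real.pi * ε)|⁻¹)]
    refine mul_le_mul_of_nonneg_left ?_ hκ
    have h1 : (1:ℝ) ≤ k := by exact_mod_cast hk
    have h2 : (1:ℝ) ≤ N - k := by
      have : ((k + 1 : ℕ) : ℝ) ≤ N := by exact_mod_cast hkN
      push_cast at this; linarith
    have h3 : 1 / (k:ℝ) ≤ 1 := by rw [div_le_one (by linarith)]; exact h1
    have h4 : 1 / ((N:ℝ) - k) ≤ 1 := by rw [div_le_one (by linarith)]; exact h2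
    linarith

/-- The grid coefficients vary slowly away from multiples of `N`. -/
lemma gL_step (hs : Real.sin (2 * Real.pi * ε) ≠ 0) (hN : 2 ≤ N) (m : ℤ) :
    ‖gL N ε (m + 1) - gL N ε m‖ * (1 + nd N m) ^ 2 ≤ 16 * |Real.sin (2 * Real.pi * ε)|⁻¹ := by
  have hN0 : 0 < N := by omega
  set κ := |Real.sin (2 * Real.pi * ε)|⁻¹ with hκdef
  have hκ : 0 ≤ κ := by positivity
  have main : ∀ k : ℕ, k < N →
      ‖gL N ε ((k : ℤ) + 1) - gL N ε k‖ * (1 + nd N k) ^ 2 ≤ 16 * κ := by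
    intro k hk
    have hn0 := nd_nonneg N k
    have hn1 : nd N k ≤ k := by simpa using nd_le_abs hN0 (k : ℤ)
    have hkN : (k : ℝ) + 1 ≤ N := by exact_mod_cast hk
    have hn2 : nd N k ≤ N - k := by
      have := nd_le hN0 (k : ℤ) 1
      push_cast at this
      rw [mul_one, abs_of_nonpos (by linarith)] at this
      linarith
    by_cases hmid : 1 ≤ k ∧ k + 1 < N
    · obtain ⟨h1, h2⟩ := hmid
      have hb := norm_gL_pos_sub_le hs k h1 h2
      push_cast at hb
      have hk1 : (1:ℝ) ≤ k := by exact_mod_cast h1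
      have hk2 : (2:ℝ) ≤ N - k := by
        have : ((k + 2 : ℕ) : ℝ) ≤ N := by exact_mod_cast h2
        push_cast at this; linarith
      set d : ℝ := N - k with hd
      set x := nd N k
      have hx1 : (1 / (k:ℝ) - 1 / (k + 1)) * (1 + x) ^ 2 ≤ 2 := by
        rw [div_sub_div _ _ (by positivity) (by positivity), div_mul_eq_mul_div,
          div_le_iff₀ (by positivity)]
        nlinarith
      have hx2 : (1 / (d - 1) - 1 / d) * (1 + x) ^ 2 ≤ 5 := by
        have : 0 < d - 1 := by linarith
        rw [div_sub_div _ _ (by positivity) (by positivity), div_mul_eq_mul_div,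
          div_le_iff₀ (by positivity)]
        nlinarith [mul_nonneg (sub_nonneg.mpr hk2) (sub_nonneg.mpr hk2)]
      calc _ ≤ κ * ((1 / k - 1 / (k + 1)) + (1 / (d - 1) - 1 / d)) * (1 + x) ^ 2 := by
            gcongr
        _ = κ * ((1 / (k:ℝ) - 1 / (k + 1)) * (1 + x) ^ 2 + (1 / (d - 1) - 1 / d) * (1 + x) ^ 2) := by
            ring
        _ ≤ κ * (2 + 5) := by gcongr
        _ ≤ 16 * κ := by linarith
    · have hx : nd N k ≤ 1 := by
        rcases Nat.eq_zero_or_pos k with rfl | h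
        · simp at hn1; simp; linarith
        · have : k + 1 = N := by omega
          have : (k : ℝ) + 1 = N := by exact_mod_cast this
          linarith
      have hb1 := norm_gL_le_two hs k hk
      have hb2 : ‖gL N ε ((k : ℤ) + 1)‖ ≤ 2 * κ := by
        rcases Nat.lt_or_ge (k + 1) N with h | h
        · have := norm_gL_le_two hs (k + 1) h
          push_cast at this
          exact this
        · have hk1 : (k : ℤ) + 1 = 0 + N * 1 := by omega
          rw [hk1, gL, gam_add_mul _ hN0, norm_mul, norm_ee, one_mul]
          exact norm_gL_le_two hs 0 hN0
      have h4 : ‖gL N ε ((k : ℤ) + 1) - gL N ε k‖ ≤ 4 * κ :=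
        (norm_sub_le _ _).trans (by linarith)
      calc _ ≤ 4 * κ * (1 + 1) ^ 2 := by gcongr
        _ = 16 * κ := by ring
  have hN' : (0:ℤ) < N := by exact_mod_cast hN0
  obtain ⟨k, hk⟩ : ∃ k : ℕ, (k : ℤ) = m % N :=
    ⟨(m % N).toNat, Int.toNat_of_nonneg (Int.emod_nonneg _ (by omega))⟩
  have hkN : k < N := by have := Int.emod_lt_of_pos m hN'; omega
  have hm : m = k + N * (m / N) := by rw [hk]; exact (Int.emod_add_mul_ediv m N).symm
  rw [hm, show (k : ℤ) + N * (m / N) + 1 = k + 1 + N * (m / N) by ring, gL, gL,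
    gam_add_mul _ hN0, gam_add_mul _ hN0, ← mul_sub, norm_mul, norm_ee, one_mul, nd_add_mul]
  exact main k hkN

lemma gL_diff_nat (hs : Real.sin (2 * Real.pi * ε) ≠ 0) (hN : 2 ≤ N) (m : ℤ) (q : ℕ) :
    ‖gL N ε (m + q) - gL N ε m‖ * (1 + nd N m) ^ 2 ≤
      16 * |Real.sin (2 * Real.pi * ε)|⁻¹ * (1 + q) ^ 3 := by
  set κ := |Real.sin (2 * Real.pi * ε)|⁻¹ with hκdef
  have hκ : 0 ≤ κ := by positivity
  induction q with
  | zero => simpa using hκ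
  | succ q ih =>
    have h1 := gL_step hs hN (m + q)
    have h2 := one_add_nd_le (N := N) (by omega) m q
    rw [Int.cast_natCast, Nat.abs_cast] at h2
    have hn := nd_nonneg N m
    have hn' := nd_nonneg N (m + q)
    have h3 : ‖gL N ε (m + q + 1) - gL N ε (m + q)‖ * (1 + nd N m) ^ 2 ≤
        16 * κ * (1 + q) ^ 2 := by
      calc _ ≤ ‖gL N ε (m + q + 1) - gL N ε (m + q)‖ * ((1 + q) * (1 + nd N (m + q))) ^ 2 := by
            gcongr
        _ = (‖gL N ε (m + q + 1) - gL N ε (m + q)‖ * (1 + nd N (m + q)) ^ 2) * (1 + q) ^ 2 := by ring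
        _ ≤ _ := by gcongr
    have e : m + ((q + 1 : ℕ) : ℤ) = m + q + 1 := by push_cast; ring
    rw [e]
    have h4 : ‖gL N ε (m + q + 1) - gL N ε m‖ ≤ ‖gL N ε (m + q + 1) - gL N ε (m + q)‖ +
      ‖gL N ε (m + q) - gL N ε m‖ := norm_sub_le_norm_sub_add_norm_sub _ _ _
    calc _ ≤ (‖gL N ε (m + q + 1) - gL N ε (m + q)‖ +
          ‖gL N ε (m + q) - gL N ε m‖) * (1 + nd N m) ^ 2 := by gcongr
      _ ≤ 16 * κ * (1 + q) ^ 2 + 16 * κ * (1 + q) ^ 3 := by rw [add_mul]; exact add_le_add h3 ih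
      _ ≤ _ := by
        push_cast
        have hq : (0:ℝ) ≤ q := Nat.cast_nonneg q
        have : (1 + (q:ℝ)) ^ 2 + (1 + (q:ℝ)) ^ 3 ≤ (1 + ((q:ℝ) + 1)) ^ 3 := by nlinarith
        calc _ = 16 * κ * ((1 + (q:ℝ)) ^ 2 + (1 + (q:ℝ)) ^ 3) := by ring
          _ ≤ _ := by gcongr

/-- Telescoping `gL_step`: differences of grid coefficients gain two orders of decay, at a polynomial
cost in the frequency shift. -/
lemma gL_diff (hs : Real.sin (2 * Real.pi * ε) ≠ 0) (hN : 2 ≤ N) (m q : ℤ) :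
    ‖gL N ε (m + q) - gL N ε m‖ * (1 + nd N m) ^ 2 ≤
      16 * |Real.sin (2 * Real.pi * ε)|⁻¹ * (1 + |(q : ℝ)|) ^ 5 := by
  set κ := |Real.sin (2 * Real.pi * ε)|⁻¹ with hκdef
  have hκ : 0 ≤ κ := by positivity
  rcases le_total 0 q with h | h
  · lift q to ℕ using h
    rw [Int.cast_natCast, Nat.abs_cast]
    refine (gL_diff_nat hs hN m q).trans ?_
    gcongr
    · exact le_add_of_nonneg_right (Nat.cast_nonneg q)
    · norm_num
  · obtain ⟨s, rfl⟩ : ∃ s : ℕ, q = -(s : ℤ) := ⟨q.natAbs, by omega⟩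
    have h1 := gL_diff_nat hs hN (m + -(s : ℤ)) s
    rw [neg_add_cancel_right, norm_sub_rev] at h1
    have h2 := one_add_nd_le (N := N) (by omega) m (-(s : ℤ))
    have hn := nd_nonneg N m
    simp only [Int.cast_neg, Int.cast_natCast, abs_neg, Nat.abs_cast] at h2 ⊢
    calc _ ≤ ‖gL N ε (m + -(s : ℤ)) - gL N ε m‖ * ((1 + s) * (1 + nd N (m + -(s : ℤ)))) ^ 2 := by
          gcongr
      _ = (‖gL N ε (m + -(s : ℤ)) - gL N ε m‖ * (1 + nd N (m + -(s : ℤ))) ^ 2) * (1 + s) ^ 2 := by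
          ring
      _ ≤ (16 * κ * (1 + s) ^ 3) * (1 + s) ^ 2 := by gcongr
      _ = _ := by ring

end gamma

/-! ### Lower bounds and limits of the grid coefficients -/

section gamma
variable {N : ℕ} {ε : ℝ}

lemma gL_neg (n : ℤ) : gL N ε (-n) = (starRingEnd ℂ) (gL N ε n) := by
  simp only [gL, gam, map_mul, map_div₀, map_one, map_natCast, map_sum, ee_conj,
    Complex.conj_ofReal]

lemma ra_conj (r : ℝ) : ra N (-ε) r = (starRingEnd ℂ) (ra N ε r) := by
  simp [ra, ee_neg_right, ee_conj]

/-- A square root of `e^{2π i ε}` rotates the resolvent to one whose real part has a fixed sign. -/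
lemma re_rot_ra (r : ℝ) :
    (Complex.exp ((Real.pi * ε : ℝ) * I) * ra N ε r).re =
      Real.cos (Real.pi * ε) * ((1 - r ^ N) / normSq (1 - (r : ℂ) ^ N * ee 1 ε)) := by
  set w := Complex.exp ((Real.pi * ε : ℝ) * I) with hw
  have hconj : (starRingEnd ℂ) w = Complex.exp (-((Real.pi * ε : ℝ) * I)) := by
    rw [hw, ← Complex.exp_conj]; simp
  have hwz : w * ee (-1) ε = (starRingEnd ℂ) w := by
    rw [hconj, hw, ee, ← Complex.exp_add]; congr 1; push_cast; ring
  have hre : w.re = Real.cos (Real.pi * ε) := by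
    rw [hw, Complex.exp_ofReal_mul_I_re]
  rw [ra, Complex.inv_def, ← mul_assoc]
  have h2 : w * (starRingEnd ℂ) (1 - (r : ℂ) ^ N * ee 1 ε) = w - ((r ^ N : ℝ) : ℂ) * (starRingEnd ℂ) w := by
    simp only [map_sub, map_one, map_mul, map_pow, Complex.conj_ofReal, ee_conj]
    rw [← hwz]; push_cast; ring
  rw [h2, mul_comm, Complex.re_ofReal_mul, Complex.sub_re, Complex.re_ofReal_mul, Complex.conj_re,
    hre]
  ring

/-- Lower bound of the order of the exact coefficients `1/k`; after the rotation of `re_rot_ra` both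
terms of the integral representation contribute with the same sign. -/
lemma gL_lower_pos (hs : Real.sin (2 * Real.pi * ε) ≠ 0) (k : ℕ) (hk : 1 ≤ k) (hkN : k < N) :
    |Real.cos (Real.pi * ε)| / (8 * k) ≤ ‖gL N ε k‖ := by
  set w := Complex.exp ((Real.pi * ε : ℝ) * I) with hw
  have hwn : ‖w‖ = 1 := by rw [hw, Complex.norm_exp_ofReal_mul_I]
  have hconj : (starRingEnd ℂ) w = Complex.exp (-((Real.pi * ε : ℝ) * I)) := by
    rw [hw, ← Complex.exp_conj]; simp
  have hwz : w * ee (-1) ε = (starRingEnd ℂ) w := by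
    rw [hconj, hw, ee, ← Complex.exp_add]; congr 1; push_cast; ring
  have c1 := continuous_ra (N := N) hs
  have c2 := continuous_ra (N := N) (sin_neg_ne hs)
  set g : ℝ → ℝ := fun r => (r ^ (k - 1) + r ^ (N - 1 - k)) *
    ((1 - r ^ N) / normSq (1 - (r : ℂ) ^ N * ee 1 ε)) with hg
  have hns : ∀ r : ℝ, normSq (1 - (r : ℂ) ^ N * ee 1 ε) ≠ 0 := by
    intro r
    have := one_sub_ne hs (r ^ N)
    push_cast at this
    simpa [normSq_eq_zero] using this
  have hgc : Continuous g := by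
    refine Continuous.mul (by fun_prop) (Continuous.div (by fun_prop) ?_ hns)
    exact Complex.continuous_normSq.comp (by fun_prop)
  have h1 : (w * (-gL N ε k)).re = Real.cos (Real.pi * ε) * ∫ r in (0:ℝ)..1, g r := by
    rw [gL_pos hs k hk hkN, neg_neg, ← intervalIntegral.integral_const_mul,
      ← intervalIntegral.integral_const_mul]
    have hcont : Continuous (fun r : ℝ => w * ((r : ℂ) ^ (k - 1) * ra N ε r +
      (r : ℂ) ^ (N - 1 - k) * (ee (-1) ε * ra N (-ε) r))) := by fun_prop
    have h3 := Complex.reCLM.intervalIntegral_comp_comm (hcont.intervalIntegrable (μ := volume) 0 1)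
    simp only [Complex.reCLM_apply] at h3
    rw [← h3]
    congr 1; ext r
    have h4 : w * ((r : ℂ) ^ (k - 1) * ra N ε r +
      (r : ℂ) ^ (N - 1 - k) * (ee (-1) ε * ra N (-ε) r)) =
      ((r ^ (k - 1) : ℝ) : ℂ) * (w * ra N ε r) +
      ((r ^ (N - 1 - k) : ℝ) : ℂ) * (starRingEnd ℂ) (w * ra N ε r) := by
      rw [map_mul, ← hwz, ← ra_conj]; push_cast; ring
    rw [h4, Complex.add_re, Complex.re_ofReal_mul, Complex.re_ofReal_mul, Complex.conj_re,
      re_rot_ra, hg]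
    ring
  have h2 : 1 / (8 * (k : ℝ)) ≤ ∫ r in (0:ℝ)..1, g r := by
    have h3 : ∫ r in (0:ℝ)..1, (1 / 4) * (r ^ (k - 1) - r ^ (N + k - 1)) ≤ ∫ r in (0:ℝ)..1, g r := by
      refine intervalIntegral.integral_mono_on zero_le_one
        (Continuous.intervalIntegrable (by fun_prop) _ _) (hgc.intervalIntegrable _ _) ?_
      intro r hr
      have hn4 : normSq (1 - (r : ℂ) ^ N * ee 1 ε) ≤ 4 := by
        have hrN : r ^ N ≤ 1 := pow_le_one₀ hr.1 hr.2
        have : ‖1 - (r : ℂ) ^ N * ee 1 ε‖ ≤ 2 := by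
          refine (norm_sub_le _ _).trans ?_
          rw [norm_mul, norm_ee, norm_pow, Complex.norm_real, Real.norm_eq_abs, abs_of_nonneg hr.1]
          simp only [norm_one]; linarith
        rw [Complex.normSq_eq_norm_sq]
        nlinarith [norm_nonneg (1 - (r : ℂ) ^ N * ee 1 ε)]
      have hnp : 0 < normSq (1 - (r : ℂ) ^ N * ee 1 ε) :=
        lt_of_le_of_ne (normSq_nonneg _) (hns r).symm
      have hr1 : 0 ≤ 1 - r ^ N := by linarith [pow_le_one₀ (n := N) hr.1 hr.2]
      have ha : 0 ≤ r ^ (k - 1) := pow_nonneg hr.1 _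
      have hb : 0 ≤ r ^ (N - 1 - k) := pow_nonneg hr.1 _
      have e : r ^ (N + k - 1) = r ^ (k - 1) * r ^ N := by rw [← pow_add]; congr 1; omega
      have h5 : (1 - r ^ N) / 4 ≤ (1 - r ^ N) / normSq (1 - (r : ℂ) ^ N * ee 1 ε) := by
        gcongr
      have h6 : 0 ≤ (1 - r ^ N) / 4 := by positivity
      calc (1 / 4) * (r ^ (k - 1) - r ^ (N + k - 1)) = r ^ (k - 1) * ((1 - r ^ N) / 4) := by
            rw [e]; ring
        _ ≤ (r ^ (k - 1) + r ^ (N - 1 - k)) * ((1 - r ^ N) / 4) := by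
            gcongr; linarith
        _ ≤ _ := mul_le_mul_of_nonneg_left h5 (by positivity)
    refine le_trans ?_ h3
    have ci : ∀ n : ℕ, IntervalIntegrable (fun r : ℝ => r ^ n) volume 0 1 := fun n =>
      Continuous.intervalIntegrable (by fun_prop) _ _
    rw [intervalIntegral.integral_const_mul, intervalIntegral.integral_sub (ci _) (ci _),
      integral_pow_unit, integral_pow_unit]
    have e1 : ((k - 1 : ℕ) : ℝ) + 1 = k := by
      rw [← Nat.cast_add_one]; congr 1; omega
    have e2 : ((N + k - 1 : ℕ) : ℝ) + 1 = N + k := by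
      rw [← Nat.cast_add_one, ← Nat.cast_add]; congr 1; omega
    rw [e1, e2]
    have hk0 : (0:ℝ) < k := by exact_mod_cast hk
    have hkN' : (k:ℝ) ≤ N := by exact_mod_cast hkN.le
    have : 1 / ((N : ℝ) + k) ≤ 1 / (k + k) := by gcongr
    have e3 : 1 / (8 * (k:ℝ)) = 1 / 4 * (1 / k - 1 / (k + k)) := by field_simp; ring
    rw [e3]
    gcongr
  have h3 : ‖gL N ε k‖ = ‖w * (-gL N ε k)‖ := by rw [norm_mul, hwn, norm_neg, one_mul]
  rw [h3]
  refine le_trans ?_ (Complex.abs_re_le_norm _)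
  rw [h1, abs_mul, div_eq_mul_one_div]
  have : 0 ≤ 1 / (8 * (k : ℝ)) := by positivity
  rw [abs_of_nonneg (this.trans h2)]
  gcongr

lemma gL_lower (hs : Real.sin (2 * Real.pi * ε) ≠ 0) (k : ℤ) (hk : k ≠ 0) (hkN : |k| < N) :
    |Real.cos (Real.pi * ε)| / (8 * |(k : ℝ)|) ≤ ‖gL N ε k‖ := by
  rcases lt_or_gt_of_ne hk with h | h
  · obtain ⟨s, rfl⟩ : ∃ s : ℕ, k = -(s : ℤ) := ⟨k.natAbs, by omega⟩
    rw [abs_neg, Nat.abs_cast] at hkN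
    rw [gL_neg, RCLike.norm_conj]
    have := gL_lower_pos (N := N) hs s (by omega) (by omega)
    simpa using this
  · obtain ⟨s, rfl⟩ : ∃ s : ℕ, k = (s : ℤ) := ⟨k.natAbs, by omega⟩
    rw [Nat.abs_cast] at hkN
    have := gL_lower_pos (N := N) hs s (by omega) (by omega)
    simpa using this

lemma gL_sub_ell_pos (hs : Real.sin (2 * Real.pi * ε) ≠ 0) (k : ℕ) (hk : 1 ≤ k) (hkN : k < N) :
    ‖gL N ε k - ell k‖ ≤ |Real.sin (2 * Real.pi * ε)|⁻¹ * (2 / ((N : ℝ) - k)) := by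
  have c1 := continuous_ra (N := N) hs
  have c2 := continuous_ra (N := N) (sin_neg_ne hs)
  set κ := |Real.sin (2 * Real.pi * ε)|⁻¹
  have hell : ell k = -∫ r in (0:ℝ)..1, (r : ℂ) ^ (k - 1) := by
    have : ∀ r : ℝ, (r : ℂ) ^ (k - 1) = ((r ^ (k - 1) : ℝ) : ℂ) := by intro r; push_cast; rfl
    simp only [this]
    rw [intervalIntegral.integral_ofReal, integral_pow_unit]
    have e1 : ((k - 1 : ℕ) : ℝ) + 1 = k := by
      rw [← Nat.cast_add_one]; congr 1; omega
    rw [e1, ell]; simp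
  rw [hell, gL_pos hs k hk hkN, ← neg_add', norm_neg, ← sub_eq_add_neg,
    ← intervalIntegral.integral_sub (Continuous.intervalIntegrable (by fun_prop) _ _)
    (Continuous.intervalIntegrable (by fun_prop) _ _)]
  have hb := norm_integral_le_of_le (g := fun r : ℝ => (r : ℂ) ^ (k - 1) * ra N ε r +
    (r : ℂ) ^ (N - 1 - k) * (ee (-1) ε * ra N (-ε) r) - (r : ℂ) ^ (k - 1))
    (G := fun r => κ * r ^ (N - 1 - k) + κ * r ^ (N - 1 - k))
    (by fun_prop) (by
      intro r hr
      have hz := one_sub_ne hs (r ^ N)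
      push_cast at hz
      have e : (r : ℂ) ^ (k - 1) * ra N ε r +
        (r : ℂ) ^ (N - 1 - k) * (ee (-1) ε * ra N (-ε) r) - (r : ℂ) ^ (k - 1) =
        (r : ℂ) ^ (N + k - 1) * (ee 1 ε * ra N ε r) +
        (r : ℂ) ^ (N - 1 - k) * (ee (-1) ε * ra N (-ε) r) := by
        have e2 : (r : ℂ) ^ (N + k - 1) = r ^ (k - 1) * r ^ N := by
          rw [← pow_add]; congr 1; omega
        have : ra N ε r - 1 = (r : ℂ) ^ N * ee 1 ε * ra N ε r := by
          rw [ra]; field_simp; ring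
        rw [e2]
        linear_combination (r : ℂ) ^ (k - 1) * this
      rw [e]
      refine (norm_add_le _ _).trans ?_
      simp only [norm_mul, norm_ee, norm_pow, Complex.norm_real, Real.norm_eq_abs,
        abs_of_nonneg hr.1, one_mul]
      have h1 := norm_ra_le (N := N) hs r
      have h2 := norm_ra_le' (N := N) hs r
      have h3 : r ^ (N + k - 1) ≤ r ^ (N - 1 - k) :=
        pow_le_pow_of_le_one hr.1 hr.2 (by omega)
      have h4 : 0 ≤ r ^ (N - 1 - k) := pow_nonneg hr.1 _
      have h5 : 0 ≤ r ^ (N + k - 1) := pow_nonneg hr.1 _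
      have a1 : r ^ (N + k - 1) * ‖ra N ε r‖ ≤ r ^ (N - 1 - k) * κ := by gcongr
      have a2 : r ^ (N - 1 - k) * ‖ra N (-ε) r‖ ≤ r ^ (N - 1 - k) * κ := by gcongr
      linarith)
  refine hb.trans (le_of_eq ?_)
  rw [intervalIntegral.integral_add (Continuous.intervalIntegrable (by fun_prop) _ _)
    (Continuous.intervalIntegrable (by fun_prop) _ _), intervalIntegral.integral_const_mul,
    integral_pow_unit]
  have h2 : ((N - 1 - k : ℕ) : ℝ) + 1 = N - k := by
    rw [← Nat.cast_add_one, ← Nat.cast_sub hkN.le]; congr 1; omega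
  rw [h2]; ring

/-- The grid coefficients converge to the Fourier coefficients. -/
lemma gL_tendsto (hs : Real.sin (2 * Real.pi * ε) ≠ 0) (n : ℤ) :
    Tendsto (fun N : ℕ => gL N ε n) atTop (𝓝 (ell n)) := by
  have hpos : ∀ k : ℕ, 1 ≤ k → Tendsto (fun N : ℕ => gL N ε k) atTop (𝓝 (ell k)) := by
    intro k hk
    rw [tendsto_iff_norm_sub_tendsto_zero]
    have hlim : Tendsto (fun N : ℕ => |Real.sin (2 * Real.pi * ε)|⁻¹ * (2 / ((N : ℝ) - k))) atTop
        (𝓝 0) := by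
      have h1 : Tendsto (fun N : ℕ => (N : ℝ) - k) atTop atTop :=
        tendsto_atTop_add_const_right _ _ tendsto_natCast_atTop_atTop
      have := (h1.const_div_atTop 2).const_mul (|Real.sin (2 * Real.pi * ε)|⁻¹)
      simpa using this
    refine squeeze_zero' (Eventually.of_forall fun _ => norm_nonneg _) ?_ hlim
    filter_upwards [eventually_gt_atTop k] with N hN
    exact gL_sub_ell_pos hs k hk hN
  rcases lt_trichotomy n 0 with h | h | h
  · obtain ⟨s, rfl⟩ : ∃ s : ℕ, n = -(s : ℤ) := ⟨n.natAbs, by omega⟩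
    have h1 := (Complex.continuous_conj.tendsto _).comp (hpos s (by omega))
    simp only [gL_neg]
    have e : ell (-(s : ℤ)) = (starRingEnd ℂ) (ell s) := by simp [ell]
    rw [e]
    exact h1
  · subst h
    rw [tendsto_iff_norm_sub_tendsto_zero]
    have hlim : Tendsto (fun N : ℕ => 2 * |Real.sin (2 * Real.pi * ε)|⁻¹ / (N : ℝ)) atTop
        (𝓝 0) := tendsto_natCast_atTop_atTop.const_div_atTop _
    refine squeeze_zero' (Eventually.of_forall fun _ => norm_nonneg _) ?_ hlim
    filter_upwards [eventually_gt_atTop 0] with N hN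
    have := norm_gL_zero_le hs hN
    simpa [ell] using this
  · obtain ⟨s, rfl⟩ : ∃ s : ℕ, n = (s : ℤ) := ⟨n.natAbs, by omega⟩
    exact hpos s (by omega)

/-- For the constant kernel the grid coefficients reduce to an aliased delta. -/
lemma gam_one (hN : 0 < N) (n : ℤ) :
    gam (fun _ => 1) N ε n = if (N : ℤ) ∣ n then ee (-n) (ε / N) else 0 := by
  have hN0 : (N : ℂ) ≠ 0 := by exact_mod_cast hN.ne'
  simp only [gam, one_mul, sum_ee_grid hN, dvd_neg]
  split_ifs
  · field_simp
  · simp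

end gamma

/-! ### Cell averages of convolution kernels -/

lemma sum_range_shift {N : ℕ} {G : ℤ → ℂ} (hG : ∀ l, G (l + N) = G l) (j : ℤ) :
    ∑ i ∈ Finset.range N, G (i + j) = ∑ i ∈ Finset.range N, G i := by
  have step : ∀ j : ℤ, ∑ i ∈ Finset.range N, G (i + (j + 1)) = ∑ i ∈ Finset.range N, G (i + j) := by
    intro j
    have h1 := Finset.sum_range_succ (fun i : ℕ => G (i + j)) N
    have h2 := Finset.sum_range_succ' (fun i : ℕ => G (i + j)) N
    rw [h1] at h2
    have e : G ((N : ℤ) + j) = G (((0 : ℕ) : ℤ) + j) := by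
      rw [add_comm (N : ℤ), hG]; simp
    simp only [e] at h2
    have h3 := add_right_cancel h2
    rw [h3]
    refine Finset.sum_congr rfl fun i _ => ?_
    congr 1; push_cast; ring
  induction j using Int.induction_on with
  | zero => simp
  | succ j ih => rw [step, ih]
  | pred j ih =>
    rw [← ih, ← step (-(j : ℤ) - 1)]
    simp

/-- Convolution kernels admitted below: 1-periodic and locally integrable. -/
structure PInt (f : ℝ → ℂ) : Prop where
  per : Function.Periodic f 1
  int : ∀ a b, IntervalIntegrable f volume a b

lemma pInt_Lf : PInt (fun x => (Lf x : ℂ)) :=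
  ⟨fun x => by simp [Lf_add_one], intervalIntegrable_Lf_ofReal⟩

lemma pInt_one : PInt (fun _ => (1 : ℂ)) :=
  ⟨fun _ => rfl, fun _ _ => _root_.intervalIntegrable_const⟩

/-- The `L¹` norm over a period. -/
noncomputable def L1 (f : ℝ → ℂ) : ℝ := ∫ x in (0:ℝ)..1, ‖f x‖

lemma L1_nonneg (f : ℝ → ℂ) : 0 ≤ L1 f :=
  intervalIntegral.integral_nonneg zero_le_one fun _ _ => norm_nonneg _

lemma PInt.int_comp {f : ℝ → ℂ} (hf : PInt f) (c a b : ℝ) :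
    IntervalIntegrable (fun t => f (c - t)) volume a b := by
  have := (hf.int (c - a) (c - b)).comp_sub_left c
  simpa using this

lemma PInt.mul_ee {f : ℝ → ℂ} (hf : PInt f) (n : ℤ) : PInt (fun x => ee n x * f x) :=
  ⟨fun x => by simp only [ee_add_one, hf.per x],
    fun a b => (hf.int a b).continuousOn_mul (by fun_prop)⟩

/-- Integrals of a translated kernel against a character depend continuously on the translation. -/
lemma PInt.continuous_conv {f : ℝ → ℂ} (hf : PInt f) (q : ℤ) (a b : ℝ) :
    Continuous (fun s => ∫ t in a..b, ee q t * f (s - t)) := by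
  have h1 : ∀ s, ∫ t in a..b, ee q t * f (s - t) =
      ee q s * ((∫ u in (0:ℝ)..(s - a), ee (-q) u * f u) - ∫ u in (0:ℝ)..(s - b), ee (-q) u * f u) := by
    intro s
    have h2 := intervalIntegral.integral_comp_sub_left (a := a) (b := b)
      (fun u => ee q s * (ee (-q) u * f u)) s
    have hi := (hf.mul_ee (-q)).int
    rw [intervalIntegral.integral_interval_sub_left (hi _ _) (hi _ _),
      ← intervalIntegral.integral_const_mul, ← h2]
    congr 1; ext t
    rw [← mul_assoc, ← ee_neg_right, ← ee_add_right]
    congr 2; ring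
  simp only [h1]
  have hp := intervalIntegral.continuous_primitive (fun a b => (hf.mul_ee (-q)).int a b) 0
  have hpa : Continuous fun s => ∫ u in (0:ℝ)..(s - a), ee (-q) u * f u :=
    hp.comp (continuous_id.sub continuous_const)
  have hpb : Continuous fun s => ∫ u in (0:ℝ)..(s - b), ee (-q) u * f u :=
    hp.comp (continuous_id.sub continuous_const)
  exact (continuous_ee q).mul (hpa.sub hpb)

/-- Shifted cells of width `1/N` tile one period. -/
lemma sum_cells {E : Type*} [NormedAddCommGroup E] [NormedSpace ℝ E] {g : ℝ → E}
    (hp : Function.Periodic g 1)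
    (hi : ∀ a b, IntervalIntegrable g volume a b) {N : ℕ} (hN : 0 < N) (ε σ : ℝ) :
    ∑ l ∈ Finset.range N, ∫ τ in (0:ℝ)..(1 / N), g (((l : ℝ) + ε) / N + σ - τ) =
      ∫ x in (0:ℝ)..1, g x := by
  have hN0 : (N : ℝ) ≠ 0 := by exact_mod_cast hN.ne'
  let P : ℕ → ℝ := fun l => ((l : ℝ) + ε - 1) / N + σ
  have h1 : ∀ l : ℕ, ∫ τ in (0:ℝ)..(1 / N), g (((l : ℝ) + ε) / N + σ - τ) =
      ∫ x in (P l)..(P (l + 1)), g x := by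
    intro l
    rw [intervalIntegral.integral_comp_sub_left g]
    congr 1
    · simp only [P]; ring
    · simp only [P]; push_cast; ring
  simp only [h1]
  rw [intervalIntegral.sum_integral_adjacent_intervals (fun k _ => hi _ _)]
  have e : P N = P 0 + 1 := by
    simp only [P]; push_cast; field_simp; ring
  rw [e, hp.intervalIntegral_add_eq (P 0) 0, zero_add]

section Gamma

/-- Integral of the mode `e_p(σ) e_q(τ) f` over the cell pair with index difference `l`. -/
noncomputable def Ycell (f : ℝ → ℂ) (N : ℕ) (ε : ℝ) (p q l : ℤ) : ℂ :=
  ∫ σ in (0:ℝ)..(1 / N), ∫ τ in (0:ℝ)..(1 / N), ee p σ * (ee q τ * f (((l : ℝ) + ε) / N + σ - τ))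

/-- Grid coefficient of the cell-averaged mode. -/
noncomputable def Gam (f : ℝ → ℂ) (N : ℕ) (ε : ℝ) (p q n : ℤ) : ℂ :=
  ∑ l ∈ Finset.range N, ee (-n) (((l : ℝ) + ε) / N) * Ycell f N ε p q l

variable {f : ℝ → ℂ} {N : ℕ} {ε : ℝ}

lemma Gam_eq (hf : PInt f) (p q n : ℤ) :
    Gam f N ε p q n = ∫ σ in (0:ℝ)..(1 / N), ∑ l ∈ Finset.range N,
      ∫ τ in (0:ℝ)..(1 / N), ee (-n) (((l : ℝ) + ε) / N) * (ee p σ * (ee q τ *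
        f (((l : ℝ) + ε) / N + σ - τ))) := by
  have hc : ∀ l : ℕ, Continuous (fun σ : ℝ => ∫ τ in (0:ℝ)..(1 / N),
      ee (-n) (((l : ℝ) + ε) / N) * (ee p σ * (ee q τ * f (((l : ℝ) + ε) / N + σ - τ)))) := by
    intro l
    simp only [intervalIntegral.integral_const_mul]
    have := (hf.continuous_conv q 0 (1 / N)).comp
      (continuous_const.add continuous_id : Continuous fun σ : ℝ => ((l : ℝ) + ε) / N + σ)
    exact continuous_const.mul ((continuous_ee p).mul this)
  rw [intervalIntegral.integral_finsetSum (fun l _ => (hc l).intervalIntegrable _ _), Gam]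
  refine Finset.sum_congr rfl fun l _ => ?_
  rw [Ycell, ← intervalIntegral.integral_const_mul]
  congr 1; ext σ
  rw [← intervalIntegral.integral_const_mul]
  simp

lemma L1_cells (hf : PInt f) (hN : 0 < N) (σ : ℝ) :
    ∑ l ∈ Finset.range N, ∫ τ in (0:ℝ)..(1 / N), ‖f (((l : ℝ) + ε) / N + σ - τ)‖ = L1 f :=
  sum_cells (g := fun x => ‖f x‖) (fun x => by simp only [hf.per x]) (fun a b => (hf.int a b).norm)
    hN ε σ

lemma norm_sum_cells_le (hf : PInt f) (hN : 0 < N) (σ c : ℝ)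
    {G : ℕ → ℝ → ℂ} (hG : ∀ l τ, τ ∈ Set.Ioc (0:ℝ) (1 / N) →
      ‖G l τ‖ ≤ c * ‖f (((l : ℝ) + ε) / N + σ - τ)‖) :
    ‖∑ l ∈ Finset.range N, ∫ τ in (0:ℝ)..(1 / N), G l τ‖ ≤ c * L1 f := by
  rw [← L1_cells (ε := ε) hf hN σ, Finset.mul_sum]
  refine (norm_sum_le _ _).trans (Finset.sum_le_sum fun l _ => ?_)
  rw [← intervalIntegral.integral_const_mul]
  refine intervalIntegral.norm_integral_le_of_norm_le (by positivity)
    (Eventually.of_forall fun τ hτ => hG l τ hτ) ?_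
  exact ((hf.int_comp _ _ _).norm).const_mul c

lemma norm_Gam_le (hf : PInt f) (hN : 0 < N) (p q n : ℤ) :
    ‖(N : ℂ) * Gam f N ε p q n‖ ≤ L1 f := by
  have hN0 : (0:ℝ) < N := by exact_mod_cast hN
  have h := intervalIntegral.norm_integral_le_of_norm_le_const (a := (0:ℝ)) (b := 1 / N)
    (C := L1 f) (f := fun σ => ∑ l ∈ Finset.range N,
      ∫ τ in (0:ℝ)..(1 / N), ee (-n) (((l : ℝ) + ε) / N) * (ee p σ * (ee q τ *
        f (((l : ℝ) + ε) / N + σ - τ)))) (by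
    intro σ _
    have := norm_sum_cells_le (ε := ε) hf hN σ 1 (G := fun (l : ℕ) τ => ee (-n) (((l : ℝ) + ε) / N) *
      (ee p σ * (ee q τ * f (((l : ℝ) + ε) / N + σ - τ)))) (by
        intro l τ _
        simp [norm_ee])
    simpa using this)
  rw [← Gam_eq hf, sub_zero, abs_of_pos (by positivity)] at h
  rw [norm_mul, Complex.norm_natCast]
  calc _ ≤ (N : ℝ) * (L1 f * (1 / N)) := by gcongr
    _ = L1 f := by field_simp

/-- On a cell of width `1/N` the characters are constant up to `O(1/N)`, so the cell-averaged
coefficient is close to the Fourier coefficient of `f`. -/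
lemma Gam_sub_le (hf : PInt f) (hN : 0 < N) (p q n : ℤ) :
    ‖(N : ℂ) * Gam f N ε p q n - ∫ x in (0:ℝ)..1, f x * ee (-n) x‖ ≤
      2 * Real.pi * (|(p : ℝ)| + |(q : ℝ)| + |(n : ℝ)|) * (1 / N) * L1 f := by
  have hN0 : (0:ℝ) < N := by exact_mod_cast hN
  have hNc : (N : ℂ) ≠ 0 := by exact_mod_cast hN.ne'
  set J := ∫ x in (0:ℝ)..1, f x * ee (-n) x with hJ
  set c : ℝ := 2 * Real.pi * (|(p : ℝ)| + |(q : ℝ)| + |(n : ℝ)|) * (1 / N) with hc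
  have hJ2 : ∀ σ, J = ∑ l ∈ Finset.range N, ∫ τ in (0:ℝ)..(1 / N),
      ee (-n) (((l : ℝ) + ε) / N + σ - τ) * f (((l : ℝ) + ε) / N + σ - τ) := by
    intro σ
    rw [sum_cells (hf.mul_ee (-n)).per (hf.mul_ee (-n)).int hN]
    simp only [hJ, mul_comm]
  have hcont : Continuous (fun σ : ℝ => ∑ l ∈ Finset.range N,
      ∫ τ in (0:ℝ)..(1 / N), ee (-n) (((l : ℝ) + ε) / N) * (ee p σ * (ee q τ *
        f (((l : ℝ) + ε) / N + σ - τ)))) := by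
    refine continuous_finsetSum _ fun l _ => ?_
    simp only [intervalIntegral.integral_const_mul]
    have := (hf.continuous_conv q 0 (1 / N)).comp
      (continuous_const.add continuous_id : Continuous fun σ : ℝ => ((l : ℝ) + ε) / N + σ)
    exact continuous_const.mul ((continuous_ee p).mul this)
  have h := intervalIntegral.norm_integral_le_of_norm_le_const (a := (0:ℝ)) (b := 1 / N)
    (C := c * L1 f) (f := fun σ => (∑ l ∈ Finset.range N,
      ∫ τ in (0:ℝ)..(1 / N), ee (-n) (((l : ℝ) + ε) / N) * (ee p σ * (ee q τ *
        f (((l : ℝ) + ε) / N + σ - τ)))) - J) (by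
    intro σ hσ
    rw [Set.uIoc_of_le (by positivity)] at hσ
    rw [hJ2 σ, ← Finset.sum_sub_distrib]
    have e : ∀ l : ℕ, (∫ τ in (0:ℝ)..(1 / N), ee (-n) (((l : ℝ) + ε) / N) * (ee p σ * (ee q τ *
        f (((l : ℝ) + ε) / N + σ - τ)))) - (∫ τ in (0:ℝ)..(1 / N),
        ee (-n) (((l : ℝ) + ε) / N + σ - τ) * f (((l : ℝ) + ε) / N + σ - τ)) =
        ∫ τ in (0:ℝ)..(1 / N), (ee (-n) (((l : ℝ) + ε) / N) * (ee p σ * ee q τ) -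
          ee (-n) (((l : ℝ) + ε) / N + σ - τ)) * f (((l : ℝ) + ε) / N + σ - τ) := by
      intro l
      rw [← intervalIntegral.integral_sub]
      · congr 1; ext τ; ring
      · have := (hf.int_comp (((l : ℝ) + ε) / N + σ) 0 (1 / N)).continuousOn_mul
          (g := fun τ => ee (-n) (((l : ℝ) + ε) / N) * (ee p σ * ee q τ)) (by fun_prop)
        refine this.congr fun τ _ => ?_
        ring
      · exact (hf.int_comp (((l : ℝ) + ε) / N + σ) 0 (1 / N)).continuousOn_mul
          (g := fun τ => ee (-n) (((l : ℝ) + ε) / N + σ - τ)) (by fun_prop)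
    simp only [e]
    refine norm_sum_cells_le (ε := ε) hf hN σ c ?_
    intro l τ hτ
    rw [norm_mul]
    refine mul_le_mul_of_nonneg_right ?_ (norm_nonneg _)
    have e2 : ee (-n) (((l : ℝ) + ε) / N) * (ee p σ * ee q τ) - ee (-n) (((l : ℝ) + ε) / N + σ - τ) =
        ee (-n) (((l : ℝ) + ε) / N) * ((ee p σ - 1) * ee q τ + (ee q τ - 1) -
          (ee (-n) (σ - τ) - 1)) := by
      rw [add_sub_assoc, ee_add_right]; ring
    rw [e2, norm_mul, norm_ee, one_mul]
    have b1 := norm_ee_sub_one_le p σ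
    have b2 := norm_ee_sub_one_le q τ
    have b3 := norm_ee_sub_one_le (-n) (σ - τ)
    rw [Int.cast_neg, abs_neg] at b3
    have c1 : |σ| ≤ 1 / N := by rw [abs_of_pos hσ.1]; exact hσ.2
    have c2 : |τ| ≤ 1 / N := by rw [abs_of_pos hτ.1]; exact hτ.2
    have c3 : |σ - τ| ≤ 1 / N := by
      rw [abs_le]; constructor <;> linarith [hσ.1, hσ.2, hτ.1, hτ.2]
    have hpi := Real.pi_pos
    have d1 : 2 * Real.pi * |(p : ℝ)| * |σ| ≤ 2 * Real.pi * |(p : ℝ)| * (1 / N) := by gcongr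
    have d2 : 2 * Real.pi * |(q : ℝ)| * |τ| ≤ 2 * Real.pi * |(q : ℝ)| * (1 / N) := by gcongr
    have d3 : 2 * Real.pi * |(n : ℝ)| * |σ - τ| ≤ 2 * Real.pi * |(n : ℝ)| * (1 / N) := by gcongr
    calc _ ≤ ‖(ee p σ - 1) * ee q τ‖ + ‖ee q τ - 1‖ + ‖ee (-n) (σ - τ) - 1‖ :=
          (norm_sub_le _ _).trans (by gcongr; exact norm_add_le _ _)
      _ ≤ c := by
        rw [norm_mul, norm_ee, mul_one, hc]
        linarith)
  rw [intervalIntegral.integral_sub (hcont.intervalIntegrable _ _) (by simp), ← Gam_eq hf, sub_zero,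
    abs_of_pos (by positivity), intervalIntegral.integral_const, sub_zero] at h
  have e3 : (N : ℂ) * Gam f N ε p q n - J = N * (Gam f N ε p q n - ((1 / N : ℝ) • J)) := by
    rw [Complex.real_smul]; push_cast; field_simp
  rw [e3, norm_mul, Complex.norm_natCast]
  calc _ ≤ (N : ℝ) * (c * L1 f * (1 / N)) := by gcongr
    _ = _ := by field_simp

lemma Gam_tendsto (hf : PInt f) (p q n : ℤ) :
    Tendsto (fun N : ℕ => (N : ℂ) * Gam f N ε p q n) atTop
      (𝓝 (∫ x in (0:ℝ)..1, f x * ee (-n) x)) := by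
  rw [tendsto_iff_norm_sub_tendsto_zero]
  have hlim : Tendsto (fun N : ℕ => 2 * Real.pi * (|(p : ℝ)| + |(q : ℝ)| + |(n : ℝ)|) *
      (1 / (N : ℝ)) * L1 f) atTop (𝓝 0) := by
    have := (tendsto_one_div_atTop_nhds_zero_nat (𝕜 := ℝ)).const_mul
      (2 * Real.pi * (|(p : ℝ)| + |(q : ℝ)| + |(n : ℝ)|))
    simpa using this.mul_const (L1 f)
  refine squeeze_zero' (Eventually.of_forall fun _ => norm_nonneg _) ?_ hlim
  filter_upwards [eventually_gt_atTop 0] with N hN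
  exact Gam_sub_le hf hN p q n

end Gamma

/-! ### Grid transforms of kernels -/

lemma hasSum_of_eq {ι : Type*} {f g : ι → ℂ} {a b : ℂ} (h : HasSum g a) (hfg : ∀ x, f x = g x)
    (hab : b = a) : HasSum f b := by
  rw [hab, show f = g from funext hfg]; exact h

lemma fc2_summable {A : ℝ → ℝ → ℂ} (hA : SPK A) : Summable (fun x : ℤ × ℤ => ‖fc2 A x.1 x.2‖) := by
  simpa only [abs_norm] using (fc2_RD hA).summable0

lemma sg_shift {N : ℕ} (ε : ℝ) (i j : ℤ) :
    sg (1 / N) ε i = sg (1 / N) 0 j + (((i - j : ℤ) : ℝ) + ε) / N := by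
  simp only [sg]; push_cast; ring

lemma sg_succ (h ε : ℝ) (i : ℤ) : sg h ε (i + 1) = sg h ε i + h := by
  simp only [sg]; push_cast; ring

lemma sg_add_N {N : ℕ} (hN : 0 < N) (ε : ℝ) (i : ℤ) :
    sg (1 / N) ε (i + N) = sg (1 / N) ε i + 1 := by
  have hN0 : (N : ℝ) ≠ 0 := by exact_mod_cast hN.ne'
  simp only [sg]; push_cast; field_simp; ring

/-- Grid transform in the first variable of a single mode `e_p(s) e_q(t) f(s - t)`. -/
lemma mode_sum {f : ℝ → ℂ} (hf : Function.Periodic f 1) {N : ℕ} (hN : 0 < N) (ε : ℝ)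
    (k p q j : ℤ) :
    ∑ i ∈ Finset.range N, ee (-k) (sg (1 / N) ε i) * (ee p (sg (1 / N) ε i) * ee q (sg (1 / N) 0 j) *
      f (sg (1 / N) ε i - sg (1 / N) 0 j)) =
      N * gam f N ε (k - p) * ee (-(k - p - q)) (sg (1 / N) 0 j) := by
  have hN0 : (N : ℝ) ≠ 0 := by exact_mod_cast hN.ne'
  have hNc : (N : ℂ) ≠ 0 := by exact_mod_cast hN.ne'
  let G : ℤ → ℂ := fun l => f (((l : ℝ) + ε) / N) * ee (-(k - p)) (((l : ℝ) + ε) / N)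
  have hG : ∀ l, G (l + N) = G l := by
    intro l
    have e : (((l + N : ℤ) : ℝ) + ε) / N = ((l : ℝ) + ε) / N + 1 := by
      push_cast; field_simp; ring
    simp only [G, e, hf _, ee_add_one]
  have hs := sum_range_shift hG (-j)
  have e1 : (N : ℂ) * gam f N ε (k - p) = ∑ i ∈ Finset.range N, G i := by
    rw [gam, ← mul_assoc, mul_one_div_cancel hNc, one_mul]
    simp only [G, Int.cast_natCast]
  rw [e1, ← hs, Finset.sum_mul]
  refine Finset.sum_congr rfl fun i _ => ?_
  have e2 : sg (1 / N) ε i - sg (1 / N) 0 j = (((i + -j : ℤ) : ℝ) + ε) / N := by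
    rw [sg_shift ε i j]; push_cast; ring
  rw [e2]
  simp only [G]
  set u := (((i + -j : ℤ) : ℝ) + ε) / N
  have e3 : sg (1 / N) ε i = sg (1 / N) 0 j + u := by linarith
  rw [e3, ee_add_right, ee_add_right]
  set y := sg (1 / N) 0 j
  have e4 : ee (-(k - p - q)) y = ee (-k) y * ee p y * ee q y := by
    rw [← ee_add_left, ← ee_add_left]; congr 1; ring
  have e5 : ee (-(k - p)) u = ee (-k) u * ee p u := by
    rw [← ee_add_left]; congr 1; ring
  rw [e4, e5]; ring

/-- Grid transform of a kernel in its first variable, at the grid point `s_j` of the second. -/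
noncomputable def Tg (V : ℝ → ℝ → ℂ) (N : ℕ) (ε : ℝ) (k j : ℤ) : ℂ :=
  ∑ i ∈ Finset.range N, ee (-k) (sg (1 / N) ε i) * V (sg (1 / N) ε i) (sg (1 / N) 0 j)

lemma Tg_hasSum {A : ℝ → ℝ → ℂ} (hA : SPK A) {f : ℝ → ℂ} (hf : Function.Periodic f 1)
    {N : ℕ} (hN : 0 < N) (ε : ℝ) (k j : ℤ) :
    HasSum (fun x : ℤ × ℤ => fc2 A x.1 x.2 * (N * gam f N ε (k - x.1) *
      ee (-(k - x.1 - x.2)) (sg (1 / N) 0 j))) (Tg (fun s t => A s t * f (s - t)) N ε k j) := by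
  have h := hasSum_sum (s := Finset.range N) (f := fun (i : ℕ) (x : ℤ × ℤ) =>
    ee (-k) (sg (1 / N) ε i) * ((fc2 A x.1 x.2 * (ee x.1 (sg (1 / N) ε i) *
      ee x.2 (sg (1 / N) 0 j))) * f (sg (1 / N) ε i - sg (1 / N) 0 j)))
    (a := fun i : ℕ => ee (-k) (sg (1 / N) ε i) * (A (sg (1 / N) ε i) (sg (1 / N) 0 j) *
      f (sg (1 / N) ε i - sg (1 / N) 0 j)))
    (fun i _ => ((hasSum_fc2 hA _ _).mul_right _).mul_left _)
  refine hasSum_of_eq h (fun x => ?_) rfl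
  rw [← mode_sum hf hN ε k x.1 x.2 j, Finset.mul_sum]
  refine Finset.sum_congr rfl fun i _ => ?_
  ring

/-- When `A` is constant on the diagonal, its leading part acts as a Fourier multiplier and the
remainder involves only differences of grid coefficients. -/
lemma Tg_hasSum_diag {A : ℝ → ℝ → ℂ} (hA : SPK A) {α : ℂ} (hd : ∀ s, A s s = α)
    {f : ℝ → ℂ} (hf : Function.Periodic f 1)
    {N : ℕ} (hN : 0 < N) (ε : ℝ) (k j : ℤ) :
    HasSum (fun x : ℤ × ℤ => fc2 A x.1 x.2 * (N * (gam f N ε (k - x.1) - gam f N ε (k - x.1 - x.2)) *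
      ee (-(k - x.1 - x.2)) (sg (1 / N) 0 j))) (Tg (fun s t => A s t * f (s - t)) N ε k j -
        α * (N * gam f N ε k * ee (-k) (sg (1 / N) 0 j))) := by
  have h := hasSum_sum (s := Finset.range N) (f := fun (i : ℕ) (x : ℤ × ℤ) =>
    ee (-k) (sg (1 / N) ε i) * ((fc2 A x.1 x.2 * (ee x.1 (sg (1 / N) ε i) *
      ee x.2 (sg (1 / N) ε i))) * f (sg (1 / N) ε i - sg (1 / N) 0 j)))
    (a := fun i : ℕ => ee (-k) (sg (1 / N) ε i) * (α * f (sg (1 / N) ε i - sg (1 / N) 0 j)))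
    (fun i _ => (((hd (sg (1 / N) ε i)) ▸ hasSum_fc2 hA (sg (1 / N) ε i)
      (sg (1 / N) ε i)).mul_right _).mul_left _)
  have h2 := (Tg_hasSum hA hf hN ε k j).sub h
  refine hasSum_of_eq h2 (fun x => ?_) ?_
  · have := mode_sum hf hN ε k (x.1 + x.2) 0 j
    simp only [ee_zero_left, mul_one, sub_zero] at this
    have e : ∑ i ∈ Finset.range N, ee (-k) (sg (1 / N) ε i) * ((fc2 A x.1 x.2 * (ee x.1 (sg (1 / N) ε i) *
      ee x.2 (sg (1 / N) ε i))) * f (sg (1 / N) ε i - sg (1 / N) 0 j)) = fc2 A x.1 x.2 *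
        (N * gam f N ε (k - x.1 - x.2) * ee (-(k - x.1 - x.2)) (sg (1 / N) 0 j)) := by
      rw [sub_sub, ← this, Finset.mul_sum]
      refine Finset.sum_congr rfl fun i _ => ?_
      rw [ee_add_left]; ring
    rw [e]; ring
  · congr 1
    have := mode_sum hf hN ε k 0 0 j
    simp only [ee_zero_left, mul_one, sub_zero, one_mul] at this
    rw [← this, Finset.mul_sum]
    refine Finset.sum_congr rfl fun i _ => ?_
    ring

/-- The second difference of a kernel periodic in its first variable, transformed on the grid. -/
lemma sum_second_diff {V : ℝ → ℝ → ℂ} (hV : ∀ s t, V (s + 1) t = V s t) {N : ℕ} (hN : 0 < N)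
    (ε : ℝ) (k j : ℤ) :
    ∑ i ∈ Finset.range N, ee (-k) (sg (1 / N) ε i) *
      (V (sg (1 / N) ε (i + 1)) (sg (1 / N) 0 (j + 1)) - V (sg (1 / N) ε i) (sg (1 / N) 0 (j + 1))
        - V (sg (1 / N) ε (i + 1)) (sg (1 / N) 0 j) + V (sg (1 / N) ε i) (sg (1 / N) 0 j)) =
      (ee k (1 / N) - 1) * (Tg V N ε k (j + 1) - Tg V N ε k j) := by
  have key : ∀ j : ℤ, ∑ i ∈ Finset.range N, ee (-k) (sg (1 / N) ε i) *
      V (sg (1 / N) ε (i + 1)) (sg (1 / N) 0 j) = ee k (1 / N) * Tg V N ε k j := by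
    intro j
    let G : ℤ → ℂ := fun i => ee (-k) (sg (1 / N) ε i) * V (sg (1 / N) ε i) (sg (1 / N) 0 j)
    have hG : ∀ l, G (l + N) = G l := by
      intro l; simp only [G, sg_add_N hN, ee_add_one, hV]
    have := sum_range_shift hG 1
    rw [Tg, ← this, Finset.mul_sum]
    refine Finset.sum_congr rfl fun i _ => ?_
    simp only [G]
    rw [sg_succ (1 / N) ε i, ee_add_right]
    have := ee_mul_neg k (1 / N)
    linear_combination (-ee (-k) (sg (1 / N) ε i) * V (sg (1 / N) ε i + 1 / N) (sg (1 / N) 0 j)) * this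
  have e : (ee k (1 / N) - 1) * (Tg V N ε k (j + 1) - Tg V N ε k j) =
      ee k (1 / N) * Tg V N ε k (j + 1) - Tg V N ε k (j + 1) - ee k (1 / N) * Tg V N ε k j
        + Tg V N ε k j := by ring
  rw [e, ← key, ← key, Tg, Tg, ← Finset.sum_sub_distrib, ← Finset.sum_sub_distrib,
    ← Finset.sum_add_distrib]
  refine Finset.sum_congr rfl fun i _ => ?_
  ring

/-! ### Cell integrals of kernels -/

lemma SPK.cont_right {A : ℝ → ℝ → ℂ} (hA : SPK A) (s : ℝ) : Continuous (A s) :=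
  hA.1.continuous.comp (by fun_prop : Continuous fun t : ℝ => (s, t))

lemma PInt.norm_le {f : ℝ → ℂ} (hf : PInt f) {a b : ℝ} (hab : a ≤ b) (hb : b ≤ a + 1) (s : ℝ) :
    ∫ t in a..b, ‖f (s - t)‖ ≤ L1 f := by
  have hp : Function.Periodic (fun x => ‖f x‖) 1 := fun x => by simp only [hf.per x]
  have e : ∫ t in a..(a+1), ‖f (s - t)‖ = L1 f := by
    rw [intervalIntegral.integral_comp_sub_left (fun x => ‖f x‖)]
    have := hp.intervalIntegral_add_eq (s - (a + 1)) 0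
    rw [zero_add] at this
    rw [L1, ← this]; congr 1; ring
  rw [← e]
  refine intervalIntegral.integral_mono_interval le_rfl hab hb ?_ ?_
  · exact Eventually.of_forall fun _ => norm_nonneg _
  · exact (hf.int_comp _ _ _).norm

lemma PInt.norm_conv_le {f : ℝ → ℂ} (hf : PInt f) {a b : ℝ} (hab : a ≤ b) (hb : b ≤ a + 1) (q : ℤ) (s : ℝ) :
    ‖∫ t in a..b, ee q t * f (s - t)‖ ≤ L1 f := by
  refine le_trans ?_ (hf.norm_le hab hb s)
  refine (intervalIntegral.norm_integral_le_integral_norm hab).trans (le_of_eq ?_)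
  congr 1; ext t; rw [norm_mul, norm_ee, one_mul]

lemma conv_hasSum {A : ℝ → ℝ → ℂ} (hA : SPK A) {f : ℝ → ℂ} (hf : PInt f) (a b s : ℝ) :
    HasSum (fun x : ℤ × ℤ => fc2 A x.1 x.2 * (ee x.1 s * ∫ t in a..b, ee x.2 t * f (s - t)))
      (∫ t in a..b, A s t * f (s - t)) := by
  have hR := fc2_summable hA
  have := intervalIntegral.hasSum_integral_of_dominated_convergence (a := a) (b := b) (μ := volume)
    (F := fun (x : ℤ × ℤ) t => fc2 A x.1 x.2 * (ee x.1 s * (ee x.2 t * f (s - t))))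
    (f := fun t => A s t * f (s - t))
    (fun x t => ‖fc2 A x.1 x.2‖ * ‖f (s - t)‖) ?_ ?_ ?_ ?_ ?_
  · simpa only [intervalIntegral.integral_const_mul] using this
  · intro x
    have hi := (intervalIntegrable_iff.1 (hf.int_comp s a b)).aestronglyMeasurable
    exact (((continuous_ee x.2).aestronglyMeasurable.mul hi).const_mul _).const_mul _
  · intro x
    refine Eventually.of_forall fun t _ => ?_
    simp [norm_ee]
  · refine Eventually.of_forall fun t _ => ?_
    exact hR.mul_right _
  · simp only [tsum_mul_right]
    exact ((hf.int_comp s a b).norm).const_mul _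
  · refine Eventually.of_forall fun t _ => ?_
    have := (hasSum_fc2 hA s t).mul_right (f (s - t))
    exact hasSum_of_eq this (fun x => by ring) rfl

lemma conv_continuous {A : ℝ → ℝ → ℂ} (hA : SPK A) {f : ℝ → ℂ} (hf : PInt f) {a b : ℝ}
    (hab : a ≤ b) (hb : b ≤ a + 1) :
    Continuous (fun s => ∫ t in a..b, A s t * f (s - t)) := by
  have hR := fc2_summable hA
  have e : (fun s => ∫ t in a..b, A s t * f (s - t)) = fun s => ∑' x : ℤ × ℤ,
      fc2 A x.1 x.2 * (ee x.1 s * ∫ t in a..b, ee x.2 t * f (s - t)) := by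
    ext s; exact (conv_hasSum hA hf a b s).tsum_eq.symm
  rw [e]
  refine continuous_tsum (u := fun x : ℤ × ℤ => ‖fc2 A x.1 x.2‖ * L1 f) ?_ (hR.mul_right _) ?_
  · intro x
    exact continuous_const.mul ((continuous_ee _).mul (hf.continuous_conv _ _ _))
  · intro x s
    rw [norm_mul, norm_mul, norm_ee, one_mul]
    gcongr
    exact hf.norm_conv_le hab hb _ _

lemma cell_hasSum {A : ℝ → ℝ → ℂ} (hA : SPK A) {f : ℝ → ℂ} (hf : PInt f) {a b : ℝ}
    (hab : a ≤ b) (hb : b ≤ a + 1) (c d : ℝ) :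
    HasSum (fun x : ℤ × ℤ => fc2 A x.1 x.2 * ∫ s in c..d, ee x.1 s * ∫ t in a..b, ee x.2 t * f (s - t))
      (∫ s in c..d, ∫ t in a..b, A s t * f (s - t)) := by
  have hR := fc2_summable hA
  have := intervalIntegral.hasSum_integral_of_dominated_convergence (a := c) (b := d) (μ := volume)
    (F := fun (x : ℤ × ℤ) s => fc2 A x.1 x.2 * (ee x.1 s * ∫ t in a..b, ee x.2 t * f (s - t)))
    (f := fun s => ∫ t in a..b, A s t * f (s - t))
    (fun x _ => ‖fc2 A x.1 x.2‖ * L1 f) ?_ ?_ ?_ ?_ ?_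
  · simpa only [intervalIntegral.integral_const_mul] using this
  · intro x
    exact (continuous_const.mul ((continuous_ee _).mul
      (hf.continuous_conv _ _ _))).aestronglyMeasurable
  · intro x
    refine Eventually.of_forall fun s _ => ?_
    rw [norm_mul, norm_mul, norm_ee, one_mul]
    gcongr
    exact hf.norm_conv_le hab hb _ _
  · exact Eventually.of_forall fun t _ => hR.mul_right _
  · simp
  · exact Eventually.of_forall fun s _ => conv_hasSum hA hf a b s

lemma cell_mode {f : ℝ → ℂ} (N : ℕ) (ε : ℝ) (p q i j : ℤ) :
    ∫ s in (sg (1 / N) ε i)..(sg (1 / N) ε (i + 1)), ee p s *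
      ∫ t in (sg (1 / N) 0 j)..(sg (1 / N) 0 (j + 1)), ee q t * f (s - t) =
    ee p (sg (1 / N) ε i) * ee q (sg (1 / N) 0 j) * Ycell f N ε p q (i - j) := by
  rw [Ycell, ← intervalIntegral.integral_const_mul]
  rw [sg_succ, sg_succ]
  have h1 := intervalIntegral.integral_comp_add_left (a := 0) (b := 1 / N) (fun s => ee p s *
      ∫ t in (sg (1 / N) 0 j)..(sg (1 / N) 0 j + 1 / N), ee q t * f (s - t)) (sg (1 / N) ε i)
  rw [add_zero] at h1
  rw [← h1]
  congr 1; ext σ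
  have h2 := intervalIntegral.integral_comp_add_left (a := 0) (b := 1 / N) (fun t =>
    ee q t * f (sg (1 / N) ε i + σ - t)) (sg (1 / N) 0 j)
  rw [add_zero] at h2
  rw [← h2, ← intervalIntegral.integral_const_mul, ← intervalIntegral.integral_const_mul]
  congr 1; ext τ
  have e : sg (1 / N) ε i + σ - (sg (1 / N) 0 j + τ) = (((i - j : ℤ) : ℝ) + ε) / N + σ - τ := by
    rw [sg_shift ε i j]; ring
  rw [e, ee_add_right, ee_add_right]; ring

/-- Grid transform of the cell integrals of a single mode. -/
lemma cell_mode_sum {f : ℝ → ℂ} (hf : PInt f) {N : ℕ} (hN : 0 < N) (ε : ℝ) (k p q j : ℤ) :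
    ∑ i ∈ Finset.range N, ee (-k) (sg (1 / N) ε i) *
      (∫ s in (sg (1 / N) ε i)..(sg (1 / N) ε (i + 1)), ee p s *
        ∫ t in (sg (1 / N) 0 j)..(sg (1 / N) 0 (j + 1)), ee q t * f (s - t)) =
      Gam f N ε p q (k - p) * ee (-(k - p - q)) (sg (1 / N) 0 j) := by
  have hN0 : (N : ℝ) ≠ 0 := by exact_mod_cast hN.ne'
  let G : ℤ → ℂ := fun l => ee (-(k - p)) (((l : ℝ) + ε) / N) * Ycell f N ε p q l
  have hG : ∀ l, G (l + N) = G l := by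
    intro l
    have e : (((l + N : ℤ) : ℝ) + ε) / N = ((l : ℝ) + ε) / N + 1 := by
      push_cast; field_simp; ring
    have e2 : ∀ σ τ : ℝ, f (((l : ℝ) + ε) / N + 1 + σ - τ) = f (((l : ℝ) + ε) / N + σ - τ) := by
      intro σ τ; rw [← hf.per (((l : ℝ) + ε) / N + σ - τ)]; congr 1; ring
    simp only [G, Ycell, e, e2, ee_add_one]
  have hs := sum_range_shift hG (-j)
  have e1 : Gam f N ε p q (k - p) = ∑ i ∈ Finset.range N, G i := by
    rw [Gam]; simp only [G, Int.cast_natCast]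
  rw [e1, ← hs, Finset.sum_mul]
  refine Finset.sum_congr rfl fun i _ => ?_
  rw [cell_mode]
  simp only [G]
  rw [sg_shift ε i j]
  rw [← sub_eq_add_neg]
  set u := (((i - j : ℤ) : ℝ) + ε) / N
  set y := sg (1 / N) 0 j
  have e4 : ee (-(k - p - q)) y = ee (-k) y * ee p y * ee q y := by
    rw [← ee_add_left, ← ee_add_left]; congr 1; ring
  have e5 : ee (-(k - p)) u = ee (-k) u * ee p u := by
    rw [← ee_add_left]; congr 1; ring
  rw [e4, e5, ee_add_right, ee_add_right]; ring

lemma cell_Tg_hasSum {A : ℝ → ℝ → ℂ} (hA : SPK A) {f : ℝ → ℂ} (hf : PInt f) {N : ℕ} (hN : 0 < N)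
    (ε : ℝ) (k j : ℤ) :
    HasSum (fun x : ℤ × ℤ => fc2 A x.1 x.2 * (Gam f N ε x.1 x.2 (k - x.1) *
        ee (-(k - x.1 - x.2)) (sg (1 / N) 0 j)))
      (∑ i ∈ Finset.range N, ee (-k) (sg (1 / N) ε i) *
        ∫ s in (sg (1 / N) ε i)..(sg (1 / N) ε (i + 1)),
          ∫ t in (sg (1 / N) 0 j)..(sg (1 / N) 0 (j + 1)), A s t * f (s - t)) := by
  have hN0 : (0:ℝ) < N := by exact_mod_cast hN
  have hN1 : (1:ℝ) / N ≤ 1 := by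
    rw [div_le_one hN0]; exact_mod_cast hN
  have hab : sg (1 / N) 0 j ≤ sg (1 / N) 0 (j + 1) := by
    rw [sg_succ]; linarith [one_div_pos.2 hN0]
  have hb : sg (1 / N) 0 (j + 1) ≤ sg (1 / N) 0 j + 1 := by
    rw [sg_succ]; linarith
  have h := hasSum_sum (s := Finset.range N) fun (i : ℕ) _ =>
    (cell_hasSum hA hf hab hb (sg (1 / N) ε i) (sg (1 / N) ε (i + 1))).mul_left
      (ee (-k) (sg (1 / N) ε i))
  refine hasSum_of_eq h (fun x => ?_) rfl
  rw [← cell_mode_sum hf hN ε k x.1 x.2 j, Finset.mul_sum]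
  refine Finset.sum_congr rfl fun i _ => ?_
  ring

/-! ### The Petrov–Galerkin matrix on the Fourier side -/

/-- The kernel `A(s,t) log(4 sin²(π(s-t))) + K(s,t)`. -/
noncomputable def gker (A K : ℝ → ℝ → ℂ) (s t : ℝ) : ℂ := A s t * (Lf (s - t) : ℂ) + K s t

/-- Rescaled Fourier symbol of the forward difference. -/
noncomputable def dN (N : ℕ) (k : ℤ) : ℂ := N * (ee k (1 / N) - 1)

/-- Grid Fourier coefficient of a vector on the trial grid. -/
noncomputable def aN (N : ℕ) (φ : ℕ → ℂ) (m : ℤ) : ℂ :=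
  1 / (N : ℂ) * ∑ j ∈ Finset.range N, φ j * ee (-m) (sg (1 / N) 0 j)

/-- Grid Fourier transform on the shifted test grid. -/
noncomputable def bN (N : ℕ) (ε : ℝ) (u : ℕ → ℂ) (k : ℤ) : ℂ :=
  ∑ i ∈ Finset.range N, ee (-k) (sg (1 / N) ε i) * u i

/-- Symbol of the coupling of the mode `k - p - q` to the mode `k` in the Petrov–Galerkin matrix,
the contribution of the constant diagonal of `A₁` being removed. -/
noncomputable def wN (A1 K1 A2 K2 : ℝ → ℝ → ℂ) (N : ℕ) (ε : ℝ) (k : ℤ) (x : ℤ × ℤ) : ℂ :=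
  dN N k * dN N (-(k - x.1 - x.2)) *
      (fc2 A1 x.1 x.2 * (gL N ε (k - x.1) - gL N ε (k - x.1 - x.2)) +
        fc2 K1 x.1 x.2 * gam (fun _ => 1) N ε (k - x.1)) +
    (fc2 A2 x.1 x.2 * (N * Gam (fun x => (Lf x : ℂ)) N ε x.1 x.2 (k - x.1)) +
      fc2 K2 x.1 x.2 * (N * Gam (fun _ => 1) N ε x.1 x.2 (k - x.1)))

lemma gker_per {A K : ℝ → ℝ → ℂ} (hA : SPK A) (hK : SPK K) (s t : ℝ) :
    gker A K (s + 1) t = gker A K s t := by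
  have e : s + 1 - t = s - t + 1 := by ring
  rw [gker, gker, hA.2.1, hK.2.1, e, Lf_add_one]

lemma gker_eq (A K : ℝ → ℝ → ℂ) : gker A K = fun s t => A s t * (Lf (s - t) : ℂ) +
    K s t * (fun _ : ℝ => (1:ℂ)) (s - t) := by
  ext s t; simp [gker]

lemma gker_cell_split {A K : ℝ → ℝ → ℂ} (hA : SPK A) (hK : SPK K) {a b : ℝ} (hab : a ≤ b)
    (hb : b ≤ a + 1) (c d : ℝ) :
    ∫ s in c..d, ∫ t in a..b, gker A K s t =
      (∫ s in c..d, ∫ t in a..b, A s t * (Lf (s - t) : ℂ)) +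
        ∫ s in c..d, ∫ t in a..b, K s t * (fun _ : ℝ => (1:ℂ)) (s - t) := by
  rw [← intervalIntegral.integral_add
    ((conv_continuous hA pInt_Lf hab hb).intervalIntegrable c d)
    ((conv_continuous hK pInt_one hab hb).intervalIntegrable c d)]
  congr 1; ext s
  rw [← intervalIntegral.integral_add]
  · simp [gker]
  · exact (pInt_Lf.int_comp s a b).continuousOn_mul (hA.cont_right s).continuousOn
  · exact (pInt_one.int_comp s a b).continuousOn_mul (hK.cont_right s).continuousOn

lemma Tg_gker (A K : ℝ → ℝ → ℂ) (N : ℕ) (ε : ℝ) (k j : ℤ) :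
    Tg (gker A K) N ε k j = Tg (fun s t => A s t * (Lf (s - t) : ℂ)) N ε k j +
      Tg (fun s t => K s t * (fun _ : ℝ => (1:ℂ)) (s - t)) N ε k j := by
  rw [gker_eq]; simp only [Tg, ← Finset.sum_add_distrib, mul_add]

lemma ee_sg_succ (N : ℕ) (m j : ℤ) : ee m (sg (1 / N) 0 (j + 1)) =
    ee m (sg (1 / N) 0 j) * ee m (1 / N) := by
  rw [sg_succ, ee_add_right]

/-- One column of the grid-transformed Petrov–Galerkin matrix. -/
lemma column_hasSum {A1 K1 A2 K2 : ℝ → ℝ → ℂ} (hA1 : SPK A1) (hK1 : SPK K1) (hA2 : SPK A2)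
    (hK2 : SPK K2) {α : ℂ} (hd : ∀ s, A1 s s = α) {N : ℕ} (hN : 0 < N) (ε : ℝ) (k j : ℤ) :
    HasSum (fun x : ℤ × ℤ => wN A1 K1 A2 K2 N ε k x *
        (1 / (N : ℂ) * ee (-(k - x.1 - x.2)) (sg (1 / N) 0 j)))
      (bN N ε (fun i => WmatPG (gker A1 K1) (gker A2 K2) (1 / N) ε i j) k -
        α * (dN N k * dN N (-k) * gL N ε k) * (1 / (N : ℂ) * ee (-k) (sg (1 / N) 0 j))) := by
  have hNc : (N : ℂ) ≠ 0 := by exact_mod_cast hN.ne'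
  have hN0 : (0:ℝ) < N := by exact_mod_cast hN
  have hN1 : (1:ℝ) / N ≤ 1 := by
    rw [div_le_one hN0]; exact_mod_cast hN
  have hab : sg (1 / N) 0 j ≤ sg (1 / N) 0 (j + 1) := by
    rw [sg_succ]; linarith [one_div_pos.2 hN0]
  have hb : sg (1 / N) 0 (j + 1) ≤ sg (1 / N) 0 j + 1 := by
    rw [sg_succ]; linarith
  have t1 := Tg_hasSum_diag hA1 hd pInt_Lf.per hN ε k (j + 1)
  have t2 := Tg_hasSum_diag hA1 hd pInt_Lf.per hN ε k j
  have t3 := Tg_hasSum hK1 pInt_one.per hN ε k (j + 1)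
  have t4 := Tg_hasSum hK1 pInt_one.per hN ε k j
  have t5 := cell_Tg_hasSum hA2 pInt_Lf hN ε k j
  have t6 := cell_Tg_hasSum hK2 pInt_one hN ε k j
  have hsum := ((((t1.sub t2).add (t3.sub t4)).mul_left (ee k (1 / N) - 1)).add (t5.add t6))
  refine hasSum_of_eq hsum (fun x => ?_) ?_
  · rw [wN, dN, dN, ee_sg_succ]
    simp only [gL]
    field_simp
  · have hb2 : bN N ε (fun i => WmatPG (gker A1 K1) (gker A2 K2) (1 / N) ε i j) k =
        (ee k (1 / N) - 1) * (Tg (gker A1 K1) N ε k (j + 1) - Tg (gker A1 K1) N ε k j) +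
        ((∑ i ∈ Finset.range N, ee (-k) (sg (1 / N) ε i) *
          ∫ s in (sg (1 / N) ε i)..(sg (1 / N) ε (i + 1)),
          ∫ t in (sg (1 / N) 0 j)..(sg (1 / N) 0 (j + 1)), A2 s t * (Lf (s - t) : ℂ)) +
        (∑ i ∈ Finset.range N, ee (-k) (sg (1 / N) ε i) *
          ∫ s in (sg (1 / N) ε i)..(sg (1 / N) ε (i + 1)),
          ∫ t in (sg (1 / N) 0 j)..(sg (1 / N) 0 (j + 1)), K2 s t *
            (fun _ : ℝ => (1:ℂ)) (s - t))) := by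
      rw [← sum_second_diff (gker_per hA1 hK1) hN, ← Finset.sum_add_distrib,
        ← Finset.sum_add_distrib, bN]
      refine Finset.sum_congr rfl fun i _ => ?_
      rw [WmatPG, gker_cell_split hA2 hK2 hab hb]
      ring
    rw [hb2, Tg_gker, Tg_gker, dN, dN, ee_sg_succ]
    simp only [gL]
    field_simp
    ring

/-- The Petrov–Galerkin matrix on the Fourier side: the image of `φ` has transform
`α D_N(k) a k + ∑ wN k x · a (k - x.1 - x.2)`. -/
lemma discrete_hasSum {A1 K1 A2 K2 : ℝ → ℝ → ℂ} (hA1 : SPK A1) (hK1 : SPK K1) (hA2 : SPK A2)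
    (hK2 : SPK K2) {α : ℂ} (hd : ∀ s, A1 s s = α) {N : ℕ} (hN : 0 < N) (ε : ℝ) (φ : ℕ → ℂ) (k : ℤ) :
    HasSum (fun x : ℤ × ℤ => wN A1 K1 A2 K2 N ε k x * aN N φ (k - x.1 - x.2))
      (bN N ε (fun i => ∑ j ∈ Finset.range N,
          WmatPG (gker A1 K1) (gker A2 K2) (1 / N) ε i j * φ j) k -
        α * (dN N k * dN N (-k) * gL N ε k) * aN N φ k) := by
  have h := hasSum_sum (s := Finset.range N) fun (j : ℕ) _ =>
    (column_hasSum hA1 hK1 hA2 hK2 hd hN ε k j).mul_right (φ j)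
  refine hasSum_of_eq h (fun x => ?_) ?_
  · rw [aN, Finset.mul_sum, Finset.mul_sum]
    refine Finset.sum_congr rfl fun j _ => ?_
    ring
  · simp only [sub_mul]
    rw [Finset.sum_sub_distrib]
    congr 1
    · simp only [bN, Finset.sum_mul, Finset.mul_sum]
      rw [Finset.sum_comm]
      refine Finset.sum_congr rfl fun j _ => Finset.sum_congr rfl fun i _ => ?_
      ring
    · rw [aN, Finset.mul_sum, Finset.mul_sum]
      refine Finset.sum_congr rfl fun j _ => ?_
      ring

/-! ### Symbol estimates -/

lemma ee_grid_period {N : ℕ} (hN : 0 < N) (m t : ℤ) : ee (m - N * t) (1 / N) = ee m (1 / N) := by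
  have hN0 : (N : ℝ) ≠ 0 := by exact_mod_cast hN.ne'
  have h : ee ((N : ℤ) * t) (1 / N) = 1 := by
    have := ee_mul_comm t N (1 / (N : ℝ))
    rw [mul_comm] at this
    have e : (((N : ℕ) : ℤ) : ℝ) * (1 / (N : ℝ)) = ((1 : ℤ) : ℝ) := by
      push_cast; field_simp
    rw [mul_comm (N : ℤ), ← ee_mul_comm, e, ee_int]
  have := ee_add_left (m - N * t) (N * t) (1 / N)
  rw [sub_add_cancel, h, mul_one] at this
  exact this.symm

lemma norm_dN_le {N : ℕ} (hN : 0 < N) (k : ℤ) : ‖dN N k‖ ≤ 2 * Real.pi * nd N k := by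
  have hN0 : (0 : ℝ) < N := by exact_mod_cast hN
  obtain ⟨t, ht⟩ := nd_exists N k
  have h := norm_ee_sub_one_le (k - N * t) (1 / N)
  rw [ee_grid_period hN, ← ht, abs_of_pos (by positivity : (0:ℝ) < 1 / N)] at h
  rw [dN, norm_mul, Complex.norm_natCast]
  calc _ ≤ (N : ℝ) * (2 * Real.pi * nd N k * (1 / N)) := by gcongr
    _ = _ := by field_simp

lemma norm_dN_neg (N : ℕ) (k : ℤ) : ‖dN N (-k)‖ = ‖dN N k‖ := by
  have : dN N (-k) = (starRingEnd ℂ) (dN N k) := by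
    simp [dN, ee_conj]
  rw [this, Complex.norm_conj]

lemma norm_dN_ge {N : ℕ} (hN : 0 < N) (k : ℤ) (hk : 2 * |(k : ℝ)| ≤ N) : 4 * |(k : ℝ)| ≤ ‖dN N k‖ := by
  have hN0 : (0 : ℝ) < N := by exact_mod_cast hN
  have h := Complex.norm_exp_I_mul_ofReal_sub_one (2 * Real.pi * k * (1 / N))
  have e : ee k (1 / N) = Complex.exp (I * ((2 * Real.pi * k * (1 / N) : ℝ) : ℂ)) := by
    rw [ee]; congr 1; push_cast; ring
  rw [dN, norm_mul, Complex.norm_natCast, e, h, norm_mul, Real.norm_eq_abs, Real.norm_eq_abs]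
  have hx : |2 * Real.pi * k * (1 / N) / 2| ≤ Real.pi / 2 := by
    have : 2 * Real.pi * k * (1 / N) / 2 = Real.pi / 2 * (2 * k / N) := by ring
    rw [this, abs_mul, abs_of_pos (by positivity)]
    have : |2 * (k:ℝ) / N| ≤ 1 := by
      rw [abs_div, abs_mul, abs_of_pos hN0, div_le_one hN0]; simpa using hk
    have hpi : 0 < Real.pi / 2 := by positivity
    nlinarith
  have h2 := Real.mul_abs_le_abs_sin hx
  have e3 : 2 / Real.pi * |2 * Real.pi * k * (1 / N) / 2| = 2 * |(k : ℝ)| / N := by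
    rw [abs_div, abs_mul, abs_mul, abs_mul, abs_of_pos Real.pi_pos, abs_of_pos (by positivity : (0:ℝ) < 1 / N)]
    have := Real.pi_pos
    simp only [Nat.abs_ofNat]
    field_simp
  rw [e3] at h2
  have : (N : ℝ) * (2 * (2 * |(k : ℝ)| / N)) = 4 * |(k : ℝ)| := by field_simp; ring
  rw [← this]
  simp only [Nat.abs_ofNat]
  gcongr

lemma dN_tendsto (k : ℤ) : Tendsto (fun N : ℕ => dN N k) atTop (𝓝 (2 * Real.pi * I * k)) := by
  have h := hasDerivAt_ee k 0
  have h2 := h.tendsto_slope_zero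
  have h3 : Tendsto (fun N : ℕ => (1 : ℝ) / (N : ℝ)) atTop (𝓝[≠] 0) := by
    refine tendsto_nhdsWithin_iff.2 ⟨tendsto_one_div_atTop_nhds_zero_nat, ?_⟩
    filter_upwards [eventually_gt_atTop 0] with N hN
    have : (0:ℝ) < N := by exact_mod_cast hN
    simp only [Set.mem_compl_iff, Set.mem_singleton_iff]; positivity
  have h4 := h2.comp h3
  rw [ee_zero_right, mul_one] at h4
  refine h4.congr fun N => ?_
  simp [dN]

/-- Ellipticity of the discrete principal symbol, uniform in `N` within the frequency window. -/
lemma D_lower {ε : ℝ} (hs : Real.sin (2 * Real.pi * ε) ≠ 0) (α : ℂ) {N : ℕ} (hN : 2 ≤ N) (k : ℤ)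
    (hk : 2 * |(k : ℝ)| ≤ N) :
    2 * ‖α‖ * |Real.cos (Real.pi * ε)| * |(k : ℝ)| ≤ ‖α * (dN N k * dN N (-k) * gL N ε k)‖ := by
  rcases eq_or_ne k 0 with rfl | hk0
  · simp; positivity
  have hN0 : (2 : ℝ) ≤ N := by exact_mod_cast hN
  have hkp : 0 < |(k : ℝ)| := by positivity
  have hkN : |k| < N := by
    have : |(k : ℝ)| < N := by linarith
    exact_mod_cast this
  have h1 := gL_lower hs k hk0 hkN
  have h2 := norm_dN_ge (by omega) k hk
  rw [norm_mul, norm_mul, norm_mul, norm_dN_neg]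
  calc 2 * ‖α‖ * |Real.cos (Real.pi * ε)| * |(k : ℝ)|
      = ‖α‖ * ((4 * |(k : ℝ)|) * (4 * |(k : ℝ)|) * (|Real.cos (Real.pi * ε)| / (8 * |(k : ℝ)|))) := by
        field_simp; ring
    _ ≤ _ := by gcongr

set_option maxHeartbeats 1000000 in
/-- Uniform rapidly decaying majorant of the symbols `wN`. -/
lemma exists_majorant {A1 K1 A2 K2 : ℝ → ℝ → ℂ} (hA1 : SPK A1) (hK1 : SPK K1) (hA2 : SPK A2)
    (hK2 : SPK K2) {ε : ℝ} (hs : Real.sin (2 * Real.pi * ε) ≠ 0) :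
    ∃ ω : ℤ × ℤ → ℝ, (∀ x, 0 ≤ ω x) ∧
      (∀ r : ℕ, Summable fun x : ℤ × ℤ => ω x * ((1 + |(x.1 : ℝ)|) ^ r * (1 + |(x.2 : ℝ)|) ^ r)) ∧
      ∀ N : ℕ, 2 ≤ N → ∀ k x, ‖wN A1 K1 A2 K2 N ε k x‖ ≤ ω x := by
  set κ := 16 * |Real.sin (2 * Real.pi * ε)|⁻¹ with hκ
  set L := L1 (fun x => (Lf x : ℂ)) with hL
  have hκ0 : 0 ≤ κ := by positivity
  have hL0 : 0 ≤ L := L1_nonneg _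
  have hL1 : L1 (fun _ : ℝ => (1 : ℂ)) = 1 := by simp [L1]
  set M : ℝ := 4 * Real.pi ^ 2 * (κ + 1) + L + 1 with hM
  have hM0 : 0 ≤ M := by positivity
  let S : ℤ × ℤ → ℝ := fun x => ‖fc2 A1 x.1 x.2‖ + ‖fc2 K1 x.1 x.2‖ + ‖fc2 A2 x.1 x.2‖ + ‖fc2 K2 x.1 x.2‖
  refine ⟨fun x => M * (S x * ((1 + |(x.1 : ℝ)|) ^ 6 * (1 + |(x.2 : ℝ)|) ^ 6)), fun x => by positivity,
    fun r => ?_, fun N hN k x => ?_⟩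
  · have h := (((((fc2_RD hA1).summable (r + 6)).add ((fc2_RD hK1).summable (r + 6))).add
      ((fc2_RD hA2).summable (r + 6))).add ((fc2_RD hK2).summable (r + 6))).mul_left M
    refine h.congr fun x => ?_
    simp only [abs_norm, S]
    ring
  · obtain ⟨p, q⟩ := x
    have hN1 : 0 < N := by omega
    set m := k - p - q with hm
    set P := 1 + |(p : ℝ)| with hP
    set Q := 1 + |(q : ℝ)| with hQ
    have hP1 : 1 ≤ P := by rw [hP]; linarith [abs_nonneg (p : ℝ)]
    have hQ1 : 1 ≤ Q := by rw [hQ]; linarith [abs_nonneg (q : ℝ)]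
    have hPQ : P * Q ^ 6 ≤ P ^ 6 * Q ^ 6 := by
      gcongr; exact le_self_pow₀ hP1 (by norm_num)
    have hone : 1 ≤ P ^ 6 * Q ^ 6 := one_le_mul_of_one_le_of_one_le (one_le_pow₀ hP1) (one_le_pow₀ hQ1)
    have hpi := Real.pi_pos
    have hdk : ‖dN N k‖ ≤ 2 * Real.pi * (P * Q * (1 + nd N m)) := by
      refine (norm_dN_le hN1 k).trans ?_
      gcongr
      have h1 := nd_add_le hN1 m (p + q)
      rw [show m + (p + q) = k by rw [hm]; ring] at h1
      push_cast at h1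
      have h2 := abs_add_le (p : ℝ) q
      have h3 := nd_nonneg N m
      have h4 := mul_nonneg (abs_nonneg (p : ℝ)) (abs_nonneg (q : ℝ))
      have h5 : |(p : ℝ)| + |(q : ℝ)| + 1 ≤ P * Q := by rw [hP, hQ]; linarith
      have h6 : 1 ≤ P * Q := by linarith [abs_nonneg (p : ℝ), abs_nonneg (q : ℝ)]
      have h7 := mul_le_mul_of_nonneg_right h6 h3
      linarith
    have hdm : ‖dN N (-m)‖ ≤ 2 * Real.pi * (1 + nd N m) := by
      rw [norm_dN_neg]
      refine (norm_dN_le hN1 m).trans ?_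
      gcongr; linarith
    have hdiff := gL_diff hs hN m q
    rw [show m + q = k - p by rw [hm]; ring] at hdiff
    have T1 : ‖dN N k * dN N (-m) * (gL N ε (k - p) - gL N ε m)‖ ≤ 4 * Real.pi ^ 2 * κ * (P ^ 6 * Q ^ 6) := by
      rw [norm_mul, norm_mul]
      have hnd := nd_nonneg N m
      calc _ ≤ (2 * Real.pi * (P * Q * (1 + nd N m))) * (2 * Real.pi * (1 + nd N m)) *
            ‖gL N ε (k - p) - gL N ε m‖ := by gcongr
        _ = 4 * Real.pi ^ 2 * (P * Q) * (‖gL N ε (k - p) - gL N ε m‖ * (1 + nd N m) ^ 2) := by ring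
        _ ≤ 4 * Real.pi ^ 2 * (P * Q) * (κ * Q ^ 5) := by gcongr
        _ = 4 * Real.pi ^ 2 * κ * (P * Q ^ 6) := by ring
        _ ≤ _ := by gcongr
    have T2 : ‖dN N k * dN N (-m) * gam (fun _ => 1) N ε (k - p)‖ ≤ 4 * Real.pi ^ 2 * (P ^ 6 * Q ^ 6) := by
      rw [gam_one hN1]
      split_ifs with hdvd
      · obtain ⟨t, ht⟩ := hdvd
        have e1 : nd N k ≤ P := by
          have := nd_le hN1 k t
          rw [show k - N * t = p by rw [← ht]; ring] at this
          rw [hP]; linarith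
        have e2 : nd N m ≤ Q := by
          have := nd_le hN1 m t
          rw [show m - N * t = -q by rw [hm, ← ht]; ring] at this
          rw [Int.cast_neg, abs_neg] at this
          rw [hQ]; linarith
        rw [norm_mul, norm_mul, norm_ee, mul_one, norm_dN_neg]
        have hnd := nd_nonneg N m
        calc _ ≤ (2 * Real.pi * nd N k) * (2 * Real.pi * nd N m) := by
              exact mul_le_mul (norm_dN_le hN1 k) (norm_dN_le hN1 m) (norm_nonneg _)
                (mul_nonneg (by positivity) (nd_nonneg N k))
          _ ≤ (2 * Real.pi * P) * (2 * Real.pi * Q) := by gcongr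
          _ = 4 * Real.pi ^ 2 * (P * Q) := by ring
          _ ≤ _ := by
            gcongr
            · exact le_self_pow₀ hP1 (by norm_num)
            · exact le_self_pow₀ hQ1 (by norm_num)
      · simp only [mul_zero, norm_zero]; positivity
    have T3 := norm_Gam_le (ε := ε) pInt_Lf hN1 p q (k - p)
    have T4 := norm_Gam_le (ε := ε) pInt_one hN1 p q (k - p)
    rw [hL1] at T4
    rw [← hL] at T3
    rw [wN]
    simp only [← hm]
    have e : dN N k * dN N (-m) * (fc2 A1 p q * (gL N ε (k - p) - gL N ε m) +
        fc2 K1 p q * gam (fun _ => 1) N ε (k - p)) = fc2 A1 p q * (dN N k * dN N (-m) * (gL N ε (k - p) - gL N ε m)) +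
        fc2 K1 p q * (dN N k * dN N (-m) * gam (fun _ => 1) N ε (k - p)) := by ring
    rw [e]
    have hA : 4 * Real.pi ^ 2 * κ * (P ^ 6 * Q ^ 6) ≤ M * (P ^ 6 * Q ^ 6) := by
      gcongr; rw [hM]; linarith [sq_nonneg Real.pi]
    have hB : 4 * Real.pi ^ 2 * (P ^ 6 * Q ^ 6) ≤ M * (P ^ 6 * Q ^ 6) := by
      gcongr; rw [hM]
      have : 0 ≤ 4 * Real.pi ^ 2 * κ := by positivity
      linarith
    have hC : L ≤ M * (P ^ 6 * Q ^ 6) := by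
      have : L ≤ M := by
        rw [hM]; have : 0 ≤ 4 * Real.pi ^ 2 * (κ + 1) := by positivity
        linarith
      exact this.trans (le_mul_of_one_le_right hM0 hone)
    have hD : 1 ≤ M * (P ^ 6 * Q ^ 6) := by
      have : 1 ≤ M := by
        rw [hM]; have : 0 ≤ 4 * Real.pi ^ 2 * (κ + 1) := by positivity
        linarith
      exact this.trans (le_mul_of_one_le_right hM0 hone)
    refine (norm_add_le _ _).trans ((add_le_add (norm_add_le _ _) (norm_add_le _ _)).trans ?_)
    rw [norm_mul (fc2 A1 p q), norm_mul (fc2 K1 p q), norm_mul (fc2 A2 p q), norm_mul (fc2 K2 p q)]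
    calc _ ≤ ‖fc2 A1 p q‖ * (M * (P ^ 6 * Q ^ 6)) + ‖fc2 K1 p q‖ * (M * (P ^ 6 * Q ^ 6)) +
          (‖fc2 A2 p q‖ * (M * (P ^ 6 * Q ^ 6)) + ‖fc2 K2 p q‖ * (M * (P ^ 6 * Q ^ 6))) := by
          gcongr
          · exact T1.trans hA
          · exact T2.trans hB
          · exact T3.trans hC
          · exact T4.trans hD
      _ = _ := by simp only [S, ← hP, ← hQ]; ring

/-- Kronecker delta at `0`. -/
noncomputable def del (n : ℤ) : ℂ := if n = 0 then 1 else 0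

lemma gam_one_tendsto (ε : ℝ) (n : ℤ) :
    Tendsto (fun N : ℕ => gam (fun _ => 1) N ε n) atTop (𝓝 (del n)) := by
  refine Tendsto.congr' (f₁ := fun _ => del n) ?_ tendsto_const_nhds
  filter_upwards [eventually_gt_atTop n.natAbs] with N hN
  rw [gam_one (by omega), del]
  split_ifs with h1 h2 h2
  · rw [h1, neg_zero, ee_zero_left]
  · subst h1; simp at h2
  · exact absurd (Int.eq_zero_of_dvd_of_natAbs_lt_natAbs h2 (by simpa using hN)) h1
  · rfl

/-- Limit of the symbols `wN`. -/
noncomputable def wL (A1 K1 A2 K2 : ℝ → ℝ → ℂ) (k : ℤ) (x : ℤ × ℤ) : ℂ :=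
  (2 * Real.pi * I * k) * (-(2 * Real.pi * I * (k - x.1 - x.2 : ℤ))) *
      (fc2 A1 x.1 x.2 * (ell (k - x.1) - ell (k - x.1 - x.2)) + fc2 K1 x.1 x.2 * del (k - x.1)) +
    (fc2 A2 x.1 x.2 * ell (k - x.1) + fc2 K2 x.1 x.2 * del (k - x.1))

lemma wN_tendsto (A1 K1 A2 K2 : ℝ → ℝ → ℂ) {ε : ℝ} (hs : Real.sin (2 * Real.pi * ε) ≠ 0) (k : ℤ)
    (x : ℤ × ℤ) :
    Tendsto (fun N : ℕ => wN A1 K1 A2 K2 N ε k x) atTop (𝓝 (wL A1 K1 A2 K2 k x)) := by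
  have h1 := Gam_tendsto (ε := ε) pInt_Lf x.1 x.2 (k - x.1)
  have h2 := Gam_tendsto (ε := ε) pInt_one x.1 x.2 (k - x.1)
  rw [integral_Lf_ee] at h1
  simp only [one_mul] at h2
  rw [integral_ee] at h2
  have e : (if -(k - x.1) = 0 then (1:ℂ) else 0) = del (k - x.1) := by
    simp only [neg_eq_zero, del]
  rw [e] at h2
  have h3 := dN_tendsto (-(k - x.1 - x.2))
  have e3 : (2 * Real.pi * I * ((-(k - x.1 - x.2) : ℤ) : ℂ)) = -(2 * Real.pi * I * (k - x.1 - x.2 : ℤ)) := by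
    rw [Int.cast_neg]; ring
  rw [e3] at h3
  exact (((dN_tendsto k).mul h3).mul
    ((((gL_tendsto hs _).sub (gL_tendsto hs _)).const_mul _).add
      ((gam_one_tendsto ε _).const_mul _))).add ((h1.const_mul _).add (h2.const_mul _))

/-! ### Discrete Parseval identity -/

lemma norm_aN_add_mul {N : ℕ} (hN : 0 < N) (φ : ℕ → ℂ) (m t : ℤ) :
    ‖aN N φ (m + N * t)‖ = ‖aN N φ m‖ := by
  have hN0 : (N : ℝ) ≠ 0 := by exact_mod_cast hN.ne'
  have key : ∀ j : ℕ, ee (-(m + N * t)) (sg (1 / N) 0 j) = ee (-m) (sg (1 / N) 0 j) * ee (-t) (-(1 / 2)) := by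
    intro j
    rw [neg_add, ee_add_left]
    congr 1
    have e : -((N : ℤ) * t) = (-t) * N := by ring
    rw [e, ← ee_mul_comm]
    have e2 : ((N : ℤ) : ℝ) * sg (1 / N) 0 j = ((j : ℤ) : ℝ) + -(1 / 2) := by
      simp only [sg]; push_cast; field_simp; ring
    rw [e2, ee_add_right, ee_int, one_mul]
  have : aN N φ (m + N * t) = aN N φ m * ee (-t) (-(1 / 2)) := by
    simp only [aN, key]
    rw [mul_assoc, Finset.sum_mul]
    congr 1
    refine Finset.sum_congr rfl fun j _ => by ring
  rw [this, norm_mul, norm_ee, mul_one]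

/-- Discrete Parseval identity. -/
lemma sum_norm_aN_sq {N : ℕ} (hN : 0 < N) (φ : ℕ → ℂ) :
    ∑ m ∈ Finset.range N, ‖aN N φ m‖ ^ 2 = 1 / N * ∑ j ∈ Finset.range N, ‖φ j‖ ^ 2 := by
  have hN0 : (N : ℝ) ≠ 0 := by exact_mod_cast hN.ne'
  have hNc : (N : ℂ) ≠ 0 := by exact_mod_cast hN.ne'
  have hsq : ∀ z : ℂ, ((‖z‖ ^ 2 : ℝ) : ℂ) = z * (starRingEnd ℂ) z := by
    intro z; rw [Complex.mul_conj, Complex.normSq_eq_norm_sq]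
  have horth : ∀ j ∈ Finset.range N, ∀ l ∈ Finset.range N,
      ∑ m ∈ Finset.range N, ee (-m) (sg (1 / N) 0 j) * ee m (sg (1 / N) 0 l) =
        if j = l then (N : ℂ) else 0 := by
    intro j hj l hl
    have e : ∀ m : ℕ, ee (-m) (sg (1 / N) 0 j) * ee m (sg (1 / N) 0 l) =
        ee ((l : ℤ) - j) (((m : ℝ) + 0) / N) := by
      intro m
      rw [← ee_neg_right, ← ee_add_right]
      have e1 : -sg (1 / N) 0 j + sg (1 / N) 0 l = (((l : ℤ) - j : ℤ) : ℝ) * (1 / N) := by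
        simp only [sg]; push_cast; ring
      have e2 : ((m : ℝ) + 0) / N = ((m : ℤ) : ℝ) * (1 / N) := by push_cast; ring
      rw [e1, e2, ee_mul_comm, ee_mul_comm, mul_comm]
    simp only [e]
    rw [sum_ee_grid hN]
    rw [Finset.mem_range] at hj hl
    by_cases hjl : j = l
    · subst hjl; simp [ee_zero_left]
    · rw [if_neg hjl, if_neg]
      intro hd
      have := Int.eq_zero_of_dvd_of_natAbs_lt_natAbs hd (by omega)
      omega
  have hC : ((∑ m ∈ Finset.range N, ‖aN N φ m‖ ^ 2 : ℝ) : ℂ) =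
      ((1 / N * ∑ j ∈ Finset.range N, ‖φ j‖ ^ 2 : ℝ) : ℂ) := by
    rw [Complex.ofReal_sum, Complex.ofReal_mul, Complex.ofReal_sum]
    simp only [hsq]
    have e1 : ∀ m : ℕ, aN N φ m * (starRingEnd ℂ) (aN N φ m) = 1 / (N : ℂ) * (1 / N) *
        ∑ j ∈ Finset.range N, ∑ l ∈ Finset.range N, φ j * (starRingEnd ℂ) (φ l) *
          (ee (-m) (sg (1 / N) 0 j) * ee m (sg (1 / N) 0 l)) := by
      intro m
      simp only [aN, map_mul, map_sum, map_div₀, map_one, map_natCast, ee_conj, neg_neg]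
      rw [show ∀ a b c d : ℂ, a * b * (c * d) = a * c * (b * d) by intros; ring, Finset.sum_mul_sum]
      congr 1
      refine Finset.sum_congr rfl fun j _ => Finset.sum_congr rfl fun l _ => by ring
    simp only [e1]
    rw [← Finset.mul_sum, Finset.sum_comm]
    have e2 : ∀ j ∈ Finset.range N, ∑ m ∈ Finset.range N, ∑ l ∈ Finset.range N,
        φ j * (starRingEnd ℂ) (φ l) * (ee (-m) (sg (1 / N) 0 j) * ee m (sg (1 / N) 0 l)) =
        N * (φ j * (starRingEnd ℂ) (φ j)) := by
      intro j hj
      rw [Finset.sum_comm]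
      simp only [← Finset.mul_sum]
      rw [Finset.sum_congr rfl fun l hl => by rw [horth j hj l hl]]
      simp only [mul_ite, mul_zero, Finset.sum_ite_eq, hj, if_true]
      ring
    rw [Finset.sum_congr rfl e2, ← Finset.mul_sum]
    push_cast
    field_simp
  exact_mod_cast hC

lemma sum_norm_le {N : ℕ} (u : ℕ → ℂ) {B : ℝ} (hB : 0 ≤ B)
    (h : ∑ i ∈ Finset.range N, ‖u i‖ ^ 2 ≤ B ^ 2 / N) : ∑ i ∈ Finset.range N, ‖u i‖ ≤ B := by
  rcases Nat.eq_zero_or_pos N with rfl | hN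
  · simpa using hB
  have hN0 : (0 : ℝ) < N := by exact_mod_cast hN
  have h1 := sq_sum_le_card_mul_sum_sq (s := Finset.range N) (f := fun i => ‖u i‖)
  rw [Finset.card_range] at h1
  have h2 : (N : ℝ) * ∑ i ∈ Finset.range N, ‖u i‖ ^ 2 ≤ B ^ 2 := by
    rw [le_div_iff₀ hN0] at h; linarith
  exact (le_abs_self _).trans (abs_le_of_sq_le_sq (h1.trans h2) hB)

lemma norm_bN_le {N : ℕ} (ε : ℝ) (u : ℕ → ℂ) {B : ℝ} (hB : 0 ≤ B)
    (h : ∑ i ∈ Finset.range N, ‖u i‖ ^ 2 ≤ B ^ 2 / N) (k : ℤ) : ‖bN N ε u k‖ ≤ B := by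
  refine le_trans (norm_sum_le _ _) (le_trans (le_of_eq ?_) (sum_norm_le u hB h))
  simp [norm_ee]

lemma norm_aN_le {N : ℕ} (hN : 0 < N) (φ : ℕ → ℂ)
    (h : ∑ i ∈ Finset.range N, ‖φ i‖ ^ 2 = N) (m : ℤ) : ‖aN N φ m‖ ≤ 1 := by
  have hN0 : (0 : ℝ) < N := by exact_mod_cast hN
  have h1 := sum_norm_le (N := N) φ (B := N) hN0.le (by rw [h]; apply le_of_eq; field_simp)
  rw [aN, norm_mul, norm_div, norm_one, Complex.norm_natCast]
  have h2 : ‖∑ j ∈ Finset.range N, φ j * ee (-m) (sg (1 / N) 0 j)‖ ≤ N := by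
    refine le_trans (norm_sum_le _ _) (le_trans (le_of_eq ?_) h1)
    simp [norm_ee]
  calc _ ≤ 1 / (N : ℝ) * N := by gcongr
    _ = 1 := by field_simp

/-- Truncation of the grid coefficients to the frequency window `2|m| ≤ N`. -/
noncomputable def aT (N : ℕ) (φ : ℕ → ℂ) (m : ℤ) : ℂ := if 2 * |(m : ℝ)| ≤ N then aN N φ m else 0

/-- The window `2|m| ≤ N` contains a full set of residues mod `N`, so the truncated coefficients
carry at least the whole discrete `L²` norm. -/
lemma one_le_tsum_aT {N : ℕ} (hN : 0 < N) (φ : ℕ → ℂ)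
    (h : ∑ i ∈ Finset.range N, ‖φ i‖ ^ 2 = N) (hs : Summable fun m => ‖aT N φ m‖ ^ 2) :
    1 ≤ ∑' m, ‖aT N φ m‖ ^ 2 := by
  have hN0 : (0 : ℝ) < N := by exact_mod_cast hN
  have hp := sum_norm_aN_sq hN φ
  rw [h, one_div_mul_cancel hN0.ne'] at hp
  have e : ∀ m ∈ Finset.range N, ‖aN N φ m‖ ^ 2 = ‖aT N φ ((m : ℤ).bmod N)‖ ^ 2 := by
    intro m _
    have h1 := Int.bmod_add_bdiv (m : ℤ) N
    have h2 := Int.le_bmod (x := (m : ℤ)) hN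
    have h3 := Int.bmod_lt (x := (m : ℤ)) hN
    have h4 : 2 * |(((m : ℤ).bmod N : ℤ) : ℝ)| ≤ N := by
      have : 2 * |(m : ℤ).bmod N| ≤ N := by
        rcases abs_cases ((m : ℤ).bmod N) with h | h <;> omega
      exact_mod_cast this
    rw [aT, if_pos h4, ← norm_aN_add_mul hN φ ((m : ℤ).bmod N) ((m : ℤ).bdiv N), h1]
  rw [← hp, Finset.sum_congr rfl e]
  have hinj : Set.InjOn (fun m : ℕ => (m : ℤ).bmod N) (Finset.range N : Set ℕ) := by
    intro x hx y hy hxy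
    simp only [Finset.coe_range, Set.mem_Iio] at hx hy hxy
    have h1 := Int.bmod_add_bdiv (x : ℤ) N
    have h2 := Int.bmod_add_bdiv (y : ℤ) N
    have hd : (N : ℤ) ∣ (x : ℤ) - y := ⟨(x : ℤ).bdiv N - (y : ℤ).bdiv N, by
      rw [mul_sub]; linarith⟩
    have := Int.eq_zero_of_dvd_of_natAbs_lt_natAbs hd (by omega)
    omega
  rw [← Finset.sum_image (f := fun m => ‖aT N φ m‖ ^ 2) hinj]
  exact hs.sum_le_tsum _ (fun _ _ => by positivity)

/-! ### Passage to the limit -/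

/-- Compactness: normalized vectors with vanishing residual have grid coefficients that converge,
along a subsequence, to a nonzero solution of the limiting Fourier-side equation. -/
lemma exists_limit {A1 K1 A2 K2 : ℝ → ℝ → ℂ} (hA1 : SPK A1) (hK1 : SPK K1) (hA2 : SPK A2)
    (hK2 : SPK K2) {α : ℂ} (hα : α ≠ 0) (hd : ∀ s, A1 s s = α) {ε : ℝ}
    (hs : Real.sin (2 * Real.pi * ε) ≠ 0) (hc : Real.cos (Real.pi * ε) ≠ 0)
    {ω : ℤ × ℤ → ℝ} (hω0 : ∀ x, 0 ≤ ω x) (hωs : Summable ω)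
    (hω : ∀ N : ℕ, 2 ≤ N → ∀ k x, ‖wN A1 K1 A2 K2 N ε k x‖ ≤ ω x)
    (Nn : ℕ → ℕ) (hNn : ∀ n, n + 2 ≤ Nn n) (φ : ℕ → ℕ → ℂ)
    (hφ : ∀ n, ∑ j ∈ Finset.range (Nn n), ‖φ n j‖ ^ 2 = Nn n)
    (hres : ∀ n, ∑ i ∈ Finset.range (Nn n), ‖∑ j ∈ Finset.range (Nn n),
      WmatPG (gker A1 K1) (gker A2 K2) (1 / (Nn n : ℝ)) ε i j * φ n j‖ ^ 2 ≤
        (1 / ((n : ℝ) + 1)) ^ 2 / Nn n) :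
    ∃ a : ℤ → ℂ, (∃ C, ∀ k, ‖a k‖ * (1 + |(k : ℝ)|) ≤ C) ∧ (∃ k, a k ≠ 0) ∧
      ∀ k, HasSum (fun x : ℤ × ℤ => wL A1 K1 A2 K2 k x * a (k - x.1 - x.2))
        (-(α * ((2 * Real.pi * I * k) * (-(2 * Real.pi * I * k)) * ell k) * a k)) := by
  have hN1 : ∀ n, 0 < Nn n := fun n => by have := hNn n; omega
  have hN2 : ∀ n, 2 ≤ Nn n := fun n => by have := hNn n; omega
  have hNt : Tendsto Nn atTop atTop :=
    tendsto_atTop_mono (fun n => by have := hNn n; show n ≤ Nn n; omega) tendsto_id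
  have hu1 : ∀ n m, ‖aN (Nn n) (φ n) m‖ ≤ 1 := fun n m => norm_aN_le (hN1 n) _ (hφ n) m
  -- extraction of a pointwise convergent subsequence
  have hcomp : IsCompact (Set.pi Set.univ fun _ : ℤ => Metric.closedBall (0:ℂ) 1) :=
    isCompact_univ_pi fun _ => isCompact_closedBall _ _
  obtain ⟨a, ha, g, hg, hlim⟩ := hcomp.tendsto_subseq (x := fun n => aN (Nn n) (φ n))
    (fun n m _ => by simpa using hu1 n m)
  rw [tendsto_pi_nhds] at hlim
  simp only [Function.comp_def] at hlim
  let b : ℕ → ℤ → ℂ := fun n k => bN (Nn n) ε (fun i => ∑ j ∈ Finset.range (Nn n),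
    WmatPG (gker A1 K1) (gker A2 K2) (1 / (Nn n : ℝ)) ε i j * φ n j) k
  have hb : ∀ n k, ‖b n k‖ ≤ 1 / ((n : ℝ) + 1) := fun n k =>
    norm_bN_le ε _ (by positivity) (hres n) k
  have hdisc := fun n k => discrete_hasSum hA1 hK1 hA2 hK2 hd (hN1 n) ε (φ n) k
  have hbd : ∀ n k x, ‖wN A1 K1 A2 K2 (Nn n) ε k x * aN (Nn n) (φ n) (k - x.1 - x.2)‖ ≤ ω x := by
    intro n k x
    rw [norm_mul]
    calc _ ≤ ω x * 1 := by
          gcongr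
          · exact hω0 x
          · exact hω _ (hN2 n) k x
          · exact hu1 n _
      _ = ω x := mul_one _
  set Ω := ∑' x, ω x with hΩ
  have hΩ0 : 0 ≤ Ω := tsum_nonneg hω0
  set c := 2 * ‖α‖ * |Real.cos (Real.pi * ε)| with hcdef
  have hc0 : 0 < c := by
    have := norm_pos_iff.2 hα
    have := abs_pos.2 hc
    positivity
  -- uniform decay in the frequency window
  set C := 1 + (1 + Ω) / c with hC
  have hdecay : ∀ n k, ‖aT (Nn n) (φ n) k‖ * (1 + |(k : ℝ)|) ≤ C := by
    intro n k
    rw [aT]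
    split_ifs with hk
    · have h1 := hdisc n k
      have h2 : ‖b n k - α * (dN (Nn n) k * dN (Nn n) (-k) * gL (Nn n) ε k) * aN (Nn n) (φ n) k‖ ≤ Ω := by
        rw [← h1.tsum_eq]
        exact tsum_of_norm_bounded hωs.hasSum (hbd n k)
      have h3 := D_lower hs α (hN2 n) k hk
      have h4 : ‖α * (dN (Nn n) k * dN (Nn n) (-k) * gL (Nn n) ε k) * aN (Nn n) (φ n) k‖ ≤ 1 + Ω := by
        have e := norm_sub_norm_le
          (α * (dN (Nn n) k * dN (Nn n) (-k) * gL (Nn n) ε k) * aN (Nn n) (φ n) k) (b n k)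
        rw [norm_sub_rev] at e
        have e2 : 1 / ((n : ℝ) + 1) ≤ 1 := by
          rw [div_le_one (by positivity)]; linarith [Nat.cast_nonneg (α := ℝ) n]
        linarith [hb n k]
      rw [norm_mul] at h4
      have h5 : c * |(k : ℝ)| * ‖aN (Nn n) (φ n) k‖ ≤ 1 + Ω :=
        (mul_le_mul_of_nonneg_right h3 (norm_nonneg _)).trans h4
      have h6 : |(k : ℝ)| * ‖aN (Nn n) (φ n) k‖ ≤ (1 + Ω) / c := by
        rw [le_div_iff₀ hc0]; linarith
      have h7 := hu1 n k
      rw [hC]; linarith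
    · simp only [norm_zero, zero_mul]; positivity
  have hlimT : ∀ m, Tendsto (fun n => aT (Nn (g n)) (φ (g n)) m) atTop (𝓝 (a m)) := by
    intro m
    refine (hlim m).congr' ?_
    have ht : Tendsto (fun n => (Nn (g n) : ℝ)) atTop atTop :=
      tendsto_natCast_atTop_atTop.comp (hNt.comp hg.tendsto_atTop)
    filter_upwards [ht.eventually_ge_atTop (2 * |(m : ℝ)|)] with n hn
    rw [aT, if_pos hn]
  have hdecay_a : ∀ k, ‖a k‖ * (1 + |(k : ℝ)|) ≤ C := fun k =>
    le_of_tendsto' ((hlimT k).norm.mul_const _) fun n => hdecay (g n) k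
  refine ⟨a, ⟨C, hdecay_a⟩, ?_, fun k => ?_⟩
  · -- the norm survives in the limit
    have hsum : Summable fun m : ℤ => C ^ 2 * ((1 + |(m : ℝ)|) ^ 2)⁻¹ := summable_inv_sq.mul_left _
    have hdom : ∀ n m, ‖aT (Nn n) (φ n) m‖ ^ 2 ≤ C ^ 2 * ((1 + |(m : ℝ)|) ^ 2)⁻¹ := by
      intro n m
      rw [← div_eq_mul_inv, ← div_pow]
      have : ‖aT (Nn n) (φ n) m‖ ≤ C / (1 + |(m : ℝ)|) := by
        rw [le_div_iff₀ (by positivity)]; exact hdecay n m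
      gcongr
    have ht := tendsto_tsum_of_dominated_convergence (𝓕 := atTop)
      (f := fun n m => ‖aT (Nn (g n)) (φ (g n)) m‖ ^ 2) (g := fun m => ‖a m‖ ^ 2) hsum
      (fun m => ((hlimT m).norm).pow 2) (Eventually.of_forall fun n m => by
        rw [Real.norm_of_nonneg (by positivity)]; exact hdom _ _)
    have hone : 1 ≤ ∑' m, ‖a m‖ ^ 2 := ge_of_tendsto' ht fun n =>
      one_le_tsum_aT (hN1 _) _ (hφ _) (Summable.of_nonneg_of_le (fun _ => by positivity) (hdom _) hsum)
    by_contra hcon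
    push Not at hcon
    simp [hcon] at hone
    linarith
  · have ht := tendsto_tsum_of_dominated_convergence (𝓕 := atTop)
      (f := fun n x => wN A1 K1 A2 K2 (Nn (g n)) ε k x * aN (Nn (g n)) (φ (g n)) (k - x.1 - x.2))
      (g := fun x => wL A1 K1 A2 K2 k x * a (k - x.1 - x.2)) hωs
      (fun x => ((wN_tendsto A1 K1 A2 K2 hs k x).comp (hNt.comp hg.tendsto_atTop)).mul (hlim _))
      (Eventually.of_forall fun n x => hbd _ k x)
    have hb0 : Tendsto (fun n => b (g n) k) atTop (𝓝 0) := by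
      have h1 : Tendsto (fun n => b n k) atTop (𝓝 0) :=
        squeeze_zero_norm (fun n => hb n k) tendsto_one_div_add_atTop_nhds_zero_nat
      exact h1.comp hg.tendsto_atTop
    have hDlim : Tendsto (fun n => b (g n) k - α * (dN (Nn (g n)) k * dN (Nn (g n)) (-k) *
        gL (Nn (g n)) ε k) * aN (Nn (g n)) (φ (g n)) k) atTop
        (𝓝 (0 - α * ((2 * Real.pi * I * k) * (-(2 * Real.pi * I * k)) * ell k) * a k)) := by
      have hNg := hNt.comp hg.tendsto_atTop
      have h3 := (dN_tendsto (-k)).comp hNg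
      have e3 : (2 * Real.pi * I * ((-k : ℤ) : ℂ)) = -(2 * Real.pi * I * k) := by
        rw [Int.cast_neg]; ring
      rw [e3] at h3
      exact hb0.sub ((((((dN_tendsto k).comp hNg).mul h3).mul
        ((gL_tendsto hs k).comp hNg)).const_mul α).mul (hlim k))
    have heq : ∑' x, wL A1 K1 A2 K2 k x * a (k - x.1 - x.2) =
        0 - α * ((2 * Real.pi * I * k) * (-(2 * Real.pi * I * k)) * ell k) * a k := by
      refine tendsto_nhds_unique ht (hDlim.congr fun n => ?_)
      exact ((hdisc (g n) k).tsum_eq).symm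
    have hsm : Summable fun x => wL A1 K1 A2 K2 k x * a (k - x.1 - x.2) := by
      refine Summable.of_norm_bounded hωs fun x => ?_
      refine le_of_tendsto' ((((wN_tendsto A1 K1 A2 K2 hs k x).comp
        (hNt.comp hg.tendsto_atTop)).mul (hlim (k - x.1 - x.2))).norm) fun n => hbd _ k x
    have := hsm.hasSum
    rw [heq, zero_sub] at this
    exact this

/-! ### Rapidly decreasing Fourier series -/

/-- Rapidly decreasing sequences of Fourier coefficients. -/
def RD1 (a : ℤ → ℂ) : Prop := ∀ r : ℕ, ∃ C, ∀ k : ℤ, ‖a k‖ * (1 + |(k : ℝ)|) ^ r ≤ C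

/-- The function with Fourier coefficients `a`. -/
noncomputable def fs (a : ℤ → ℂ) (t : ℝ) : ℂ := ∑' m, a m * ee m t

/-- Fourier coefficients of the derivative. -/
noncomputable def dc (a : ℤ → ℂ) (m : ℤ) : ℂ := 2 * Real.pi * I * m * a m

section
variable {a c : ℤ → ℂ}

lemma RD1.summable (ha : RD1 a) (r : ℕ) : Summable fun k : ℤ => ‖a k‖ * (1 + |(k : ℝ)|) ^ r := by
  obtain ⟨C, hC⟩ := ha (r + 2)
  refine Summable.of_nonneg_of_le (fun k => by positivity) (fun k => ?_) (summable_inv_sq.mul_left C)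
  have := hC k
  rw [pow_add, ← mul_assoc] at this
  rw [← div_eq_mul_inv, le_div_iff₀ (by positivity)]
  exact this

lemma RD1.summable_norm (ha : RD1 a) : Summable fun k : ℤ => ‖a k‖ := by
  simpa using ha.summable 0

lemma RD1.hasSum (ha : RD1 a) (t : ℝ) : HasSum (fun m => a m * ee m t) (fs a t) := by
  refine Summable.hasSum (Summable.of_norm ?_)
  simpa only [norm_mul, norm_ee, mul_one] using ha.summable_norm

lemma RD1.add (ha : RD1 a) (hc : RD1 c) : RD1 (fun k => a k + c k) := by
  intro r
  obtain ⟨C, hC⟩ := ha r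
  obtain ⟨D, hD⟩ := hc r
  refine ⟨C + D, fun k => ?_⟩
  calc _ ≤ (‖a k‖ + ‖c k‖) * (1 + |(k : ℝ)|) ^ r := by gcongr; exact norm_add_le _ _
    _ ≤ _ := by rw [add_mul]; linarith [hC k, hD k]

lemma RD1.of_bdd_mul (ha : RD1 a) {l : ℤ → ℂ} {B : ℝ} (hl : ∀ k, ‖l k‖ ≤ B) : RD1 (fun k => l k * a k) := by
  intro r
  obtain ⟨C, hC⟩ := ha r
  have hB : 0 ≤ B := (norm_nonneg _).trans (hl 0)
  refine ⟨B * C, fun k => ?_⟩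
  rw [norm_mul, mul_assoc]
  exact mul_le_mul (hl k) (hC k) (by positivity) hB

lemma RD1.dc (ha : RD1 a) : RD1 (dc a) := by
  intro r
  obtain ⟨C, hC⟩ := ha (r + 1)
  refine ⟨2 * Real.pi * C, fun k => ?_⟩
  have e : ‖_root_.dc a k‖ = 2 * Real.pi * |(k : ℝ)| * ‖a k‖ := by
    simp [_root_.dc, abs_of_pos Real.pi_pos]
  have hpi := Real.pi_pos
  rw [e]
  calc 2 * Real.pi * |(k : ℝ)| * ‖a k‖ * (1 + |(k : ℝ)|) ^ r
      ≤ 2 * Real.pi * (1 + |(k : ℝ)|) * ‖a k‖ * (1 + |(k : ℝ)|) ^ r := by gcongr; linarith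
    _ = 2 * Real.pi * (‖a k‖ * (1 + |(k : ℝ)|) ^ (r + 1)) := by ring
    _ ≤ _ := by gcongr; exact hC k

lemma RD1.fs_add (ha : RD1 a) (hc : RD1 c) (t : ℝ) : fs (fun k => a k + c k) t = fs a t + fs c t := by
  have := (ha.hasSum t).add (hc.hasSum t)
  rw [← this.tsum_eq, fs]
  simp only [add_mul]

lemma RD1.hasDerivAt (ha : RD1 a) (t : ℝ) : HasDerivAt (fs a) (fs (_root_.dc a) t) t := by
  refine hasDerivAt_tsum (u := fun m => ‖_root_.dc a m‖) ha.dc.summable_norm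
    (g := fun m t => a m * ee m t) (g' := fun m t => _root_.dc a m * ee m t) (fun m y => ?_)
    (fun m y => by rw [norm_mul, norm_ee, mul_one]) (y₀ := 0) (ha.hasSum 0).summable t
  refine ((hasDerivAt_ee m y).const_mul (a m)).congr_deriv ?_
  show _ = 2 * Real.pi * I * m * a m * ee m y
  ring

lemma RD1.deriv_fs (ha : RD1 a) : deriv (fs a) = fs (_root_.dc a) :=
  funext fun t => (ha.hasDerivAt t).deriv

lemma RD1.contDiff_nat (n : ℕ) : ∀ {a : ℤ → ℂ}, RD1 a → ContDiff ℝ n (fs a) := by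
  induction n with
  | zero =>
    intro a ha
    refine contDiff_zero.2 (continuous_iff_continuousAt.2 fun t => (ha.hasDerivAt t).continuousAt)
  | succ n ih =>
    intro a ha
    rw [Nat.cast_succ, contDiff_succ_iff_deriv]
    refine ⟨fun t => (ha.hasDerivAt t).differentiableAt, by simp, ?_⟩
    rw [ha.deriv_fs]
    exact ih ha.dc

lemma RD1.contDiff (ha : RD1 a) : ContDiff ℝ (⊤ : ℕ∞) (fs a) :=
  contDiff_infty.2 fun n => RD1.contDiff_nat n ha

lemma RD1.continuous (ha : RD1 a) : Continuous (fs a) := (RD1.contDiff_nat 0 ha).continuous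

lemma fs_periodic (a : ℤ → ℂ) : Function.Periodic (fs a) 1 := fun t => by
  simp only [fs, ee_add_one]

lemma RD1.coeff (ha : RD1 a) (n : ℤ) : ∫ t in (0:ℝ)..1, fs a t * ee (-n) t = a n := by
  have h := intervalIntegral.hasSum_integral_of_dominated_convergence (a := 0) (b := 1) (μ := volume)
    (F := fun (m : ℤ) t => a m * ee m t * ee (-n) t) (f := fun t => fs a t * ee (-n) t)
    (fun m _ => ‖a m‖) ?_ ?_ ?_ ?_ ?_
  · have e : ∀ m : ℤ, ∫ t in (0:ℝ)..1, a m * ee m t * ee (-n) t = if m = n then a n else 0 := by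
      intro m
      have : ∀ t, a m * ee m t * ee (-n) t = a m * ee (m - n) t := by
        intro t; rw [mul_assoc, ← ee_add_left, sub_eq_add_neg]
      simp only [this]
      rw [intervalIntegral.integral_const_mul, integral_ee]
      simp only [sub_eq_zero]
      split_ifs with h
      · rw [h, mul_one]
      · simp
    simp only [e] at h
    exact h.unique (hasSum_ite_eq n (a n))
  · intro m; exact Continuous.aestronglyMeasurable (by fun_prop)
  · intro m; exact Eventually.of_forall fun t _ => by simp [norm_ee]
  · exact Eventually.of_forall fun t _ => ha.summable_norm
  · simp
  · exact Eventually.of_forall fun t _ => (ha.hasSum t).mul_right _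

/-- Fourier coefficients of `s ↦ ∫ A(s,t) f(s-t) ψ(t) dt` in terms of those of `f` and `ψ`. -/
noncomputable def cv (A : ℝ → ℝ → ℂ) (fh : ℤ → ℂ) (c : ℤ → ℂ) (k : ℤ) : ℂ :=
  ∑' x : ℤ × ℤ, fc2 A x.1 x.2 * (fh (k - x.1) * c (k - x.1 - x.2))

lemma weight_le (k p q : ℤ) (r : ℕ) : (1 + |(k : ℝ)|) ^ r ≤
    (1 + |((k - p - q : ℤ) : ℝ)|) ^ r * ((1 + |(p : ℝ)|) ^ r * (1 + |(q : ℝ)|) ^ r) := by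
  rw [← mul_pow, ← mul_pow]
  gcongr
  have h : (k : ℝ) = ((k - p - q : ℤ) : ℝ) + p + q := by push_cast; ring
  have h1 : |(k : ℝ)| ≤ |((k - p - q : ℤ) : ℝ)| + |(p : ℝ)| + |(q : ℝ)| := by
    conv_lhs => rw [h]
    exact abs_add_three _ _ _
  have ha := abs_nonneg ((k - p - q : ℤ) : ℝ)
  have hb := abs_nonneg (p : ℝ)
  have hc := abs_nonneg (q : ℝ)
  have := mul_nonneg ha hb
  have := mul_nonneg ha hc
  have := mul_nonneg hb hc
  have := mul_nonneg ha (mul_nonneg hb hc)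
  nlinarith

lemma cv_summable {A : ℝ → ℝ → ℂ} (hA : SPK A) {fh : ℤ → ℂ} {B : ℝ} (hB : ∀ n, ‖fh n‖ ≤ B)
    (hc : RD1 c) (k : ℤ) :
    Summable fun x : ℤ × ℤ => fc2 A x.1 x.2 * (fh (k - x.1) * c (k - x.1 - x.2)) := by
  have hB0 : 0 ≤ B := (norm_nonneg _).trans (hB 0)
  obtain ⟨C, hC⟩ := hc 0
  simp only [pow_zero, mul_one] at hC
  refine Summable.of_norm_bounded ((fc2_summable hA).mul_right (B * C)) fun x => ?_
  rw [norm_mul, norm_mul]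
  gcongr
  · exact hB _
  · exact hC _

/-- A weighted convolution bound, used both for smoothing operators and for the bootstrap. -/
lemma weighted_tsum_le {w : ℤ × ℤ → ℂ} {ω : ℤ × ℤ → ℝ} (k : ℤ) (hw : ∀ x, ‖w x‖ ≤ ω x) (r : ℕ)
    (hs : Summable fun x : ℤ × ℤ => ω x * ((1 + |(x.1 : ℝ)|) ^ r * (1 + |(x.2 : ℝ)|) ^ r))
    {C : ℝ} (hC : ∀ k : ℤ, ‖c k‖ * (1 + |(k : ℝ)|) ^ r ≤ C) :
    ‖∑' x : ℤ × ℤ, w x * c (k - x.1 - x.2)‖ * (1 + |(k : ℝ)|) ^ r ≤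
      (∑' x : ℤ × ℤ, ω x * ((1 + |(x.1 : ℝ)|) ^ r * (1 + |(x.2 : ℝ)|) ^ r)) * C := by
  have h1 : ‖(∑' x : ℤ × ℤ, w x * c (k - x.1 - x.2)) * (((1 + |(k : ℝ)|) ^ r : ℝ) : ℂ)‖ ≤
      (∑' x : ℤ × ℤ, ω x * ((1 + |(x.1 : ℝ)|) ^ r * (1 + |(x.2 : ℝ)|) ^ r)) * C := by
    rw [← tsum_mul_right, ← tsum_mul_right]
    refine tsum_of_norm_bounded (hs.mul_right C).hasSum fun x => ?_
    rw [norm_mul, norm_mul, Complex.norm_real, Real.norm_of_nonneg (by positivity)]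
    have hωx : 0 ≤ ω x := (norm_nonneg _).trans (hw x)
    calc ‖w x‖ * ‖c (k - x.1 - x.2)‖ * (1 + |(k : ℝ)|) ^ r
        ≤ ω x * ‖c (k - x.1 - x.2)‖ * ((1 + |((k - x.1 - x.2 : ℤ) : ℝ)|) ^ r *
            ((1 + |(x.1 : ℝ)|) ^ r * (1 + |(x.2 : ℝ)|) ^ r)) := by
          gcongr
          · exact hw x
          · exact weight_le k x.1 x.2 r
      _ = ω x * ((1 + |(x.1 : ℝ)|) ^ r * (1 + |(x.2 : ℝ)|) ^ r) *
          (‖c (k - x.1 - x.2)‖ * (1 + |((k - x.1 - x.2 : ℤ) : ℝ)|) ^ r) := by ring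
      _ ≤ _ := by gcongr; exact hC _
  rwa [norm_mul, Complex.norm_real, Real.norm_of_nonneg (by positivity)] at h1

lemma cv_RD1 {A : ℝ → ℝ → ℂ} (hA : SPK A) {fh : ℤ → ℂ} {B : ℝ} (hB : ∀ n, ‖fh n‖ ≤ B)
    (hc : RD1 c) : RD1 (cv A fh c) := by
  intro r
  obtain ⟨C, hC⟩ := hc r
  refine ⟨(∑' x : ℤ × ℤ, (B * ‖fc2 A x.1 x.2‖) *
    ((1 + |(x.1 : ℝ)|) ^ r * (1 + |(x.2 : ℝ)|) ^ r)) * C, fun k => ?_⟩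
  have := weighted_tsum_le (c := c) k (w := fun x => fc2 A x.1 x.2 * fh (k - x.1))
    (ω := fun x => B * ‖fc2 A x.1 x.2‖) (fun x => by
      rw [norm_mul, mul_comm]; gcongr; exact hB _) r (by
      have := ((fc2_RD hA).summable r).mul_left B
      simpa only [abs_norm, mul_assoc] using this) hC
  simpa only [cv, mul_assoc] using this

/-- The operator with kernel `A(s,t) f(s-t)` acts on Fourier series through `cv`. -/
lemma RD1.conv_fs {A : ℝ → ℝ → ℂ} (hA : SPK A) {f : ℝ → ℂ} (hf : PInt f) {fh : ℤ → ℂ}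
    (hfh : ∀ n, ∫ x in (0:ℝ)..1, f x * ee (-n) x = fh n)
    (hc : RD1 c) (s : ℝ) :
    ∫ t in (0:ℝ)..1, A s t * f (s - t) * fs c t = fs (cv A fh c) s := by
  have hR := fc2_summable hA
  have hprod : Summable fun y : (ℤ × ℤ) × ℤ => ‖fc2 A y.1.1 y.1.2‖ * ‖c y.2‖ :=
    hR.mul_of_nonneg hc.summable_norm (fun _ => norm_nonneg _) (fun _ => norm_nonneg _)
  have hmode : ∀ n : ℤ, ∫ t in (0:ℝ)..1, ee n t * f (s - t) = ee n s * fh n := by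
    intro n
    have h1 := intervalIntegral.integral_comp_sub_left (a := 0) (b := 1)
      (fun u => ee n s * (f u * ee (-n) u)) s
    have e : ∀ t, ee n s * (f (s - t) * ee (-n) (s - t)) = ee n t * f (s - t) := by
      intro t
      have e1 : ee n s = ee n t * ee n (s - t) := by rw [← ee_add_right]; congr 1; ring
      have e2 := ee_mul_neg n (s - t)
      rw [e1]; linear_combination (ee n t * f (s - t)) * e2
    simp only [e] at h1
    rw [h1, intervalIntegral.integral_const_mul, ← hfh]
    congr 1
    have hp : Function.Periodic (fun u => f u * ee (-n) u) 1 := fun u => by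
      simp only [hf.per u, ee_add_one]
    have := hp.intervalIntegral_add_eq (s - 1) 0
    rw [zero_add, sub_add_cancel] at this
    rw [sub_zero, this]
  have h3 := intervalIntegral.hasSum_integral_of_dominated_convergence (a := 0) (b := 1) (μ := volume)
    (F := fun (y : (ℤ × ℤ) × ℤ) t => fc2 A y.1.1 y.1.2 * (ee y.1.1 s * ee y.1.2 t) * (c y.2 * ee y.2 t) *
      f (s - t))
    (f := fun t => A s t * f (s - t) * fs c t)
    (fun y t => ‖fc2 A y.1.1 y.1.2‖ * ‖c y.2‖ * ‖f (s - t)‖) ?_ ?_ ?_ ?_ ?_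
  · have e : ∀ y : (ℤ × ℤ) × ℤ, ∫ t in (0:ℝ)..1, fc2 A y.1.1 y.1.2 * (ee y.1.1 s * ee y.1.2 t) *
        (c y.2 * ee y.2 t) * f (s - t) =
        fc2 A y.1.1 y.1.2 * (fh (y.1.2 + y.2) * c y.2) * ee (y.1.1 + y.1.2 + y.2) s := by
      intro y
      have e1 : ∀ t, fc2 A y.1.1 y.1.2 * (ee y.1.1 s * ee y.1.2 t) * (c y.2 * ee y.2 t) * f (s - t) =
          fc2 A y.1.1 y.1.2 * (c y.2 * ee y.1.1 s) * (ee (y.1.2 + y.2) t * f (s - t)) := by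
        intro t; rw [ee_add_left]; ring
      simp only [e1]
      rw [intervalIntegral.integral_const_mul, hmode, add_assoc, ee_add_left y.1.1]; ring
    simp only [e] at h3
    let eqv : ℤ × (ℤ × ℤ) ≃ (ℤ × ℤ) × ℤ :=
      { toFun := fun z => (z.2, z.1 - z.2.1 - z.2.2)
        invFun := fun y => (y.1.1 + y.1.2 + y.2, y.1)
        left_inv := fun z => by ext <;> simp
        right_inv := fun y => by ext <;> simp <;> ring }
    have h4 := (eqv.hasSum_iff).2 h3
    have h5 : HasSum (fun z : ℤ × (ℤ × ℤ) => fc2 A z.2.1 z.2.2 * (fh (z.1 - z.2.1) *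
        c (z.1 - z.2.1 - z.2.2)) * ee z.1 s) (∫ t in (0:ℝ)..1, A s t * f (s - t) * fs c t) := by
      refine hasSum_of_eq h4 (fun z => ?_) rfl
      simp only [eqv, Function.comp, Equiv.coe_fn_mk]
      congr 2
      · congr 2; ring
      · ring
    have h6 := h5.prod_fiberwise (fun k => (h5.summable.prod_factor k).hasSum)
    rw [← h6.tsum_eq, fs]
    congr 1; ext k
    rw [cv, ← tsum_mul_right]
  · intro y
    have hi := (intervalIntegrable_iff.1 (hf.int_comp s 0 1)).aestronglyMeasurable
    exact (Continuous.aestronglyMeasurable (by fun_prop)).mul hi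
  · intro y
    exact Eventually.of_forall fun t _ => by simp [norm_ee]
  · exact Eventually.of_forall fun t _ => hprod.mul_right _
  · simp only [tsum_mul_right]
    exact ((hf.int_comp s 0 1).norm).const_mul _
  · refine Eventually.of_forall fun t _ => ?_
    have h1 := hasSum_fc2 hA s t
    have h2 := hc.hasSum t
    have h12 := h1.mul h2 (by
      refine Summable.of_norm ?_
      simpa only [norm_mul, norm_ee, mul_one] using hprod)
    exact hasSum_of_eq (h12.mul_right (f (s - t))) (fun y => rfl) (by ring)

/-- Multiplication by the constant diagonal of `A`, expressed through double Fourier coefficients. -/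
lemma RD1.diag {A : ℝ → ℝ → ℂ} (hA : SPK A) {α : ℂ} (hd : ∀ s, A s s = α) (hc : RD1 c) (k : ℤ) :
    HasSum (fun x : ℤ × ℤ => fc2 A x.1 x.2 * c (k - x.1 - x.2)) (α * c k) := by
  obtain ⟨C, hC⟩ := hc 0
  have h := intervalIntegral.hasSum_integral_of_dominated_convergence (a := 0) (b := 1) (μ := volume)
    (F := fun (x : ℤ × ℤ) t => fc2 A x.1 x.2 * (fs c t * ee (-(k - x.1 - x.2)) t))
    (f := fun t => α * (fs c t * ee (-k) t))
    (fun x t => ‖fc2 A x.1 x.2‖ * ‖fs c t‖) ?_ ?_ ?_ ?_ ?_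
  · simp only [intervalIntegral.integral_const_mul, hc.coeff] at h
    exact h
  · intro x
    have := hc.continuous
    exact Continuous.aestronglyMeasurable (by fun_prop)
  · intro x; exact Eventually.of_forall fun t _ => by simp [norm_ee]
  · exact Eventually.of_forall fun t _ => (fc2_summable hA).mul_right _
  · simp only [tsum_mul_right]
    have := hc.continuous
    exact Continuous.intervalIntegrable (by fun_prop) _ _
  · refine Eventually.of_forall fun t _ => ?_
    have h1 := (hasSum_fc2 hA t t).mul_right (fs c t * ee (-k) t)
    rw [hd] at h1
    refine hasSum_of_eq h1 (fun x => ?_) rfl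
    have : ee (-(k - x.1 - x.2)) t = ee (-k) t * (ee x.1 t * ee x.2 t) := by
      rw [← ee_add_left, ← ee_add_left]; congr 1; ring
    rw [this]; ring

end

/-! ### Regularity of the limit and conclusion -/

lemma norm_wL_le {A1 K1 A2 K2 : ℝ → ℝ → ℂ} {ε : ℝ} (hs : Real.sin (2 * Real.pi * ε) ≠ 0)
    {ω : ℤ × ℤ → ℝ} (hω : ∀ N : ℕ, 2 ≤ N → ∀ k x, ‖wN A1 K1 A2 K2 N ε k x‖ ≤ ω x) (k : ℤ)
    (x : ℤ × ℤ) : ‖wL A1 K1 A2 K2 k x‖ ≤ ω x :=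
  le_of_tendsto (wN_tendsto A1 K1 A2 K2 hs k x).norm
    ((eventually_ge_atTop 2).mono fun N hN => hω N hN k x)

/-- Elliptic regularity: the principal symbol has order one while the remainder has order zero, so
a bounded solution of the limiting equation decays rapidly. -/
lemma bootstrap {A1 K1 A2 K2 : ℝ → ℝ → ℂ} {α : ℂ} (hα : α ≠ 0) {ω : ℤ × ℤ → ℝ}
    (hωs : ∀ r : ℕ, Summable fun x : ℤ × ℤ => ω x * ((1 + |(x.1 : ℝ)|) ^ r * (1 + |(x.2 : ℝ)|) ^ r))
    (hω : ∀ k x, ‖wL A1 K1 A2 K2 k x‖ ≤ ω x) {a : ℤ → ℂ} {C : ℝ}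
    (hC : ∀ k, ‖a k‖ * (1 + |(k : ℝ)|) ≤ C)
    (ha : ∀ k, HasSum (fun x : ℤ × ℤ => wL A1 K1 A2 K2 k x * a (k - x.1 - x.2))
        (-(α * ((2 * Real.pi * I * k) * (-(2 * Real.pi * I * k)) * ell k) * a k))) : RD1 a := by
  intro r
  induction r with
  | zero =>
    refine ⟨C, fun k => ?_⟩
    rw [pow_zero, mul_one]
    refine le_trans ?_ (hC k)
    exact le_mul_of_one_le_right (norm_nonneg _) (by linarith [abs_nonneg (k : ℝ)])
  | succ r ih =>
    obtain ⟨B, hB⟩ := ih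
    set S := (∑' x : ℤ × ℤ, ω x * ((1 + |(x.1 : ℝ)|) ^ r * (1 + |(x.2 : ℝ)|) ^ r)) * B with hS
    have hα' := norm_pos_iff.2 hα
    have hpi := Real.pi_pos
    have hc : 0 < ‖α‖ * (4 * Real.pi ^ 2) := by positivity
    refine ⟨B + S / (‖α‖ * (4 * Real.pi ^ 2)), fun k => ?_⟩
    have h1 := weighted_tsum_le k (hω k) r (hωs r) hB
    rw [(ha k).tsum_eq, ← hS] at h1
    have e : ‖-(α * ((2 * Real.pi * I * k) * (-(2 * Real.pi * I * k)) * ell k) * a k)‖ =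
        ‖α‖ * (4 * Real.pi ^ 2) * (|(k : ℝ)| * ‖a k‖) := by
      simp only [ell, norm_neg, norm_mul, Complex.norm_I, Complex.norm_real, Complex.norm_intCast,
        Complex.norm_ofNat, norm_inv, Real.norm_eq_abs, abs_abs, abs_inv, abs_of_pos hpi]
      rcases eq_or_ne (k : ℝ) 0 with h | h
      · simp [h]
      · have := abs_pos.2 h
        field_simp
        ring
    rw [e] at h1
    have h2 : |(k : ℝ)| * ‖a k‖ * (1 + |(k : ℝ)|) ^ r ≤ S / (‖α‖ * (4 * Real.pi ^ 2)) := by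
      rw [le_div_iff₀ hc]; linarith
    calc ‖a k‖ * (1 + |(k : ℝ)|) ^ (r + 1) = ‖a k‖ * (1 + |(k : ℝ)|) ^ r +
          |(k : ℝ)| * ‖a k‖ * (1 + |(k : ℝ)|) ^ r := by ring
      _ ≤ _ := add_le_add (hB k) h2

lemma norm_ell_le (n : ℤ) : ‖ell n‖ ≤ 1 := by
  rw [ell, norm_neg, Complex.norm_real, norm_inv, Real.norm_eq_abs, abs_abs]
  rcases eq_or_ne n 0 with h | h
  · simp [h]
  · have : (1:ℝ) ≤ |(n : ℝ)| := by exact_mod_cast Int.one_le_abs h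
    exact inv_le_one_of_one_le₀ this

lemma norm_del_le (n : ℤ) : ‖del n‖ ≤ 1 := by
  rw [del]; split_ifs <;> simp

lemma integral_one_ee (n : ℤ) : ∫ x in (0:ℝ)..1, (fun _ : ℝ => (1:ℂ)) x * ee (-n) x = del n := by
  simp only [one_mul, integral_ee, neg_eq_zero, del]

/-- Fourier coefficients of the weakly singular operator applied to `fs c`. -/
lemma Vop_gker_fs {A K : ℝ → ℝ → ℂ} (hA : SPK A) (hK : SPK K) {c : ℤ → ℂ} (hc : RD1 c) :
    Vop (gker A K) (fs c) = fs (fun k => cv A ell c k + cv K del c k) := by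
  funext s
  have hcc := hc.continuous
  have h1 := RD1.conv_fs hA pInt_Lf integral_Lf_ee hc s
  have h2 := RD1.conv_fs hK pInt_one integral_one_ee hc s
  rw [(cv_RD1 hA norm_ell_le hc).fs_add (cv_RD1 hK norm_del_le hc), ← h1, ← h2, Vop,
    ← intervalIntegral.integral_add]
  · refine intervalIntegral.integral_congr fun t _ => ?_
    simp only [gker]; ring
  · have hAc := hA.cont_right s
    have := (pInt_Lf.int_comp s 0 1).continuousOn_mul (g := fun t => A s t * fs c t)
      (Continuous.continuousOn (by fun_prop))
    refine this.congr fun t _ => ?_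
    ring
  · have hKc := hK.cont_right s
    exact Continuous.intervalIntegrable (by fun_prop) _ _

/-- A rapidly decreasing solution of the limiting equation is the Fourier series of a smooth
function in the kernel of the hypersingular operator. -/
lemma Wop_gker_eq_zero {A1 K1 A2 K2 : ℝ → ℝ → ℂ} (hA1 : SPK A1) (hK1 : SPK K1) (hA2 : SPK A2)
    (hK2 : SPK K2) {α : ℂ} (hd : ∀ s, A1 s s = α) {a : ℤ → ℂ} (hR : RD1 a)
    (ha : ∀ k, HasSum (fun x : ℤ × ℤ => wL A1 K1 A2 K2 k x * a (k - x.1 - x.2))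
        (-(α * ((2 * Real.pi * I * k) * (-(2 * Real.pi * I * k)) * ell k) * a k))) (s : ℝ) :
    Wop (gker A1 K1) (gker A2 K2) (fs a) s = 0 := by
  have hF := (cv_RD1 hA1 norm_ell_le hR.dc).add (cv_RD1 hK1 norm_del_le hR.dc)
  rw [Wop, hR.deriv_fs, Vop_gker_fs hA1 hK1 hR.dc, Vop_gker_fs hA2 hK2 hR, hF.deriv_fs,
    neg_add_eq_zero]
  congr 1
  funext k
  have s1 := (cv_summable hA1 norm_ell_le hR.dc k).hasSum
  have s2 := (cv_summable hK1 norm_del_le hR.dc k).hasSum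
  have s3 := (cv_summable hA2 norm_ell_le hR k).hasSum
  have s4 := (cv_summable hK2 norm_del_le hR k).hasSum
  have s5 := RD1.diag hA1 hd (hR.dc.of_bdd_mul norm_ell_le) k
  have h := ((((s1.sub s5).add s2).mul_left (-(2 * Real.pi * I * k))).add (s3.add s4))
  have h' : HasSum (fun x : ℤ × ℤ => wL A1 K1 A2 K2 k x * a (k - x.1 - x.2))
      (-(2 * Real.pi * I * k) * (cv A1 ell (dc a) k - α * (ell k * dc a k) + cv K1 del (dc a) k) +
        (cv A2 ell a k + cv K2 del a k)) := by
    refine hasSum_of_eq h (fun x => ?_) rfl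
    simp only [wL, dc]
    ring
  have e := h'.unique (ha k)
  simp only [dc] at e ⊢
  linear_combination -e

/-! ### Reduction to the kernel with mean-zero logarithm -/

lemma SPK.const_mul {A : ℝ → ℝ → ℂ} (hA : SPK A) (c : ℂ) : SPK (fun s t => c * A s t) :=
  ⟨contDiff_const.mul hA.1, fun s t => by simp only [hA.2.1], fun s t => by simp only [hA.2.2]⟩

lemma SPK.sub {A K : ℝ → ℝ → ℂ} (hA : SPK A) (hK : SPK K) : SPK (fun s t => A s t - K s t) :=
  ⟨hA.1.sub hK.1, fun s t => by simp only [hA.2.1, hK.2.1], fun s t => by simp only [hA.2.2, hK.2.2]⟩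

lemma logKer_eq (A K : ℝ → ℝ → ℂ) : logKer A K = gker (fun s t => I / (2 * Real.pi) * A s t)
    (fun s t => K s t - (I / (2 * Real.pi) * Real.log 4) * A s t) := by
  funext s t
  simp only [logKer, gker, Lf]
  push_cast
  ring

/-- Stability for the kernels `gker`: otherwise a normalized sequence with vanishing residual would
produce a nonzero smooth function in the kernel of `W`. -/
lemma gker_stable {A1 K1 A2 K2 : ℝ → ℝ → ℂ} (hA1 : SPK A1) (hK1 : SPK K1) (hA2 : SPK A2)
    (hK2 : SPK K2) {α : ℂ} (hα : α ≠ 0) (hd : ∀ s : ℝ, A1 s s = α)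
    (hinj : ∀ φ : ℝ → ℂ, ContDiff ℝ (⊤ : ℕ∞) φ → Function.Periodic φ 1 →
      (∀ s, Wop (gker A1 K1) (gker A2 K2) φ s = 0) → ∀ s, φ s = 0)
    {ε : ℝ} (hε : ∀ k : ℤ, ε ≠ (k : ℝ) / 2) :
    ∃ h0 > (0:ℝ), ∃ β > (0:ℝ), ∀ N : ℕ, 0 < N → 1 / (N : ℝ) ≤ h0 →
      ∀ φv : Fin N → ℂ,
        β * (1 / (N : ℝ)) * Real.sqrt (∑ j : Fin N, ‖φv j‖ ^ 2) ≤
          Real.sqrt (∑ i : Fin N,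
            ‖∑ j : Fin N,
              WmatPG (gker A1 K1) (gker A2 K2) (1 / (N : ℝ)) ε ((i : ℕ) : ℤ) ((j : ℕ) : ℤ)
                * φv j‖ ^ 2) := by
  have hpi := Real.pi_pos
  have hs : Real.sin (2 * Real.pi * ε) ≠ 0 := by
    intro h
    obtain ⟨n, hn⟩ := Real.sin_eq_zero_iff.1 h
    apply hε n
    have : Real.pi * (n - 2 * ε) = 0 := by linarith
    rcases mul_eq_zero.1 this with h | h
    · exact absurd h hpi.ne'
    · linarith
  have hc : Real.cos (Real.pi * ε) ≠ 0 := by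
    intro h
    apply hs
    rw [mul_assoc, Real.sin_two_mul, h, mul_zero]
  by_contra hcon
  push Not at hcon
  have hcon' : ∀ n : ℕ, ∃ N : ℕ, n + 2 ≤ N ∧ ∃ φ : ℕ → ℂ,
      ∑ j ∈ Finset.range N, ‖φ j‖ ^ 2 = N ∧
      ∑ i ∈ Finset.range N, ‖∑ j ∈ Finset.range N,
        WmatPG (gker A1 K1) (gker A2 K2) (1 / (N : ℝ)) ε i j * φ j‖ ^ 2 ≤
        (1 / ((n : ℝ) + 1)) ^ 2 / N := by
    intro n
    obtain ⟨N, hN, hNn, φv, hφ⟩ := hcon (1 / ((n : ℝ) + 2)) (by positivity) (1 / ((n : ℝ) + 1))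
      (by positivity)
    have hN0 : (0:ℝ) < N := by exact_mod_cast hN
    set R := ∑ i : Fin N, ‖∑ j : Fin N,
      WmatPG (gker A1 K1) (gker A2 K2) (1 / (N : ℝ)) ε ((i : ℕ) : ℤ) ((j : ℕ) : ℤ) * φv j‖ ^ 2 with hR
    set S := ∑ j : Fin N, ‖φv j‖ ^ 2 with hS
    have hR0 : 0 ≤ R := Finset.sum_nonneg fun _ _ => by positivity
    have hS0 : 0 ≤ S := Finset.sum_nonneg fun _ _ => by positivity
    have hSpos : 0 < S := by
      rcases hS0.eq_or_lt with h | h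
      · rw [← h, Real.sqrt_zero, mul_zero] at hφ
        exact absurd hφ (not_lt.2 (Real.sqrt_nonneg _))
      · exact h
    have hRS : R ≤ (1 / ((n : ℝ) + 1) * (1 / N)) ^ 2 * S := by
      have := pow_le_pow_left₀ (Real.sqrt_nonneg _) hφ.le 2
      rwa [Real.sq_sqrt hR0, mul_pow, Real.sq_sqrt hS0] at this
    -- the scaling factor normalizing the vector to `∑ ‖φ j‖ ^ 2 = N`
    set c : ℝ := Real.sqrt (N / S) with hcdef
    have hc2 : c ^ 2 = N / S := Real.sq_sqrt (by positivity)
    have hc0 : 0 ≤ c := Real.sqrt_nonneg _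
    refine ⟨N, ?_, fun j => if h : j < N then (c : ℂ) * φv ⟨j, h⟩ else 0, ?_, ?_⟩
    · rw [one_div_le_one_div hN0 (by positivity)] at hNn
      exact_mod_cast hNn
    · rw [Finset.sum_range]
      simp only [Fin.is_lt, dite_true, Fin.eta, norm_mul, mul_pow, ← Finset.mul_sum,
        Complex.norm_real, Real.norm_of_nonneg hc0, hc2, ← hS]
      field_simp
    · have e : ∀ i : ℕ, ∑ j ∈ Finset.range N, WmatPG (gker A1 K1) (gker A2 K2) (1 / (N : ℝ)) ε i j *
          (if h : j < N then (c : ℂ) * φv ⟨j, h⟩ else 0) = (c : ℂ) * ∑ j : Fin N,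
          WmatPG (gker A1 K1) (gker A2 K2) (1 / (N : ℝ)) ε i ((j : ℕ) : ℤ) * φv j := by
        intro i
        rw [Finset.sum_range, Finset.mul_sum]
        refine Finset.sum_congr rfl fun j _ => ?_
        simp only [Fin.is_lt, dite_true, Fin.eta]
        ring
      simp only [e]
      rw [Finset.sum_range]
      simp only [norm_mul, mul_pow, ← Finset.mul_sum, Complex.norm_real, Real.norm_of_nonneg hc0,
        hc2, ← hR]
      calc (N : ℝ) / S * R ≤ N / S * ((1 / ((n : ℝ) + 1) * (1 / N)) ^ 2 * S) := by gcongr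
        _ = _ := by field_simp
  choose Nn hNn φ hφ hres using hcon'
  obtain ⟨ω, hω0, hωs, hω⟩ := exists_majorant hA1 hK1 hA2 hK2 hs
  obtain ⟨a, ⟨C, hC⟩, ⟨k, hk⟩, ha⟩ := exists_limit hA1 hK1 hA2 hK2 hα hd hs hc hω0
    (by simpa using hωs 0) hω Nn hNn φ hφ hres
  have hR := bootstrap hα hωs (norm_wL_le hs hω) hC ha
  have hz := hinj (fs a) hR.contDiff (fs_periodic a)
    (Wop_gker_eq_zero hA1 hK1 hA2 hK2 hd hR ha)
  apply hk
  rw [← hR.coeff k]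
  simp [hz]

end Proof

/-- discrete stability of the non-conforming Petrov–Galerkin matrix `W^{ε,∘}`. -/
theorem stmt_1
    (A1 K1 A2 K2 : ℝ → ℝ → ℂ) (hA1 : SPK A1) (hK1 : SPK K1) (hA2 : SPK A2) (hK2 : SPK K2)
    (α : ℂ) (hα : α ≠ 0) (hdiag : ∀ s : ℝ, A1 s s = α)
    (hinj : ∀ φ : ℝ → ℂ, ContDiff ℝ (⊤ : ℕ∞) φ → Function.Periodic φ 1 →
      (∀ s, Wop (logKer A1 K1) (logKer A2 K2) φ s = 0) → ∀ s, φ s = 0)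
    (ε : ℝ) (hε : ∀ k : ℤ, ε ≠ (k : ℝ) / 2) :
    ∃ h0 > (0:ℝ), ∃ β > (0:ℝ), ∀ N : ℕ, 0 < N → 1 / (N : ℝ) ≤ h0 →
      ∀ φv : Fin N → ℂ,
        β * (1 / (N : ℝ)) * Real.sqrt (∑ j : Fin N, ‖φv j‖ ^ 2) ≤
          Real.sqrt (∑ i : Fin N,
            ‖∑ j : Fin N,
              WmatPG (logKer A1 K1) (logKer A2 K2) (1 / (N : ℝ)) ε ((i : ℕ) : ℤ) ((j : ℕ) : ℤ)
                * φv j‖ ^ 2) := by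
  rw [logKer_eq A1 K1, logKer_eq A2 K2] at hinj ⊢
  have hpi : (Real.pi : ℂ) ≠ 0 := by exact_mod_cast Real.pi_ne_zero
  exact gker_stable (hA1.const_mul _) (hK1.sub (hA1.const_mul _)) (hA2.const_mul _)
    (hK2.sub (hA2.const_mul _)) (α := Complex.I / (2 * Real.pi) * α)
    (mul_ne_zero (div_ne_zero Complex.I_ne_zero (mul_ne_zero two_ne_zero hpi)) hα)
    (fun s => by rw [hdiag]) hinj hε
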